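/- arXiv:1307.8111 — 2 statements merged into one kernel-verified Lean document; each statement's English description precedes it below -/
import Mathlib

section
/- There exists an uncountable family (C_α) of Cantor sets in ℝ³ such that: (1) for all α, β the fundamental groups of ℝ³ \ C_α and ℝ³ \ C_β are isomorphic; (2) no ℝ³ \ C_α is simply connected; and (3) for α ≠ β the spaces ℝ³ \ C_α and ℝ³ \ C_β are not homeomorphic. -/
open Metric Set

noncomputable section

/-- ℝ³ as Euclidean space. -/
abbrev R3 : Type := EuclideanSpace ℝ (Fin 3)

/-- The point (a, b, c) of ℝ³. -/
def pt (a b c : ℝ) : R3 := (WithLp.equiv 2 (Fin 3 → ℝ)).symm ![a, b, c]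

/-- A Cantor set in ℝ³: a nonempty compact perfect totally disconnected subset. -/
def IsCantorSubset (C : Set R3) : Prop :=
  C.Nonempty ∧ IsCompact C ∧ Perfect C ∧ IsTotallyDisconnected C

/-!
Antoine's necklace `N` is the intersection of nested chains of solid rings, each ring containing a
chain of eight smaller ones. A meridian of a ring is the commutator of meridians of two linked rings
inside it, so, starting from a permutation of five letters that is a commutator of two of its own
conjugates, one can consistently label all rings of all generations. The labels define a flat
`Perm (Fin 5)`-bundle on the complement of `N` whose holonomy around every ring is nontrivial:
`N` is wild at each of its points.

For a closed `F ⊆ N`, add to `N` small tame Cantor sets, the dust, outside `N` but accumulating on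
it exactly at the points of `F`. Loops and discs can be pushed off the dust by arbitrarily small
translations, so the dust changes neither the fundamental group of the complement nor the set of
wild points. On the other hand, the resulting Cantor set is the space of ends of its complement and
remembers `F`: a homeomorphism of complements extends to ℝ³, where it preserves `N` (the wild
points), hence the dust and its set of limit points in `N`. It remains to choose, for each
countable ordinal, a closed `F ⊆ N` of that Cantor–Bendixson rank.
-/

namespace AntoineNecklace

open Filter Topology

/-! ### Holonomy of locally constant cocycles -/

section Holonomy

variable {B G ι : Type*} [TopologicalSpace B] [Group G]

/-- The `G`-valued functions `f` and `g` differ near `x` by a left translation of `G`. -/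
def LeftEquivAt (x : B) (f g : B → G) : Prop := ∃ c, ∀ᶠ y in 𝓝 x, f y = c * g y

theorem LeftEquivAt.refl (x : B) (f : B → G) : LeftEquivAt x f f := ⟨1, by simp⟩

theorem LeftEquivAt.symm {x : B} {f g : B → G} : LeftEquivAt x f g → LeftEquivAt x g f := by
  rintro ⟨c, hc⟩
  exact ⟨c⁻¹, hc.mono fun y hy => by simp [hy]⟩

theorem LeftEquivAt.trans {x : B} {f g h : B → G} :
    LeftEquivAt x f g → LeftEquivAt x g h → LeftEquivAt x f h := by
  rintro ⟨c, hc⟩ ⟨d, hd⟩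
  refine ⟨c * d, ?_⟩
  filter_upwards [hc, hd] with y h₁ h₂
  rw [h₁, h₂, mul_assoc]

theorem LeftEquivAt.mul_right {x : B} {f g : B → G} (h : B → G) :
    LeftEquivAt x f g → LeftEquivAt x (f * h) (g * h) := by
  rintro ⟨c, hc⟩
  exact ⟨c, hc.mono fun y hy => by simp [hy, mul_assoc]⟩

theorem LeftEquivAt.comp_tendsto {B' : Type*} [TopologicalSpace B'] {x : B'} {φ : B' → B}
    (hφ : ContinuousAt φ x) {f g : B → G} :
    LeftEquivAt (φ x) f g → LeftEquivAt x (f ∘ φ) (g ∘ φ) := by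
  rintro ⟨c, hc⟩
  exact ⟨c, hφ.eventually hc⟩

theorem LeftEquivAt.eventually_div_eq {x : B} {f g : B → G} :
    LeftEquivAt x f g → ∀ᶠ y in 𝓝 x, f y * (g y)⁻¹ = f x * (g x)⁻¹ := by
  rintro ⟨c, hc⟩
  filter_upwards [hc] with y hy
  rw [hy, hc.self_of_nhds, mul_inv_cancel_right, mul_inv_cancel_right]

variable (B G ι) in
/-- A developing system: `G`-valued functions on the members of an open cover which on overlaps
differ locally by left translations. It presents a flat principal `G`-bundle: `dev i x` is the
coordinate in the `i`-th chart of a (multivalued) horizontal section. -/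
structure DevelopingSystem where
  baseSet : ι → Set B
  isOpen_baseSet : ∀ i, IsOpen (baseSet i)
  exists_mem_baseSet : ∀ x, ∃ i, x ∈ baseSet i
  dev : ι → B → G
  leftEquivAt : ∀ i j x, x ∈ baseSet i → x ∈ baseSet j → LeftEquivAt x (dev i) (dev j)

namespace DevelopingSystem

variable (D : DevelopingSystem B G ι)

/-- The flat bundle presented by `D`, with the discrete topology on the fibre `G`. -/
def bundleCore [TopologicalSpace G] [DiscreteTopology G] : FiberBundleCore ι B G where
  baseSet := D.baseSet
  isOpen_baseSet := D.isOpen_baseSet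
  indexAt x := (D.exists_mem_baseSet x).choose
  mem_baseSet_at x := (D.exists_mem_baseSet x).choose_spec
  coordChange i j x v := D.dev j x * (D.dev i x)⁻¹ * v
  coordChange_self := by intros; simp
  continuousOn_coordChange := by
    rintro i j ⟨x, v⟩ ⟨⟨hi, hj⟩, -⟩
    apply ContinuousAt.continuousWithinAt
    have hconst : ∀ᶠ p : B × G in 𝓝 (x, v), D.dev j x * (D.dev i x)⁻¹ * p.2
        = D.dev j p.1 * (D.dev i p.1)⁻¹ * p.2 := by
      filter_upwards [(continuous_fst.tendsto (x, v)).eventually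
        (D.leftEquivAt j i x hj hi).eventually_div_eq] with p hp
      rw [hp]
    have hmul : Continuous fun g : G => D.dev j x * (D.dev i x)⁻¹ * g :=
      continuous_of_discreteTopology
    exact (hmul.comp continuous_snd).continuousAt.congr hconst
  coordChange_comp := by intros; simp [mul_assoc]

theorem isCoveringMap_proj [TopologicalSpace G] [DiscreteTopology G] :
    IsCoveringMap D.bundleCore.proj :=
  FiberBundle.isCoveringMap (F := G) (E := D.bundleCore.Fiber)

/-- Horizontal transport along a path inside a single chart keeps the coordinate constant. -/
theorem liftPath_apply_one [TopologicalSpace G] [DiscreteTopology G] {p q : B} (γ : Path p q)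
    {i : ι} (hγ : ∀ t, γ t ∈ D.baseSet i) :
    D.isCoveringMap_proj.liftPath γ.toContinuousMap
        ⟨p, D.dev (D.bundleCore.indexAt p) p⟩ γ.source 1 =
      ⟨q, D.dev (D.bundleCore.indexAt q) q * ((D.dev i q)⁻¹ * D.dev i p)⟩ := by
  let lift (t : unitInterval) : D.bundleCore.TotalSpace :=
    (D.bundleCore.localTriv i).toOpenPartialHomeomorph.symm (γ t, D.dev i p)
  have lift_eq (t : unitInterval) {b : B} (hb : γ t = b) : lift t =
      ⟨b, D.dev (D.bundleCore.indexAt b) b * ((D.dev i b)⁻¹ * D.dev i p)⟩ := by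
    subst hb
    rw [← mul_assoc]
    exact D.bundleCore.localTriv_symm_apply i (γ t, D.dev i p)
  have continuous_lift : Continuous lift :=
    (D.bundleCore.localTriv i).toOpenPartialHomeomorph.symm.continuousOn.comp_continuous
      (by fun_prop) fun t => (D.bundleCore.mem_localTriv_target i (γ t, D.dev i p)).2 (hγ t)
  have hlift := (D.isCoveringMap_proj.eq_liftPath_iff
    (γ := γ.toContinuousMap) (e := ⟨p, D.dev (D.bundleCore.indexAt p) p⟩) γ.source).2
    ⟨continuous_lift, funext fun t => by rw [Function.comp, lift_eq t rfl]; rfl,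
      (lift_eq 0 γ.source).trans (by simp)⟩
  rw [← hlift, lift_eq 1 γ.target]

theorem holonomy_eq_of_homotopic {p q : B} {γ₁ γ₂ : Path p q} {i j : ι}
    (h₁ : ∀ t, γ₁ t ∈ D.baseSet i) (h₂ : ∀ t, γ₂ t ∈ D.baseSet j) (h : γ₁.Homotopic γ₂) :
    (D.dev i q)⁻¹ * D.dev i p = (D.dev j q)⁻¹ * D.dev j p := by
  let _ : TopologicalSpace G := ⊥
  have : DiscreteTopology G := ⟨rfl⟩
  have hend := D.isCoveringMap_proj.liftPath_apply_one_eq_of_homotopicRel h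
    ⟨p, D.dev (D.bundleCore.indexAt p) p⟩ γ₁.source γ₂.source
  rw [D.liftPath_apply_one γ₁ h₁, D.liftPath_apply_one γ₂ h₂] at hend
  exact mul_left_cancel (eq_of_heq (Bundle.TotalSpace.mk.inj hend).2)

end DevelopingSystem

end Holonomy

/-! ### The solid ring and the chain of eight links inside it -/

/-- Coordinate space with its sup metric, in which the necklace is built. -/
abbrev E₃ : Type := ℝ × ℝ × ℝ

/-- The links of the chain. The four flat ones, `mid s` across the bars `y = ±75` and `side s` along
the bars `x = ±90`, lie in the plane `z = 0`; the upright link `upright s t`, in the plane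
`y = ±75`, hooks `mid t` to `side s`. -/
inductive Link
  | mid (s : Bool)
  | side (s : Bool)
  | upright (s t : Bool)
  deriving DecidableEq, Fintype

namespace Link

/-- The links lying in the plane `z = 0`. -/
def IsFlat : Link → Prop
  | mid _ | side _ => True
  | upright _ _ => False

protected theorem forall_iff {P : Link → Prop} : (∀ i, P i) ↔
    (P (mid true) ∧ P (mid false) ∧ P (side true) ∧ P (side false)) ∧
    P (upright true true) ∧ P (upright true false) ∧
    P (upright false true) ∧ P (upright false false) := by
  refine ⟨fun h => by simp only [h, and_self], fun h i => ?_⟩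
  rcases i with s | s | ⟨s, t⟩ <;> cases s <;> (try cases t) <;> tauto

theorem forall_isFlat_iff {P : Link → Prop} : (∀ i : Link, i.IsFlat → P i) ↔
    P (mid true) ∧ P (mid false) ∧ P (side true) ∧ P (side false) := by
  simp [Link.forall_iff, IsFlat]

theorem forall_not_isFlat_iff {P : Link → Prop} : (∀ i : Link, ¬i.IsFlat → P i) ↔
    P (upright true true) ∧ P (upright true false) ∧
      P (upright false true) ∧ P (upright false false) := by
  simp [Link.forall_iff, IsFlat]

theorem exists_isFlat_iff {P : Link → Prop} : (∃ i : Link, i.IsFlat ∧ P i) ↔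
    P (mid true) ∨ P (mid false) ∨ P (side true) ∨ P (side false) := by
  rw [← not_iff_not]
  push Not
  exact forall_isFlat_iff

theorem exists_not_isFlat_iff {P : Link → Prop} : (∃ i : Link, ¬i.IsFlat ∧ P i) ↔
    P (upright true true) ∨ P (upright true false) ∨
      P (upright false true) ∨ P (upright false false) := by
  rw [← not_iff_not]
  push Not
  exact forall_not_isFlat_iff

/-- The sign `±1` of a Boolean. -/
def sign : Bool → ℝ
  | true => 1
  | false => -1

/-- The affine map shrinking the solid ring onto the link `i`. -/
def map : Link → E₃ → E₃
  | mid s, p => (45 / 100 * p.1, sign s * (75 + 20 / 100 * p.2.1), 2 / 100 * p.2.2)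
  | side s, p => (sign s * (90 + 95 / 1000 * p.2.1), 98 / 100 * p.1, 2 / 100 * p.2.2)
  | upright s t, p =>
    (sign s * (60 + 33 / 100 * p.1), sign t * (75 + 2 / 100 * p.2.2), 10 / 100 * p.2.1)

/-- The inverse of `Link.map`: coordinates of a point relative to the link `i`. -/
def coord : Link → E₃ → E₃
  | mid s, p => (100 / 45 * p.1, 5 * (sign s * p.2.1 - 75), 50 * p.2.2)
  | side s, p => (100 / 98 * p.2.1, 1000 / 95 * (sign s * p.1 - 90), 50 * p.2.2)
  | upright s t, p => (100 / 33 * (sign s * p.1 - 60), 10 * p.2.2, 50 * (sign t * p.2.1 - 75))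

/-- `Link.map` as a homeomorphism of the ambient space. -/
def homeo (i : Link) : E₃ ≃ₜ E₃ where
  toFun := map i
  invFun := coord i
  left_inv := by
    rintro ⟨x, y, z⟩
    rcases i with s | s | ⟨s, t⟩ <;> cases s <;> (try cases t) <;>
      simp only [map, coord, sign, Prod.mk.injEq] <;> refine ⟨?_, ?_, ?_⟩ <;> ring
  right_inv := by
    rintro ⟨x, y, z⟩
    rcases i with s | s | ⟨s, t⟩ <;> cases s <;> (try cases t) <;>
      simp only [map, coord, sign, Prod.mk.injEq] <;> refine ⟨?_, ?_, ?_⟩ <;> ring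
  continuous_toFun := by rcases i with s | s | ⟨s, t⟩ <;> unfold map <;> fun_prop
  continuous_invFun := by rcases i with s | s | ⟨s, t⟩ <;> unfold coord <;> fun_prop

@[simp] theorem coord_map (i : Link) (p : E₃) : i.coord (i.map p) = p := i.homeo.left_inv p

@[simp] theorem map_coord (i : Link) (p : E₃) : i.map (i.coord p) = p := i.homeo.right_inv p

@[fun_prop] theorem continuous_coord (i : Link) : Continuous i.coord := i.homeo.symm.continuous

end Link

/-- The solid ring: a cube with a rectangular tunnel drilled through it along the `z`-axis. -/
def ring : Set E₃ :=
  (Icc (-100) 100 ×ˢ Icc (-100) 100 ×ˢ Icc (-100) 100) \ (Ioo (-80) 80 ×ˢ Ioo (-50) 50 ×ˢ univ)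

/-- An open ring slightly thicker than `ring`. -/
def collar : Set E₃ :=
  (Ioo (-101) 101 ×ˢ Ioo (-101) 101 ×ˢ Ioo (-101) 101) \ (Icc (-79) 79 ×ˢ Icc (-49) 49 ×ˢ univ)

theorem mem_ring {x y z : ℝ} : (x, y, z) ∈ ring ↔
    ((-100 ≤ x ∧ x ≤ 100) ∧ (-100 ≤ y ∧ y ≤ 100) ∧ -100 ≤ z ∧ z ≤ 100) ∧
      ¬((-80 < x ∧ x < 80) ∧ -50 < y ∧ y < 50) := by
  simp only [ring, Set.mem_sdiff, mem_prod, mem_Icc, mem_Ioo, mem_univ, and_true]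

theorem mem_collar {x y z : ℝ} : (x, y, z) ∈ collar ↔
    ((-101 < x ∧ x < 101) ∧ (-101 < y ∧ y < 101) ∧ -101 < z ∧ z < 101) ∧
      ¬((-79 ≤ x ∧ x ≤ 79) ∧ -49 ≤ y ∧ y ≤ 49) := by
  simp only [collar, Set.mem_sdiff, mem_prod, mem_Icc, mem_Ioo, mem_univ, and_true]

theorem isClosed_ring : IsClosed ring :=
  (isClosed_Icc.prod (isClosed_Icc.prod isClosed_Icc)).sdiff
    (isOpen_Ioo.prod (isOpen_Ioo.prod isOpen_univ))

theorem isCompact_ring : IsCompact ring :=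
  (isCompact_Icc.prod (isCompact_Icc.prod isCompact_Icc)).of_isClosed_subset isClosed_ring
    sdiff_subset

theorem isOpen_collar : IsOpen collar :=
  (isOpen_Ioo.prod (isOpen_Ioo.prod isOpen_Ioo)).sdiff
    (isClosed_Icc.prod (isClosed_Icc.prod isClosed_univ))

theorem ring_subset_collar : ring ⊆ collar := by
  rintro ⟨x, y, z⟩ h
  rw [mem_ring] at h
  rw [mem_collar]
  grind

theorem mem_ring_of_coord_mem_collar {i : Link} {p : E₃} (h : i.coord p ∈ collar) : p ∈ ring := by
  obtain ⟨x, y, z⟩ := p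
  rcases i with s | s | ⟨s, t⟩ <;> cases s <;> (try cases t) <;>
    simp only [Link.coord, Link.sign, mem_collar] at h <;> rw [mem_ring] <;> grind

theorem map_mem_ring (i : Link) {p : E₃} (h : p ∈ collar) : i.map p ∈ ring :=
  mem_ring_of_coord_mem_collar (i := i) (by rwa [i.coord_map])

theorem link_eq_of_coord_mem_collar {i j : Link} {p : E₃} (hi : i.coord p ∈ collar)
    (hj : j.coord p ∈ collar) : i = j := by
  obtain ⟨x, y, z⟩ := p
  rcases i with s | s | ⟨s, t⟩ <;> cases s <;> (try cases t) <;>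
  rcases j with s' | s' | ⟨s', t'⟩ <;> cases s' <;> (try cases t') <;>
  first
  | rfl
  | simp only [Link.coord, Link.sign, mem_collar] at hi hj; grind

/-! ### The developing system on the complement of the necklace -/

open scoped commutatorElement

/-- An element of a group that is a commutator of two of its own conjugates. Conjugates of `root`
serve as meridians of the rings of the necklace: the meridian of a ring is the commutator of the
meridians of any two linked rings of the chain inside it. -/
structure SelfCommutator (G : Type*) [Group G] where
  root : G
  flat : G
  upright : G
  commutator_eq : ⁅upright * root * upright⁻¹, flat * root * flat⁻¹⁆ = root

namespace SelfCommutator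

variable {G : Type*} [Group G] (s : SelfCommutator G)

/-- The meridian of a ring labelled by `k`. -/
def meridian (k : G) : G := k * s.root * k⁻¹

theorem meridian_eq_commutator (k : G) :
    s.meridian k = ⁅s.meridian (k * s.upright), s.meridian (k * s.flat)⁆ := by
  have h := congrArg (MulAut.conj k) s.commutator_eq
  rw [map_commutatorElement] at h
  simpa [meridian, mul_assoc] using h.symm

theorem meridian_ne_one (hs : s.root ≠ 1) (k : G) : s.meridian k ≠ 1 := by
  simpa [meridian, mul_inv_eq_one] using hs

/-- The label of the link `i` of a ring labelled by `k`. -/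
def childLabel (k : G) : Link → G
  | .mid _ | .side _ => k * s.flat
  | .upright _ _ => k * s.upright

theorem childLabel_of_isFlat (k : G) {i : Link} (hi : i.IsFlat) :
    s.childLabel k i = k * s.flat := by
  cases i <;> first | rfl | exact hi.elim

theorem childLabel_of_not_isFlat (k : G) {i : Link} (hi : ¬i.IsFlat) :
    s.childLabel k i = k * s.upright := by
  cases i <;> first | rfl | exact (hi trivial).elim

end SelfCommutator

section Walls

/-- The closed column over the square that spans the outer boundary of `ring`. -/
def closedColumn : Set E₃ := Icc (-100) 100 ×ˢ Icc (-100) 100 ×ˢ univ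

/-- The interior of `closedColumn`. -/
def openColumn : Set E₃ := Ioo (-100) 100 ×ˢ Ioo (-100) 100 ×ˢ univ

/-- The region enclosed by the wall, a vertical cylinder over the rectangle with sides `x = ±94` and
`y = ±75`. The wall contains the core planes of the upright links. -/
def insideWall : Set E₃ := Ioo (-94) 94 ×ˢ Ioo (-75) 75 ×ˢ univ

/-- The exterior of the wall. -/
def outsideWall : Set E₃ := (Icc (-94) 94 ×ˢ Icc (-75) 75 ×ˢ univ)ᶜ

/-- A thin open neighbourhood of the wall. -/
def wallNhd : Set E₃ :=
  (Ioo (-945 / 10) (945 / 10) ×ˢ Ioo (-755 / 10) (755 / 10) ×ˢ univ) \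
    (Icc (-935 / 10) (935 / 10) ×ˢ Icc (-745 / 10) (745 / 10) ×ˢ univ)

variable {x y z : ℝ}

theorem mem_closedColumn :
    (x, y, z) ∈ closedColumn ↔ (-100 ≤ x ∧ x ≤ 100) ∧ -100 ≤ y ∧ y ≤ 100 := by
  simp only [closedColumn, mem_prod, mem_Icc, mem_univ, and_true]

theorem mem_openColumn :
    (x, y, z) ∈ openColumn ↔ (-100 < x ∧ x < 100) ∧ -100 < y ∧ y < 100 := by
  simp only [openColumn, mem_prod, mem_Ioo, mem_univ, and_true]

theorem mem_insideWall :
    (x, y, z) ∈ insideWall ↔ (-94 < x ∧ x < 94) ∧ -75 < y ∧ y < 75 := by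
  simp only [insideWall, mem_prod, mem_Ioo, mem_univ, and_true]

theorem mem_outsideWall :
    (x, y, z) ∈ outsideWall ↔ ¬((-94 ≤ x ∧ x ≤ 94) ∧ -75 ≤ y ∧ y ≤ 75) := by
  simp only [outsideWall, mem_compl_iff, mem_prod, mem_Icc, mem_univ, and_true]

theorem mem_wallNhd : (x, y, z) ∈ wallNhd ↔
    ((-945 / 10 < x ∧ x < 945 / 10) ∧ -755 / 10 < y ∧ y < 755 / 10) ∧
      ¬((-935 / 10 ≤ x ∧ x ≤ 935 / 10) ∧ -745 / 10 ≤ y ∧ y ≤ 745 / 10) := by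
  simp only [wallNhd, Set.mem_sdiff, mem_prod, mem_Icc, mem_Ioo, mem_univ, and_true]

theorem isClosed_closedColumn : IsClosed closedColumn :=
  isClosed_Icc.prod (isClosed_Icc.prod isClosed_univ)

theorem isOpen_openColumn : IsOpen openColumn := isOpen_Ioo.prod (isOpen_Ioo.prod isOpen_univ)

theorem isOpen_insideWall : IsOpen insideWall := isOpen_Ioo.prod (isOpen_Ioo.prod isOpen_univ)

theorem isOpen_outsideWall : IsOpen outsideWall :=
  (isClosed_Icc.prod (isClosed_Icc.prod isClosed_univ)).isOpen_compl

theorem isOpen_wallNhd : IsOpen wallNhd :=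
  (isOpen_Ioo.prod (isOpen_Ioo.prod isOpen_univ)).sdiff
    (isClosed_Icc.prod (isClosed_Icc.prod isClosed_univ))

theorem openColumn_subset_closedColumn : openColumn ⊆ closedColumn :=
  prod_mono Ioo_subset_Icc_self (prod_mono Ioo_subset_Icc_self subset_rfl)

theorem ring_subset_closedColumn : ring ⊆ closedColumn :=
  sdiff_subset.trans (prod_mono subset_rfl (prod_mono subset_rfl (subset_univ _)))

theorem compl_closedColumn_subset_outsideWall : closedColumnᶜ ⊆ outsideWall :=
  compl_subset_compl.2 (prod_mono (Icc_subset_Icc (by norm_num) (by norm_num))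
    (prod_mono (Icc_subset_Icc (by norm_num) (by norm_num)) subset_rfl))

theorem disjoint_insideWall_outsideWall : Disjoint insideWall outsideWall :=
  disjoint_compl_right.mono_left (prod_mono Ioo_subset_Icc_self
    (prod_mono Ioo_subset_Icc_self subset_rfl))

theorem isOpen_offPlane : IsOpen {p : E₃ | p.2.2 ≠ 0} := isOpen_ne_fun (by fun_prop) (by fun_prop)

end Walls

section Steps

variable {G : Type*} [Group G]

/-- The step function jumping from `1` to `g` upwards across the plane `z = 0`. -/
def planeStep (g : G) (p : E₃) : G := if p.2.2 < 0 then 1 else g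

open Classical in
/-- The step function jumping from `1` to `g` outwards across the wall. -/
def wallStep (g : G) (p : E₃) : G := if p ∈ insideWall then 1 else g

variable {g : G} {p : E₃}

theorem eventuallyConst_planeStep (hp : p.2.2 ≠ 0) : EventuallyConst (planeStep g) (𝓝 p) := by
  have hz : ContinuousAt (fun q : E₃ => q.2.2) p := by fun_prop
  have : EventuallyConst (fun q : E₃ => q.2.2 < 0) (𝓝 p) := eventuallyConst_pred.2 <|
    hp.lt_or_gt.imp (hz.eventually_lt_const ·)
      fun h => (hz.eventually_const_lt h).mono fun _ => not_lt_of_gt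
  exact (this.comp fun P : Prop => open Classical in if P then 1 else g).congr (by
    filter_upwards with q; simp [planeStep])

theorem eventuallyConst_wallStep (hp : p ∈ insideWall ∨ p ∈ outsideWall) :
    EventuallyConst (wallStep g) (𝓝 p) := by
  have : EventuallyConst (· ∈ insideWall) (𝓝 p) := eventuallyConst_pred.2 <|
    hp.imp isOpen_insideWall.mem_nhds fun h => mem_of_superset (isOpen_outsideWall.mem_nhds h)
      disjoint_insideWall_outsideWall.subset_compl_left
  exact (this.comp fun P : Prop => open Classical in if P then 1 else g).congr .rfl

theorem LeftEquivAt.of_eventuallyConst_mul {B : Type*} [TopologicalSpace B] {x : B} {f : B → G}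
    (hf : EventuallyConst f (𝓝 x)) (g : B → G) : LeftEquivAt x (f * g) g := by
  obtain ⟨c, hc⟩ := eventuallyConst_iff_exists_eventuallyEq.1 hf
  exact ⟨c, hc.mono fun y hy => by simp [hy]⟩

theorem LeftEquivAt.of_eventuallyConst {B : Type*} [TopologicalSpace B] {x : B} {f g : B → G}
    (hf : EventuallyConst f (𝓝 x)) (hg : EventuallyConst g (𝓝 x)) : LeftEquivAt x f g := by
  simpa using of_eventuallyConst_mul (hf.mul hg.inv) g

end Steps

section Charts

open Link

/-- The charts on the complement of the chain inside a ring. In the exterior of the ring,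
`slitExterior` is cut along the plane `z = 0` outside the spanning square and `farExterior` is the
complement of the square column. Inside the ring, `slitInterior` is cut along the plane `z = 0` and
along the wall, with windows inside the links; `nearPlane` and `nearWall` cover the two cuts. -/
inductive Chart
  | slitExterior
  | farExterior
  | slitInterior
  | nearPlane
  | nearWall

/-- The domain of a chart, for the outermost ring. -/
def Chart.base : Chart → Set E₃
  | slitExterior => ringᶜ ∩ ({p | p.2.2 ≠ 0} ∪ openColumn)
  | farExterior => closedColumnᶜ
  | slitInterior => collar ∩ {p | ∀ i : Link, i.coord p ∉ ring} ∩
      ({p | p.2.2 ≠ 0} ∪ {p | ∃ i : Link, i.IsFlat ∧ i.coord p ∈ openColumn}) ∩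
      (insideWall ∪ outsideWall ∪ {p | ∃ i : Link, ¬i.IsFlat ∧ i.coord p ∈ openColumn})
  | nearPlane => collar ∩ {p | -1 < p.2.2 ∧ p.2.2 < 1} ∩
      {p | ∀ i : Link, i.IsFlat → i.coord p ∉ closedColumn}
  | nearWall => collar ∩ wallNhd ∩ {p | ∀ i : Link, ¬i.IsFlat → i.coord p ∉ closedColumn}

/-- The charts lying in the collar of the ring. -/
def Chart.IsInterior : Chart → Prop
  | slitExterior | farExterior => False
  | slitInterior | nearPlane | nearWall => True

theorem isOpen_forall_coord_notMem (P : Link → Prop) {S : Set E₃} (hS : IsClosed S) :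
    IsOpen {p | ∀ i : Link, P i → i.coord p ∉ S} := by
  simp only [ofPred_forall]
  exact isOpen_iInter_of_finite fun i => isOpen_iInter_of_finite fun _ =>
    (hS.preimage i.continuous_coord).isOpen_compl

theorem isOpen_exists_coord_mem (P : Link → Prop) {S : Set E₃} (hS : IsOpen S) :
    IsOpen {p | ∃ i : Link, P i ∧ i.coord p ∈ S} := by
  simp only [ofPred_exists]
  exact isOpen_iUnion fun i => isOpen_const.and (hS.preimage i.continuous_coord)

theorem Chart.isOpen_base (j : Chart) : IsOpen j.base := by
  cases j
  · exact isClosed_ring.isOpen_compl.inter (isOpen_offPlane.union isOpen_openColumn)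
  · exact isClosed_closedColumn.isOpen_compl
  · refine ((isOpen_collar.inter ?_).inter (isOpen_offPlane.union ?_)).inter
      ((isOpen_insideWall.union isOpen_outsideWall).union ?_)
    · simpa using isOpen_forall_coord_notMem (fun _ => True) isClosed_ring
    · exact isOpen_exists_coord_mem _ isOpen_openColumn
    · exact isOpen_exists_coord_mem _ isOpen_openColumn
  · exact (isOpen_collar.inter ((isOpen_lt (by fun_prop) (by fun_prop)).and
      (isOpen_lt (by fun_prop) (by fun_prop)))).inter
        (isOpen_forall_coord_notMem _ isClosed_closedColumn)
  · exact (isOpen_collar.inter isOpen_wallNhd).inter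
      (isOpen_forall_coord_notMem _ isClosed_closedColumn)

variable {p : E₃} {i : Link}

theorem snd_snd_ne_zero_of_mem_slitExterior (h : p ∈ Chart.base .slitExterior)
    (hp : p ∉ closedColumn) : p.2.2 ≠ 0 :=
  h.2.resolve_right fun h => hp (openColumn_subset_closedColumn h)

theorem snd_snd_ne_zero_of_mem_slitInterior (h : p ∈ Chart.base .slitInterior)
    (hp : ∀ i : Link, i.IsFlat → i.coord p ∉ closedColumn) : p.2.2 ≠ 0 :=
  h.1.2.resolve_right fun ⟨i, hi, h⟩ => hp i hi (openColumn_subset_closedColumn h)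

theorem offWall_of_mem_slitInterior (h : p ∈ Chart.base .slitInterior)
    (hp : ∀ i : Link, ¬i.IsFlat → i.coord p ∉ closedColumn) :
    p ∈ insideWall ∨ p ∈ outsideWall :=
  h.2.resolve_right fun ⟨i, hi, h⟩ => hp i hi (openColumn_subset_closedColumn h)

theorem offCuts_of_mem_slitInterior (h : p ∈ Chart.base .slitInterior) (hp : p ∉ ring)
    (h' : p.2.2 ≠ 0 ∨ p ∈ openColumn) : p.2.2 ≠ 0 ∧ (p ∈ insideWall ∨ p ∈ outsideWall) := by
  obtain ⟨⟨⟨hN, -⟩, hz⟩, hw⟩ := h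
  obtain ⟨x, y, z⟩ := p
  simp only [mem_union, mem_ofPred_eq, exists_isFlat_iff, exists_not_isFlat_iff, coord, sign,
    mem_collar, mem_ring, mem_openColumn, mem_insideWall, mem_outsideWall] at *
  grind (splits := 30)

theorem offCuts_of_mem_slitInterior_of_notMem_closedColumn (h : p ∈ Chart.base .slitInterior)
    (hp : p ∉ closedColumn) : p.2.2 ≠ 0 ∧ (p ∈ insideWall ∨ p ∈ outsideWall) := by
  obtain ⟨⟨⟨hN, -⟩, hz⟩, hw⟩ := h
  obtain ⟨x, y, z⟩ := p
  simp only [mem_union, mem_ofPred_eq, exists_isFlat_iff, exists_not_isFlat_iff, coord, sign,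
    mem_collar, mem_closedColumn, mem_openColumn, mem_insideWall, mem_outsideWall] at *
  grind (splits := 30)

theorem offCuts_of_mem_nearPlane (h : p ∈ Chart.base .nearPlane) (hp : p ∉ ring)
    (h' : p.2.2 ≠ 0 ∨ p ∈ openColumn) : p ∈ insideWall ∨ p.2.2 ≠ 0 ∧ p ∈ outsideWall := by
  obtain ⟨⟨hN, hz⟩, -⟩ := h
  obtain ⟨x, y, z⟩ := p
  simp only [mem_ofPred_eq, mem_collar, mem_ring, mem_openColumn, mem_insideWall,
    mem_outsideWall] at *
  grind (splits := 30)

theorem snd_snd_ne_zero_of_mem_nearWall (h : p ∈ Chart.base .nearWall) (hp : p ∉ ring) :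
    p.2.2 ≠ 0 := by
  obtain ⟨⟨hN, hw⟩, -⟩ := h
  obtain ⟨x, y, z⟩ := p
  simp only [mem_collar, mem_ring, mem_wallNhd] at *
  grind (splits := 30)

theorem nearWall_subset_closedColumn : Chart.base .nearWall ⊆ closedColumn := by
  rintro ⟨x, y, z⟩ ⟨⟨-, hw⟩, -⟩
  simp only [mem_wallNhd, mem_closedColumn] at *
  grind (splits := 30)

theorem disjoint_nearPlane_nearWall :
    Disjoint (Chart.base .nearPlane) (Chart.base .nearWall) := by
  refine Set.disjoint_left.2 ?_
  rintro ⟨x, y, z⟩ ⟨⟨hN, hz⟩, hf⟩ ⟨⟨-, hw⟩, hu⟩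
  simp only [mem_ofPred_eq, forall_isFlat_iff, forall_not_isFlat_iff, coord, sign, mem_collar,
    mem_closedColumn, mem_wallNhd] at *
  grind (splits := 30)

theorem coord_notMem_collar_of_mem_nearPlane (h : p ∈ Chart.base .nearPlane) (hi : ¬i.IsFlat) :
    i.coord p ∉ collar := by
  obtain ⟨⟨-, hz⟩, hf⟩ := h
  obtain ⟨x, y, z⟩ := p
  revert i
  simp only [mem_ofPred_eq, forall_isFlat_iff, forall_not_isFlat_iff, coord, sign, mem_collar,
    mem_closedColumn] at *
  grind (splits := 30)

theorem coord_notMem_collar_of_mem_nearWall (h : p ∈ Chart.base .nearWall) (hi : i.IsFlat) :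
    i.coord p ∉ collar := by
  obtain ⟨⟨-, hw⟩, hu⟩ := h
  obtain ⟨x, y, z⟩ := p
  revert i
  simp only [mem_ofPred_eq, forall_isFlat_iff, forall_not_isFlat_iff, coord, sign, mem_collar,
    mem_closedColumn, mem_wallNhd] at *
  grind (splits := 30)

theorem coord_snd_snd_of_isFlat (hi : i.IsFlat) : (i.coord p).2.2 = 50 * p.2.2 := by
  cases i <;> first | rfl | exact hi.elim

theorem coord_snd_snd_neg_iff_of_not_isFlat (hi : ¬i.IsFlat) (h : i.coord p ∈ collar) :
    (i.coord p).2.2 < 0 ↔ p ∈ insideWall := by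
  obtain ⟨x, y, z⟩ := p
  revert i
  simp only [forall_not_isFlat_iff, coord, sign, mem_collar, mem_insideWall]
  grind (splits := 30)

theorem offWall_of_coord_snd_snd_ne_zero (hi : ¬i.IsFlat) (h : i.coord p ∈ collar)
    (hz : (i.coord p).2.2 ≠ 0) : p ∈ insideWall ∨ p ∈ outsideWall := by
  obtain ⟨x, y, z⟩ := p
  revert i
  simp only [forall_not_isFlat_iff, coord, sign, mem_collar, mem_insideWall, mem_outsideWall]
  grind (splits := 30)

theorem coord_snd_snd_ne_zero_of_mem_slitInterior (h : p ∈ Chart.base .slitInterior)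
    (hN : i.coord p ∈ collar) (hP : i.coord p ∉ closedColumn) : (i.coord p).2.2 ≠ 0 := by
  obtain ⟨⟨-, hz⟩, hw⟩ := h
  obtain ⟨x, y, z⟩ := p
  revert i
  simp only [mem_union, mem_ofPred_eq, exists_isFlat_iff, exists_not_isFlat_iff, Link.forall_iff,
    coord, sign, mem_collar, mem_closedColumn, mem_openColumn, mem_insideWall,
    mem_outsideWall] at *
  constructor
  · clear hw; grind (splits := 30)
  · clear hz; grind (splits := 30)

theorem mem_exterior_of_notMem_ring (h : p ∉ ring) :
    p ∈ Chart.base .slitExterior ∨ p ∈ Chart.base .farExterior := by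
  by_cases hz : p.2.2 = 0
  · by_cases hP : p ∈ openColumn
    · exact .inl ⟨h, .inr hP⟩
    · obtain ⟨x, y, z⟩ := p
      right
      simp only [Chart.base, mem_compl_iff, mem_closedColumn, mem_ring, mem_openColumn] at *
      grind (splits := 30)
  · exact .inl ⟨h, .inl hz⟩

theorem coord_notMem_ring_of_isInterior {j : Chart} (hj : j.IsInterior) (h : p ∈ j.base) :
    i.coord p ∉ ring := by
  intro hi
  cases j with
  | slitExterior | farExterior => exact hj
  | slitInterior => exact h.1.1.2 i hi
  | nearPlane =>
    by_cases hf : i.IsFlat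
    · exact h.2 i hf (ring_subset_closedColumn hi)
    · exact coord_notMem_collar_of_mem_nearPlane h hf (ring_subset_collar hi)
  | nearWall =>
    by_cases hf : i.IsFlat
    · exact coord_notMem_collar_of_mem_nearWall h hf (ring_subset_collar hi)
    · exact h.2 i hf (ring_subset_closedColumn hi)

theorem isInterior_of_mem_base {j : Chart} (h : p ∈ j.base) (hp : p ∈ ring) : j.IsInterior := by
  cases j with
  | slitExterior => exact h.1 hp
  | farExterior => exact h (ring_subset_closedColumn hp)
  | slitInterior | nearPlane | nearWall => trivial

theorem mem_nearPlane_of_mem_ring (hp : p ∈ ring)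
    (hi : ∀ i : Link, i.IsFlat → i.coord p ∉ ring) (hz : p.2.2 = 0)
    (ho : ∀ i : Link, i.IsFlat → i.coord p ∉ openColumn) :
    p ∈ Chart.base .nearPlane := by
  refine ⟨⟨ring_subset_collar hp, by simp [hz]⟩, ?_⟩
  obtain ⟨x, y, z⟩ := p
  simp only [mem_ofPred_eq, forall_isFlat_iff, coord, sign, mem_ring,
    mem_closedColumn, mem_openColumn] at *
  grind (splits := 30)

theorem mem_nearWall_of_mem_ring (hp : p ∈ ring)
    (hi : ∀ i : Link, ¬i.IsFlat → i.coord p ∉ ring)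
    (hw : ¬(p ∈ insideWall ∨ p ∈ outsideWall))
    (ho : ∀ i : Link, ¬i.IsFlat → i.coord p ∉ openColumn) : p ∈ Chart.base .nearWall := by
  refine ⟨⟨ring_subset_collar hp, ?_⟩, ?_⟩ <;> obtain ⟨x, y, z⟩ := p
  · simp only [mem_wallNhd, mem_insideWall, mem_outsideWall] at *
    grind (splits := 30)
  · simp only [mem_ofPred_eq, forall_not_isFlat_iff, coord, sign, mem_ring,
      mem_closedColumn, mem_openColumn, mem_insideWall, mem_outsideWall] at *
    grind (splits := 30)

theorem exists_mem_base_of_mem_ring (hp : p ∈ ring) (hi : ∀ i : Link, i.coord p ∉ ring) :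
    ∃ j : Chart, p ∈ j.base := by
  by_cases hz : p.2.2 ≠ 0 ∨ ∃ i : Link, i.IsFlat ∧ i.coord p ∈ openColumn
  · by_cases hw : (p ∈ insideWall ∨ p ∈ outsideWall) ∨
      ∃ i : Link, ¬i.IsFlat ∧ i.coord p ∈ openColumn
    · exact ⟨.slitInterior, ⟨⟨ring_subset_collar hp, hi⟩, hz⟩, hw⟩
    · push Not at hw
      exact ⟨.nearWall, mem_nearWall_of_mem_ring hp (fun i _ => hi i) (not_or.2 hw.1) hw.2⟩
  · push Not at hz
    exact ⟨.nearPlane, mem_nearPlane_of_mem_ring hp (fun i _ => hi i) hz.1 hz.2⟩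

end Charts

namespace SelfCommutator

variable {G : Type*} [Group G] (s : SelfCommutator G) (k : G)

/-- The developing map of the chart `slitInterior` of a ring labelled by `k`. It takes into account
the meridians of the flat links (spanning discs in the plane `z = 0`) and those of the upright links
(spanning discs in the wall). -/
def slitDev : E₃ → G :=
  (planeStep (s.meridian (k * s.flat)) * wallStep (s.meridian (k * s.upright)))⁻¹

/-- The developing maps of the charts of a ring labelled by `k`. -/
def baseDev : Chart → E₃ → G
  | .slitExterior => 1
  | .farExterior => planeStep (s.meridian k)
  | .slitInterior => s.slitDev k
  | .nearPlane => planeStep (s.meridian (k * s.flat)) * s.slitDev k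
  | .nearWall => wallStep (s.meridian (k * s.upright)) * s.slitDev k

variable {k} {p : E₃}

theorem eventuallyConst_slitDev (hz : p.2.2 ≠ 0) (hw : p ∈ insideWall ∨ p ∈ outsideWall) :
    EventuallyConst (s.slitDev k) (𝓝 p) :=
  ((eventuallyConst_planeStep hz).mul (eventuallyConst_wallStep hw)).inv

/-- Outside the wall the steps across the plane and the wall add up to the step by the commutator
of the meridians of the flat and upright links, i.e. by the meridian of the ring. -/
theorem nearPlane_eq_farExterior_of_mem_outsideWall (hp : p ∈ outsideWall) :
    s.baseDev k .nearPlane p = (s.meridian (k * s.upright))⁻¹ * s.baseDev k .farExterior p := by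
  have hp' : p ∉ insideWall := disjoint_insideWall_outsideWall.notMem_of_mem_right hp
  simp only [baseDev, slitDev, Pi.mul_apply, Pi.inv_apply, planeStep, wallStep, hp', if_false]
  split_ifs
  · simp
  · rw [s.meridian_eq_commutator k, commutatorElement_def]
    group

theorem nearPlane_eq_one_of_mem_insideWall (hp : p ∈ insideWall) :
    s.baseDev k .nearPlane p = 1 := by
  simp [baseDev, slitDev, wallStep, hp]

theorem nearWall_eq_inv_planeStep :
    s.baseDev k .nearWall = (planeStep (s.meridian (k * s.flat)))⁻¹ := by
  rw [baseDev, slitDev, mul_inv_rev, mul_inv_cancel_left]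

theorem leftEquivAt_nearPlane_slitExterior (h : p ∈ Chart.base .slitExterior)
    (h' : p ∈ Chart.base .nearPlane) :
    LeftEquivAt p (s.baseDev k .nearPlane) (s.baseDev k .slitExterior) := by
  rcases offCuts_of_mem_nearPlane h' h.1 h.2 with hw | ⟨hz, hw⟩
  · exact ⟨1, mem_of_superset (isOpen_insideWall.mem_nhds hw) fun y hy =>
      (s.nearPlane_eq_one_of_mem_insideWall hy).trans (by simp [baseDev])⟩
  · exact .of_eventuallyConst
      ((eventuallyConst_planeStep hz).mul (s.eventuallyConst_slitDev hz (.inr hw))) (.const 1)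

theorem leftEquivAt_nearPlane_farExterior (h : p ∈ Chart.base .farExterior) :
    LeftEquivAt p (s.baseDev k .nearPlane) (s.baseDev k .farExterior) :=
  ⟨_, mem_of_superset (isOpen_outsideWall.mem_nhds (compl_closedColumn_subset_outsideWall h))
    fun _ => s.nearPlane_eq_farExterior_of_mem_outsideWall⟩

theorem leftEquivAt_slitInterior_exterior {j : Chart} (hj : ¬j.IsInterior) (h : p ∈ j.base)
    (h' : p ∈ Chart.base .slitInterior) :
    LeftEquivAt p (s.baseDev k .slitInterior) (s.baseDev k j) := by
  cases j with
  | slitExterior =>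
    obtain ⟨hz, hw⟩ := offCuts_of_mem_slitInterior h' h.1 h.2
    exact .of_eventuallyConst (s.eventuallyConst_slitDev hz hw) (.const 1)
  | farExterior =>
    obtain ⟨hz, hw⟩ := offCuts_of_mem_slitInterior_of_notMem_closedColumn h' h
    exact .of_eventuallyConst (s.eventuallyConst_slitDev hz hw) (eventuallyConst_planeStep hz)
  | slitInterior | nearPlane | nearWall => exact (hj trivial).elim

theorem leftEquivAt_slitExterior_farExterior (h : p ∈ Chart.base .slitExterior)
    (h' : p ∈ Chart.base .farExterior) :
    LeftEquivAt p (s.baseDev k .slitExterior) (s.baseDev k .farExterior) :=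
  .of_eventuallyConst (.const 1)
    (eventuallyConst_planeStep (snd_snd_ne_zero_of_mem_slitExterior h h'))

theorem leftEquivAt_nearWall_slitExterior (h : p ∈ Chart.base .slitExterior)
    (h' : p ∈ Chart.base .nearWall) :
    LeftEquivAt p (s.baseDev k .nearWall) (s.baseDev k .slitExterior) := by
  rw [nearWall_eq_inv_planeStep]
  exact .of_eventuallyConst
    (eventuallyConst_planeStep (snd_snd_ne_zero_of_mem_nearWall h' h.1)).inv (.const 1)

theorem leftEquivAt_nearPlane_slitInterior (h : p ∈ Chart.base .slitInterior)
    (h' : p ∈ Chart.base .nearPlane) :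
    LeftEquivAt p (s.baseDev k .nearPlane) (s.baseDev k .slitInterior) :=
  .of_eventuallyConst_mul
    (eventuallyConst_planeStep (snd_snd_ne_zero_of_mem_slitInterior h h'.2)) _

theorem leftEquivAt_nearWall_slitInterior (h : p ∈ Chart.base .slitInterior)
    (h' : p ∈ Chart.base .nearWall) :
    LeftEquivAt p (s.baseDev k .nearWall) (s.baseDev k .slitInterior) :=
  .of_eventuallyConst_mul (eventuallyConst_wallStep (offWall_of_mem_slitInterior h h'.2)) _

theorem leftEquivAt_baseDev (i j : Chart) (hi : p ∈ i.base) (hj : p ∈ j.base) :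
    LeftEquivAt p (s.baseDev k i) (s.baseDev k j) := by
  have hPW : p ∈ Chart.base .nearPlane → p ∉ Chart.base .nearWall :=
    fun h h' => Set.disjoint_left.1 disjoint_nearPlane_nearWall h h'
  have hcW : p ∈ Chart.base .farExterior → p ∉ Chart.base .nearWall :=
    fun h h' => h (nearWall_subset_closedColumn h')
  cases i <;> cases j <;> first
    | exact .refl _ _
    | exact (hPW ‹_› ‹_›).elim
    | exact (hcW ‹_› ‹_›).elim
    | exact s.leftEquivAt_slitExterior_farExterior ‹_› ‹_›
    | exact s.leftEquivAt_nearWall_slitExterior ‹_› ‹_›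
    | exact s.leftEquivAt_nearPlane_slitInterior ‹_› ‹_›
    | exact s.leftEquivAt_nearWall_slitInterior ‹_› ‹_›
    | exact s.leftEquivAt_slitInterior_exterior id ‹_› ‹_›
    | exact s.leftEquivAt_nearPlane_slitExterior ‹_› ‹_›
    | exact s.leftEquivAt_nearPlane_farExterior ‹_›
    | exact (s.leftEquivAt_slitExterior_farExterior ‹_› ‹_›).symm
    | exact (s.leftEquivAt_nearWall_slitExterior ‹_› ‹_›).symm
    | exact (s.leftEquivAt_nearPlane_slitInterior ‹_› ‹_›).symm
    | exact (s.leftEquivAt_nearWall_slitInterior ‹_› ‹_›).symm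
    | exact (s.leftEquivAt_slitInterior_exterior id ‹_› ‹_›).symm
    | exact (s.leftEquivAt_nearPlane_slitExterior ‹_› ‹_›).symm
    | exact (s.leftEquivAt_nearPlane_farExterior ‹_›).symm

/-- The developing map of the chart `j` of the ring reached by following the links `w`, when the
outermost ring is labelled by `k`. -/
def wordDev (k : G) : List Link → Chart → E₃ → G
  | [], j => s.baseDev k j
  | i :: w, j => wordDev (s.childLabel k i) w j ∘ i.coord * s.slitDev k

end SelfCommutator

/-- The domain of the chart `j` of the ring reached by following the links `w`. -/
def wordBase : List Link → Chart → Set E₃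
  | [], j => j.base
  | i :: w, j => i.coord ⁻¹' (collar ∩ wordBase w j)

theorem isOpen_wordBase (w : List Link) (j : Chart) : IsOpen (wordBase w j) := by
  induction w with
  | nil => exact j.isOpen_base
  | cons i w ih => exact (isOpen_collar.inter ih).preimage i.continuous_coord

namespace SelfCommutator

variable {G : Type*} [Group G] (s : SelfCommutator G) {k : G} {p : E₃} {i : Link} {j j' : Chart}

theorem planeStep_comp_coord_of_isFlat (hi : i.IsFlat) (g : G) :
    planeStep g ∘ i.coord = planeStep g := by
  ext p
  have hneg : 50 * p.2.2 < 0 ↔ p.2.2 < 0 := by constructor <;> intro h <;> linarith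
  simp [planeStep, coord_snd_snd_of_isFlat hi, hneg]

theorem planeStep_comp_coord_eventuallyEq_wallStep (hi : ¬i.IsFlat) (hN : i.coord p ∈ collar)
    (g : G) : planeStep g ∘ i.coord =ᶠ[𝓝 p] wallStep g := by
  filter_upwards [i.continuous_coord.continuousAt.eventually (isOpen_collar.mem_nhds hN)] with q hq
  have hqz := coord_snd_snd_neg_iff_of_not_isFlat hi (show i.coord q ∈ collar from hq)
  by_cases hw : q ∈ insideWall <;> simp [planeStep, wallStep, hqz, hw]

theorem leftEquivAt_slitInterior_wordDev (hj' : ¬j'.IsInterior)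
    (h : p ∈ Chart.base .slitInterior) (hN : i.coord p ∈ collar) (h' : i.coord p ∈ j'.base) :
    LeftEquivAt p (s.baseDev k .slitInterior) (s.wordDev k [i] j') := by
  cases j' with
  | slitExterior => exact ⟨1, by simp [baseDev, wordDev]⟩
  | farExterior =>
    have hz := coord_snd_snd_ne_zero_of_mem_slitInterior h hN h'
    exact (LeftEquivAt.of_eventuallyConst_mul ((eventuallyConst_planeStep hz).comp_tendsto
      i.continuous_coord.continuousAt) _).symm
  | slitInterior | nearPlane | nearWall => exact (hj' trivial).elim

theorem leftEquivAt_nearPlane_wordDev (hj' : ¬j'.IsInterior) (h : p ∈ Chart.base .nearPlane)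
    (hN : i.coord p ∈ collar) (h' : i.coord p ∈ j'.base) :
    LeftEquivAt p (s.baseDev k .nearPlane) (s.wordDev k [i] j') := by
  have hi : i.IsFlat := by_contra fun hi => coord_notMem_collar_of_mem_nearPlane h hi hN
  cases j' with
  | slitExterior =>
    have hz := snd_snd_ne_zero_of_mem_slitExterior h' (h.2 i hi)
    rw [coord_snd_snd_of_isFlat hi] at hz
    simpa [baseDev, wordDev] using
      LeftEquivAt.of_eventuallyConst_mul (eventuallyConst_planeStep (right_ne_zero_of_mul hz)) _
  | farExterior =>
    rw [wordDev, wordDev, baseDev, baseDev, planeStep_comp_coord_of_isFlat hi,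
      s.childLabel_of_isFlat k hi]
    exact .refl _ _
  | slitInterior | nearPlane | nearWall => exact (hj' trivial).elim

theorem leftEquivAt_nearWall_wordDev (hj' : ¬j'.IsInterior) (h : p ∈ Chart.base .nearWall)
    (hN : i.coord p ∈ collar) (h' : i.coord p ∈ j'.base) :
    LeftEquivAt p (s.baseDev k .nearWall) (s.wordDev k [i] j') := by
  have hi : ¬i.IsFlat := fun hi => coord_notMem_collar_of_mem_nearWall h hi hN
  cases j' with
  | slitExterior =>
    have hw := offWall_of_coord_snd_snd_ne_zero hi hN
      (snd_snd_ne_zero_of_mem_slitExterior h' (h.2 i hi))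
    simpa [baseDev, wordDev] using
      LeftEquivAt.of_eventuallyConst_mul (eventuallyConst_wallStep hw) _
  | farExterior =>
    refine ⟨1, ?_⟩
    filter_upwards [planeStep_comp_coord_eventuallyEq_wallStep hi hN
      (s.meridian (k * s.upright))] with y hy
    rw [wordDev, wordDev, baseDev, baseDev, s.childLabel_of_not_isFlat k hi, Pi.mul_apply,
      Pi.mul_apply, hy, one_mul]
  | slitInterior | nearPlane | nearWall => exact (hj' trivial).elim

theorem leftEquivAt_wordDev_singleton (hj : j.IsInterior) (hj' : ¬j'.IsInterior) (h : p ∈ j.base)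
    (hN : i.coord p ∈ collar) (h' : i.coord p ∈ j'.base) :
    LeftEquivAt p (s.baseDev k j) (s.wordDev k [i] j') := by
  cases j with
  | slitExterior | farExterior => exact hj.elim
  | slitInterior => exact s.leftEquivAt_slitInterior_wordDev hj' h hN h'
  | nearPlane => exact s.leftEquivAt_nearPlane_wordDev hj' h hN h'
  | nearWall => exact s.leftEquivAt_nearWall_wordDev hj' h hN h'

theorem leftEquivAt_baseDev_wordDev (w : List Link) (h : p ∈ j.base)
    (h' : p ∈ wordBase (i :: w) j') : LeftEquivAt p (s.baseDev k j) (s.wordDev k (i :: w) j') := by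
  have hj := isInterior_of_mem_base h (mem_ring_of_coord_mem_collar h'.1)
  have hi : i.coord p ∉ ring := coord_notMem_ring_of_isInterior hj h
  cases w with
  | nil =>
    obtain ⟨l, hl, hp⟩ : ∃ l : Chart, ¬l.IsInterior ∧ i.coord p ∈ l.base := by
      rcases mem_exterior_of_notMem_ring hi with h | h
      exacts [⟨_, id, h⟩, ⟨_, id, h⟩]
    have hlj : LeftEquivAt p (s.wordDev k [i] l) (s.wordDev k [i] j') :=
      ((s.leftEquivAt_baseDev l j' hp h'.2).comp_tendsto
        i.continuous_coord.continuousAt).mul_right _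
    exact (s.leftEquivAt_wordDev_singleton hj hl h h'.1 hp).trans hlj
  | cons l w => exact (hi (mem_ring_of_coord_mem_collar h'.2.1)).elim

theorem leftEquivAt_wordDev (w w' : List Link) (j j' : Chart) (h : p ∈ wordBase w j)
    (h' : p ∈ wordBase w' j') : LeftEquivAt p (s.wordDev k w j) (s.wordDev k w' j') := by
  induction w generalizing w' k p with
  | nil =>
    cases w' with
    | nil => exact s.leftEquivAt_baseDev j j' h h'
    | cons i' w' => exact s.leftEquivAt_baseDev_wordDev w' h h'
  | cons i w ih =>
    cases w' with
    | nil => exact (s.leftEquivAt_baseDev_wordDev w h' h).symm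
    | cons i' w' =>
      obtain rfl := link_eq_of_coord_mem_collar h.1 h'.1
      exact ((ih w' h.2 h'.2).comp_tendsto i.continuous_coord.continuousAt).mul_right _

end SelfCommutator

/-! ### The necklace -/

/-- The `n`-th stage of the construction: the union of the images of `ring` under all compositions
of `n` of the maps `Link.map`. -/
def stage : ℕ → Set E₃
  | 0 => ring
  | n + 1 => {p | ∃ i : Link, i.coord p ∈ stage n}

/-- Antoine's necklace. -/
def necklace : Set E₃ := ⋂ n, stage n

theorem stage_subset_ring (n : ℕ) : stage n ⊆ ring := by
  induction n with
  | zero => exact subset_rfl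
  | succ n ih =>
    rintro p ⟨i, hi⟩
    exact mem_ring_of_coord_mem_collar (ring_subset_collar (ih hi))

theorem exists_mem_wordBase_of_notMem_necklace {p : E₃} (hp : p ∉ necklace) :
    ∃ w j, p ∈ wordBase w j := by
  obtain ⟨n, hn⟩ : ∃ n, p ∉ stage n := by simpa [necklace] using hp
  clear hp
  by_cases hV : p ∈ ring
  · induction n generalizing p with
    | zero => exact (hn hV).elim
    | succ n ih =>
      by_cases hi : ∀ i : Link, i.coord p ∉ ring
      · exact ⟨[], exists_mem_base_of_mem_ring hV hi⟩
      · push Not at hi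
        obtain ⟨i, hi⟩ := hi
        obtain ⟨w, j, h⟩ := ih (fun h => hn ⟨i, h⟩) hi
        exact ⟨i :: w, j, ring_subset_collar hi, h⟩
  · rcases mem_exterior_of_notMem_ring hV with h | h
    exacts [⟨[], _, h⟩, ⟨[], _, h⟩]

/-- The developing system on the complement of the necklace whose holonomy around the ring reached
by a word is a conjugate of `s.root`. -/
def SelfCommutator.developingSystem {G : Type*} [Group G] (s : SelfCommutator G) :
    DevelopingSystem ↥necklaceᶜ G (List Link × Chart) where
  baseSet i := Subtype.val ⁻¹' wordBase i.1 i.2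
  isOpen_baseSet i := (isOpen_wordBase i.1 i.2).preimage continuous_subtype_val
  exists_mem_baseSet x := by
    obtain ⟨w, j, h⟩ := exists_mem_wordBase_of_notMem_necklace x.2
    exact ⟨(w, j), h⟩
  dev i := s.wordDev 1 i.1 i.2 ∘ Subtype.val
  leftEquivAt i j _ hi hj := (s.leftEquivAt_wordDev i.1 j.1 i.2 j.2 hi hj).comp_tendsto
    continuous_subtype_val.continuousAt

/-- The self-homeomorphism of the ambient space that maps the outermost ring onto the ring reached
by following the links `w`. -/
def wordHomeo : List Link → E₃ ≃ₜ E₃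
  | [] => Homeomorph.refl E₃
  | i :: w => (wordHomeo w).trans i.homeo

@[simp] theorem wordHomeo_nil (p : E₃) : wordHomeo [] p = p := rfl

@[simp] theorem wordHomeo_cons (i : Link) (w : List Link) (p : E₃) :
    wordHomeo (i :: w) p = i.map (wordHomeo w p) := rfl

theorem wordHomeo_append (w w' : List Link) (p : E₃) :
    wordHomeo (w ++ w') p = wordHomeo w (wordHomeo w' p) := by
  induction w with
  | nil => rfl
  | cons i w ih => simp [ih]

theorem wordHomeo_mem_collar (w : List Link) {p : E₃} (hp : p ∈ collar) :
    wordHomeo w p ∈ collar := by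
  induction w with
  | nil => exact hp
  | cons i w ih => exact ring_subset_collar (map_mem_ring i ih)

theorem wordHomeo_mem_wordBase (w : List Link) {j : Chart} {p : E₃} (hp : p ∈ collar)
    (hj : p ∈ j.base) : wordHomeo w p ∈ wordBase w j := by
  induction w with
  | nil => exact hj
  | cons i w ih => exact ⟨by simpa using wordHomeo_mem_collar w hp, by simpa using ih⟩

theorem SelfCommutator.exists_wordDev_wordHomeo {G : Type*} [Group G] (s : SelfCommutator G)
    (w : List Link) (k : G) : ∃ (k' : G) (c : E₃ → G),
      ∀ j p, s.wordDev k w j (wordHomeo w p) = s.baseDev k' j p * c p := by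
  induction w generalizing k with
  | nil => exact ⟨k, 1, fun j p => by simp [wordDev]⟩
  | cons i w ih =>
    obtain ⟨k', c, h⟩ := ih (s.childLabel k i)
    exact ⟨k', fun p => c p * s.slitDev k (wordHomeo (i :: w) p), fun j p => by
      simp [wordDev, h, mul_assoc]⟩

/-! ### Essential loops around the rings -/

theorem joinedIn_of_Icc_subset {E : Type*} [AddCommGroup E] [PartialOrder E] [IsOrderedAddMonoid E]
    [Module ℝ E] [PosSMulMono ℝ E] [TopologicalSpace E] [ContinuousAdd E] [ContinuousSMul ℝ E]
    {S : Set E} {a b : E} (hab : a ≤ b) (h : Icc a b ⊆ S) : JoinedIn S a b :=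
  (((convex_Icc a b).isPathConnected ⟨a, left_mem_Icc.2 hab⟩).joinedIn a (left_mem_Icc.2 hab) b
    (right_mem_Icc.2 hab)).mono h

/-- The lower end of two paths running up a column of `ring` on its two sides. -/
def loopBottom : E₃ := (1005 / 10, 0, -1005 / 10)

/-- The upper end of the two paths starting at `loopBottom`. -/
def loopTop : E₃ := (1005 / 10, 0, 1005 / 10)

theorem mem_slitExterior {x y z : ℝ} : (x, y, z) ∈ Chart.base .slitExterior ↔
    (x, y, z) ∉ ring ∧ (z ≠ 0 ∨ (x, y, z) ∈ openColumn) :=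
  .rfl

theorem joinedIn_farExterior :
    JoinedIn (Chart.base .farExterior ∩ (collar \ ring)) loopBottom loopTop := by
  refine joinedIn_of_Icc_subset (by norm_num [loopBottom, loopTop]) ?_
  rintro ⟨x, y, z⟩ ⟨⟨hx, hy, hz⟩, hx', hy', hz'⟩
  simp only [loopBottom, loopTop] at hx hy hz hx' hy' hz'
  simp only [Chart.base, mem_inter_iff, mem_compl_iff, Set.mem_sdiff, mem_closedColumn, mem_collar,
    mem_ring]
  grind

theorem joinedIn_slitExterior :
    JoinedIn (Chart.base .slitExterior ∩ (collar \ ring)) loopBottom loopTop := by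
  have hbottom : JoinedIn (Chart.base .slitExterior ∩ (collar \ ring))
      (795 / 10, 0, -1005 / 10) loopBottom := by
    refine joinedIn_of_Icc_subset (by norm_num [loopBottom]) ?_
    rintro ⟨x, y, z⟩ ⟨⟨hx, hy, hz⟩, hx', hy', hz'⟩
    simp only [loopBottom] at hx hy hz hx' hy' hz'
    simp only [mem_slitExterior, mem_openColumn, mem_inter_iff, Set.mem_sdiff, mem_collar,
      mem_ring]
    grind
  have htunnel : JoinedIn (Chart.base .slitExterior ∩ (collar \ ring))
      (795 / 10, 0, -1005 / 10) (795 / 10, 0, 1005 / 10) := by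
    refine joinedIn_of_Icc_subset (by norm_num) ?_
    rintro ⟨x, y, z⟩ ⟨⟨hx, hy, hz⟩, hx', hy', hz'⟩
    simp only at hx hy hz hx' hy' hz'
    simp only [mem_slitExterior, mem_openColumn, mem_inter_iff, Set.mem_sdiff, mem_collar,
      mem_ring]
    grind
  have htop : JoinedIn (Chart.base .slitExterior ∩ (collar \ ring))
      (795 / 10, 0, 1005 / 10) loopTop := by
    refine joinedIn_of_Icc_subset (by norm_num [loopTop]) ?_
    rintro ⟨x, y, z⟩ ⟨⟨hx, hy, hz⟩, hx', hy', hz'⟩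
    simp only [loopTop] at hx hy hz hx' hy' hz'
    simp only [mem_slitExterior, mem_openColumn, mem_inter_iff, Set.mem_sdiff, mem_collar,
      mem_ring]
    grind
  exact (hbottom.symm.trans htunnel).trans htop

/-- The commutator of two `3`-cycles of `Fin 5` with one common point is a `3`-cycle, hence
conjugate to both of them. -/
def permSelfCommutator : SelfCommutator (Equiv.Perm (Fin 5)) where
  root := ⁅Equiv.swap (0 : Fin 5) 3 * Equiv.swap 3 4, Equiv.swap (0 : Fin 5) 1 * Equiv.swap 1 2⁆
  flat := Equiv.swap 1 0 * Equiv.swap 3 2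
  upright := Equiv.swap 4 1
  commutator_eq := by decide +kernel

theorem permSelfCommutator_root_ne_one : permSelfCommutator.root ≠ 1 := by decide

theorem SelfCommutator.meridian_eq_one_of_homotopic {G : Type*} [Group G] (s : SelfCommutator G)
    (w : List Link) {a b : ↥necklaceᶜ} {γ₁ γ₂ : Path a b}
    (ha : (a : E₃) = wordHomeo w loopBottom) (hb : (b : E₃) = wordHomeo w loopTop)
    (h₁ : ∀ t, (γ₁ t : E₃) ∈ wordBase w .slitExterior)
    (h₂ : ∀ t, (γ₂ t : E₃) ∈ wordBase w .farExterior) (h : γ₁.Homotopic γ₂) :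
    ∃ k, s.meridian k = 1 := by
  obtain ⟨k, c, hk⟩ := s.exists_wordDev_wordHomeo w 1
  have hol := s.developingSystem.holonomy_eq_of_homotopic (i := (w, .slitExterior))
    (j := (w, .farExterior)) h₁ h₂ h
  simp only [developingSystem, Function.comp_apply, ha, hb, hk] at hol
  have htop : ¬(loopTop.2.2 < 0) := by norm_num [loopTop]
  have hbottom : loopBottom.2.2 < 0 := by norm_num [loopBottom]
  exact ⟨k, by simpa [baseDev, planeStep, htop, hbottom] using hol⟩

theorem exists_not_homotopic (w : List Link) {S : Set E₃}
    (hS : wordHomeo w '' (collar \ ring) ⊆ S) (hS' : S ⊆ necklaceᶜ) :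
    ∃ (a b : S) (γ₁ γ₂ : Path a b), (∀ t, (γ₁ t : E₃) ∈ wordHomeo w '' (collar \ ring)) ∧
      (∀ t, (γ₂ t : E₃) ∈ wordHomeo w '' (collar \ ring)) ∧ ¬γ₁.Homotopic γ₂ := by
  let f (j : Chart) (p : ↥(j.base ∩ (collar \ ring))) : S :=
    ⟨wordHomeo w p, hS (mem_image_of_mem _ p.2.2)⟩
  have hf (j : Chart) : Continuous (f j) := by fun_prop
  let γ₁ := joinedIn_slitExterior.joined_subtype.somePath
  let γ₂ := joinedIn_farExterior.joined_subtype.somePath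
  refine ⟨_, _, γ₁.map (hf _), γ₂.map (hf _), fun t => mem_image_of_mem _ (γ₁ t).2.2,
    fun t => mem_image_of_mem _ (γ₂ t).2.2, fun h => ?_⟩
  obtain ⟨k, hk⟩ := permSelfCommutator.meridian_eq_one_of_homotopic w rfl rfl
    (fun t => wordHomeo_mem_wordBase w (γ₁ t).2.2.1 (γ₁ t).2.1)
    (fun t => wordHomeo_mem_wordBase w (γ₂ t).2.2.1 (γ₂ t).2.1)
    (h.map ⟨Set.inclusion hS', continuous_inclusion hS'⟩)
  exact permSelfCommutator.meridian_ne_one permSelfCommutator_root_ne_one k hk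

/-! ### The necklace is a Cantor set -/

theorem dist_map_le (i : Link) (p q : E₃) : dist (i.map p) (i.map q) ≤ 98 / 100 * dist p q := by
  obtain ⟨x, y, z⟩ := p
  obtain ⟨x', y', z'⟩ := q
  have hx : |x - x'| ≤ dist (x, y, z) (x', y', z') := le_max_left _ _
  have hy : |y - y'| ≤ dist (x, y, z) (x', y', z') := (le_max_left _ _).trans (le_max_right _ _)
  have hz : |z - z'| ≤ dist (x, y, z) (x', y', z') := (le_max_right _ _).trans (le_max_right _ _)
  generalize dist (x, y, z) (x', y', z') = d at *
  rw [abs_le] at hx hy hz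
  simp only [Prod.dist_eq, Real.dist_eq]
  rcases i with s | s | ⟨s, t⟩ <;> cases s <;> (try cases t) <;>
    simp only [Link.map, Link.sign] <;>
    refine max_le ?_ (max_le ?_ ?_) <;> rw [abs_le] <;> constructor <;> linarith

theorem dist_wordHomeo_le (w : List Link) (p q : E₃) :
    dist (wordHomeo w p) (wordHomeo w q) ≤ (98 / 100) ^ w.length * dist p q := by
  induction w with
  | nil => simp
  | cons i w ih =>
    calc dist (i.map (wordHomeo w p)) (i.map (wordHomeo w q))
        ≤ 98 / 100 * dist (wordHomeo w p) (wordHomeo w q) := dist_map_le i _ _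
      _ ≤ 98 / 100 * ((98 / 100) ^ w.length * dist p q) := by gcongr
      _ = (98 / 100) ^ (i :: w).length * dist p q := by rw [List.length_cons]; ring

theorem dist_le_of_mem_collar {p q : E₃} (hp : p ∈ collar) (hq : q ∈ collar) :
    dist p q ≤ 202 := by
  obtain ⟨⟨⟨_, _⟩, ⟨_, _⟩, _, _⟩, -⟩ := hp
  obtain ⟨⟨⟨_, _⟩, ⟨_, _⟩, _, _⟩, -⟩ := hq
  simp only [Prod.dist_eq, Real.dist_eq]
  refine max_le ?_ (max_le ?_ ?_) <;> rw [abs_le] <;> constructor <;> linarith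

theorem exists_forall_dist_wordHomeo_lt {ε : ℝ} (hε : 0 < ε) :
    ∃ n : ℕ, ∀ w : List Link, n ≤ w.length → ∀ p ∈ collar, ∀ q ∈ collar,
      dist (wordHomeo w p) (wordHomeo w q) < ε := by
  obtain ⟨n, hn⟩ := exists_pow_lt_of_lt_one (show 0 < ε / 202 by positivity)
    (show (98 / 100 : ℝ) < 1 by norm_num)
  refine ⟨n, fun w hw p hp q hq => ?_⟩
  calc dist (wordHomeo w p) (wordHomeo w q)
      ≤ (98 / 100) ^ w.length * dist p q := dist_wordHomeo_le w p q
    _ ≤ (98 / 100) ^ n * 202 := by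
      gcongr ?_ * ?_
      · exact pow_le_pow_of_le_one (by norm_num) (by norm_num) hw
      · exact dist_le_of_mem_collar hp hq
    _ < ε := (lt_div_iff₀ (by norm_num)).1 hn

theorem isClosed_stage (n : ℕ) : IsClosed (stage n) := by
  induction n with
  | zero => exact isClosed_ring
  | succ n ih =>
    have hn : stage (n + 1) = ⋃ i : Link, i.coord ⁻¹' stage n := by ext p; simp [stage]
    rw [hn]
    exact isClosed_iUnion_of_finite fun i => ih.preimage i.continuous_coord

theorem stage_succ_subset (n : ℕ) : stage (n + 1) ⊆ stage n := by
  induction n with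
  | zero => exact stage_subset_ring 1
  | succ n ih =>
    rintro p ⟨i, hi⟩
    exact ⟨i, ih hi⟩

theorem necklace_subset_ring : necklace ⊆ ring := iInter_subset stage 0

theorem necklace_subset_collar : necklace ⊆ collar := necklace_subset_ring.trans ring_subset_collar

theorem isClosed_necklace : IsClosed necklace := isClosed_iInter isClosed_stage

variable {p q : E₃} {i : Link} {w w' : List Link}

theorem mem_necklace_of_coord_mem (h : i.coord p ∈ necklace) : p ∈ necklace :=
  mem_iInter.2 fun n => stage_succ_subset n ⟨i, mem_iInter.1 h n⟩

theorem coord_mem_necklace (hp : p ∈ necklace) (h : i.coord p ∈ collar) :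
    i.coord p ∈ necklace := by
  refine mem_iInter.2 fun n => ?_
  obtain ⟨j, hj⟩ := mem_iInter.1 hp (n + 1)
  rwa [link_eq_of_coord_mem_collar h (ring_subset_collar (stage_subset_ring n hj))]

theorem exists_coord_mem_necklace (hp : p ∈ necklace) : ∃ i : Link, i.coord p ∈ necklace := by
  obtain ⟨i, hi⟩ := mem_iInter.1 hp 1
  exact ⟨i, coord_mem_necklace hp (ring_subset_collar hi)⟩

theorem wordHomeo_mem_necklace (w : List Link) (hp : p ∈ necklace) : wordHomeo w p ∈ necklace := by
  induction w with
  | nil => exact hp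
  | cons i w ih => exact mem_necklace_of_coord_mem (i := i) (by simpa using ih)

theorem exists_wordHomeo_eq (hp : p ∈ necklace) (n : ℕ) :
    ∃ w : List Link, w.length = n ∧ ∃ q ∈ necklace, wordHomeo w q = p := by
  induction n generalizing p with
  | zero => exact ⟨[], rfl, p, hp, rfl⟩
  | succ n ih =>
    obtain ⟨i, hi⟩ := exists_coord_mem_necklace hp
    obtain ⟨w, hw, q, hq, h⟩ := ih hi
    exact ⟨i :: w, by simp [hw], q, hq, by simp [h]⟩

theorem wordHomeo_mem_ring (w : List Link) (hp : p ∈ ring) : wordHomeo w p ∈ ring := by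
  cases w with
  | nil => exact hp
  | cons i w => exact map_mem_ring i (wordHomeo_mem_collar w (ring_subset_collar hp))

theorem word_eq_of_wordHomeo_eq (hw : w.length = w'.length) (hp : p ∈ collar) (hq : q ∈ collar)
    (h : wordHomeo w p = wordHomeo w' q) : w = w' := by
  induction w generalizing w' with
  | nil => simpa using hw.symm
  | cons i w ih =>
    cases w' with
    | nil => simp at hw
    | cons j w' =>
      simp only [wordHomeo_cons] at h
      obtain rfl : i = j := link_eq_of_coord_mem_collar (p := i.map (wordHomeo w p))
        (by simpa using wordHomeo_mem_collar w hp) (by simpa [h] using wordHomeo_mem_collar w' hq)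
      rw [ih (by simpa using hw) (i.homeo.injective h)]

theorem exists_append_of_wordHomeo_eq (hw : w.length ≤ w'.length) (hp : p ∈ collar)
    (hq : q ∈ collar) (h : wordHomeo w p = wordHomeo w' q) :
    ∃ u, w' = w ++ u ∧ p = wordHomeo u q := by
  have hw' : w' = w'.take w.length ++ w'.drop w.length := (List.take_append_drop _ _).symm
  rw [hw', wordHomeo_append] at h
  have hw_take : w = w'.take w.length :=
    word_eq_of_wordHomeo_eq (by simp [hw]) hp (wordHomeo_mem_collar _ hq) h
  rw [← hw_take] at h hw'
  exact ⟨w'.drop w.length, hw', (wordHomeo w).injective h⟩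

theorem mem_necklace_of_wordHomeo_mem (hp : p ∈ collar) (h : wordHomeo w p ∈ necklace) :
    p ∈ necklace := by
  obtain ⟨w', hw', q, hq, h'⟩ := exists_wordHomeo_eq h w.length
  obtain rfl := word_eq_of_wordHomeo_eq hw' (necklace_subset_collar hq) hp h'
  rwa [← (wordHomeo w').injective h']

theorem disjoint_image_shell_necklace (w : List Link) :
    Disjoint (wordHomeo w '' (collar \ ring)) necklace := by
  rw [Set.disjoint_left]
  rintro _ ⟨p, hp, rfl⟩ h
  exact hp.2 (necklace_subset_ring (mem_necklace_of_wordHomeo_mem hp.1 h))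

/-- The fixed point of `Link.mid s`. -/
def midPoint (s : Bool) : E₃ := (0, if s then 9375 / 100 else -(625 / 10), 0)

theorem map_midPoint (s : Bool) : (Link.mid s).map (midPoint s) = midPoint s := by
  cases s <;> norm_num [Link.map, midPoint, Link.sign]

theorem midPoint_mem_necklace (s : Bool) : midPoint s ∈ necklace := by
  refine mem_iInter.2 fun n => ?_
  induction n with
  | zero => cases s <;> norm_num [stage, midPoint, mem_ring]
  | succ n ih => exact ⟨.mid s, by rwa [← map_midPoint s, Link.coord_map]⟩

theorem midPoint_injective : Function.Injective midPoint := by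
  intro s t h
  have h' := congrArg (fun p : E₃ => p.2.1) h
  cases s <;> cases t <;> first | rfl | norm_num [midPoint] at h'

theorem accPt_necklace (hp : p ∈ necklace) : AccPt p (𝓟 necklace) := by
  rw [accPt_iff_nhds]
  intro U hU
  obtain ⟨ε, hε, hU⟩ := Metric.mem_nhds_iff.1 hU
  obtain ⟨n, hn⟩ := exists_forall_dist_wordHomeo_lt hε
  obtain ⟨w, hw, q, hq, rfl⟩ := exists_wordHomeo_eq hp n
  obtain ⟨s, hs⟩ : ∃ s, midPoint s ≠ q := by
    by_contra! h
    exact Bool.noConfusion (midPoint_injective ((h true).trans (h false).symm))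
  have hs' := midPoint_mem_necklace s
  refine ⟨wordHomeo w (midPoint s), ⟨hU ?_, wordHomeo_mem_necklace w hs'⟩,
    fun h => hs ((wordHomeo w).injective h)⟩
  exact hn w hw.ge _ (necklace_subset_collar hs') _ (necklace_subset_collar hq)

theorem exists_image_coord_subset_necklace {S : Set E₃} (hS : IsPreconnected S)
    (hS' : S ⊆ necklace) : ∃ i : Link, i.coord '' S ⊆ necklace := by
  rcases S.eq_empty_or_nonempty with rfl | ⟨p, hp⟩
  · exact ⟨.mid true, by simp⟩
  obtain ⟨i, hi⟩ := exists_coord_mem_necklace (hS' hp)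
  have hopen (j : Link) : IsOpen (j.coord ⁻¹' collar) := isOpen_collar.preimage j.continuous_coord
  suffices h : S ⊆ i.coord ⁻¹' collar from
    ⟨i, image_subset_iff.2 fun q hq => coord_mem_necklace (hS' hq) (h hq)⟩
  refine hS.subset_left_of_subset_union (hopen i)
    (isOpen_biUnion fun j (_ : j ∈ ({i}ᶜ : Set Link)) => hopen j) ?_ ?_
    ⟨p, hp, necklace_subset_collar hi⟩
  · refine Set.disjoint_left.2 fun q hq hq' => ?_
    obtain ⟨j, hj, hqj⟩ := mem_iUnion₂.1 hq'
    exact hj (link_eq_of_coord_mem_collar hqj hq)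
  · intro q hq
    obtain ⟨j, hj⟩ := exists_coord_mem_necklace (hS' hq)
    by_cases hji : j = i
    · exact Or.inl (hji ▸ necklace_subset_collar hj)
    · exact Or.inr (mem_iUnion₂.2 ⟨j, hji, necklace_subset_collar hj⟩)

theorem exists_image_wordHomeo_symm_subset_necklace {S : Set E₃} (hS : IsPreconnected S)
    (hS' : S ⊆ necklace) (n : ℕ) :
    ∃ w : List Link, w.length = n ∧ (wordHomeo w).symm '' S ⊆ necklace := by
  induction n generalizing S with
  | zero => exact ⟨[], rfl, by rintro _ ⟨p, hp, rfl⟩; exact hS' hp⟩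
  | succ n ih =>
    obtain ⟨i, hi⟩ := exists_image_coord_subset_necklace hS hS'
    obtain ⟨w, hw, h⟩ := ih (hS.image _ i.continuous_coord.continuousOn) hi
    refine ⟨i :: w, by simp [hw], ?_⟩
    rintro _ ⟨p, hp, rfl⟩
    exact h (mem_image_of_mem _ (mem_image_of_mem _ hp))

theorem isTotallyDisconnected_necklace : IsTotallyDisconnected necklace := by
  intro S hS' hS p hp q hq
  refine dist_le_zero.1 (le_of_forall_pos_le_add fun ε hε => ?_)
  obtain ⟨n, hn⟩ := exists_forall_dist_wordHomeo_lt hε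
  obtain ⟨w, hw, h⟩ := exists_image_wordHomeo_symm_subset_necklace hS hS' n
  simpa using (hn w hw.ge _ (necklace_subset_collar (h (mem_image_of_mem _ hp))) _
    (necklace_subset_collar (h (mem_image_of_mem _ hq)))).le

/-! ### Dusting the necklace with tame Cantor sets -/

open ENNReal in
theorem eq_zero_of_le_mul_self {a c : ℝ≥0∞} (hc : c < 1) (ha : a ≠ ⊤) (h : a ≤ c * a) : a = 0 := by
  by_contra h0
  exact h.not_gt (by simpa using ENNReal.mul_lt_mul_left h0 ha hc)

open MeasureTheory in
theorem volume_cantorSet : volume cantorSet = 0 := by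
  have hcover : cantorSet ⊆ (fun x => 3 * x) ⁻¹' cantorSet ∪
      (fun x => 3 * x) ⁻¹' ((fun x => x + -2) ⁻¹' cantorSet) := by
    intro x hx
    rw [cantorSet_eq_union_halves] at hx
    refine hx.imp ?_ ?_ <;> rintro ⟨y, hy, rfl⟩ <;> simpa [mul_div_cancel₀] using hy
  refine eq_zero_of_le_mul_self (c := ENNReal.ofReal (2 / 3))
    (by rw [ENNReal.ofReal_lt_one]; norm_num) isCompact_cantorSet.measure_ne_top ?_
  calc volume cantorSet ≤ _ := (measure_mono hcover).trans (measure_union_le _ _)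
    _ = ENNReal.ofReal (1 / 3) * volume cantorSet + ENNReal.ofReal (1 / 3) * volume cantorSet := by
      rw [Real.volume_preimage_mul_left three_ne_zero, Real.volume_preimage_mul_left three_ne_zero,
        measure_preimage_add_right, abs_of_pos (by norm_num), one_div]
    _ = ENNReal.ofReal (2 / 3) * volume cantorSet := by
      rw [← add_mul, ← ENNReal.ofReal_add (by norm_num) (by norm_num)]
      norm_num

theorem isTotallyDisconnected_cantorSet : IsTotallyDisconnected cantorSet :=
  totallyDisconnectedSpace_subtype_iff.1 cantorSetHomeomorphNatToBool.symm.totallyDisconnectedSpace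

theorem preperfect_cantorSet : Preperfect cantorSet := by
  intro x hx
  set e := cantorSetHomeomorphNatToBool
  let f : ℕ → Bool := e ⟨x, hx⟩
  let u : ℕ → cantorSet := fun n => e.symm (Function.update f n (!f n))
  have hu : Tendsto u atTop (𝓝 ⟨x, hx⟩) := by
    rw [← e.symm_apply_apply ⟨x, hx⟩]
    refine (e.symm.continuous.tendsto _).comp (tendsto_pi_nhds.2 fun k => ?_)
    refine tendsto_const_nhds.congr' ((eventually_gt_atTop k).mono fun n hn => ?_)
    simp [Function.update_of_ne hn.ne, f]
  have hux (n : ℕ) : (u n : ℝ) ≠ x := fun h => by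
    have h' : Function.update f n (!f n) = f := by
      simp only [f, ← e.symm_apply_eq]
      exact Subtype.ext h
    simpa using congrFun h' n
  exact accPt_iff_frequently.2 (((continuous_subtype_val.tendsto _).comp hu).frequently
    (Frequently.of_forall fun n => ⟨hux n, (u n).2⟩))

/-- A parametrization of the straight line carrying `dust`. -/
def dustPoint (τ : ℝ) : E₃ := (τ, 75, 50)

/-- A tame Cantor set inside `ring`, away from all eight links. -/
def dust : Set E₃ := dustPoint '' cantorSet

/-- An open box around `dust` inside `ring` that avoids the collars of all eight links. -/
def dustBox : Set E₃ := Ioo (-2) 2 ×ˢ Ioo 74 76 ×ˢ Ioo 49 51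

theorem continuous_dustPoint : Continuous dustPoint := by
  unfold dustPoint
  fun_prop

theorem dustPoint_injective : Function.Injective dustPoint :=
  fun _ _ h => congrArg Prod.fst h

theorem isCompact_dust : IsCompact dust := isCompact_cantorSet.image continuous_dustPoint

theorem isTotallyDisconnected_dust : IsTotallyDisconnected dust :=
  (IsEmbedding.of_leftInverse (g := dustPoint) (f := Prod.fst) (fun _ => rfl) continuous_fst
    continuous_dustPoint).isTotallyDisconnected_image.2 isTotallyDisconnected_cantorSet

theorem accPt_dust {p : E₃} (hp : p ∈ dust) : AccPt p (𝓟 dust) := by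
  obtain ⟨τ, hτ, rfl⟩ := hp
  simpa [dust] using (preperfect_cantorSet τ hτ).map continuous_dustPoint.continuousAt
    dustPoint_injective

theorem isOpen_dustBox : IsOpen dustBox := isOpen_Ioo.prod (isOpen_Ioo.prod isOpen_Ioo)

theorem dust_subset_dustBox : dust ⊆ dustBox := by
  rintro _ ⟨τ, hτ, rfl⟩
  have hτ' := cantorSet_subset_unitInterval hτ
  exact ⟨⟨(by norm_num : (-2 : ℝ) < 0).trans_le hτ'.1, hτ'.2.trans_lt one_lt_two⟩,
    by norm_num [dustPoint]⟩

theorem dustBox_subset_ring : dustBox ⊆ ring := by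
  rintro ⟨x, y, z⟩ ⟨hx, hy, hz⟩
  simp only [mem_Ioo] at hx hy hz
  rw [mem_ring]
  grind

theorem dustBox_subset_collar : dustBox ⊆ collar := dustBox_subset_ring.trans ring_subset_collar

variable {p q : E₃} {w w' : List Link} {S : Set (List Link)}

theorem coord_notMem_collar (hp : p ∈ dustBox) (i : Link) : i.coord p ∉ collar := by
  obtain ⟨x, y, z⟩ := p
  obtain ⟨hx, hy, hz⟩ := hp
  simp only [mem_Ioo] at hx hy hz
  revert i
  simp only [Link.forall_iff, Link.coord, mem_collar]
  grind

theorem eq_nil_of_wordHomeo_mem_dustBox (hq : q ∈ collar) (h : wordHomeo w q ∈ dustBox) :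
    w = [] := by
  cases w with
  | nil => rfl
  | cons i w => exact (coord_notMem_collar h i (by simpa using wordHomeo_mem_collar w hq)).elim

theorem exists_append_of_mem_dustBox (hp : p ∈ dustBox) (hq : q ∈ collar)
    (h : wordHomeo w p = wordHomeo w' q) : ∃ u, w = w' ++ u ∧ q = wordHomeo u p := by
  have hp' := dustBox_subset_collar hp
  rcases le_total w'.length w.length with hle | hle
  · exact exists_append_of_wordHomeo_eq hle hq hp' h.symm
  · obtain ⟨u, rfl, rfl⟩ := exists_append_of_wordHomeo_eq hle hp' hq h
    obtain rfl := eq_nil_of_wordHomeo_mem_dustBox hq hp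
    exact ⟨[], by simp, rfl⟩

theorem word_eq_of_mem_dustBox (hp : p ∈ dustBox) (hq : q ∈ dustBox)
    (h : wordHomeo w p = wordHomeo w' q) : w = w' := by
  obtain ⟨u, rfl, rfl⟩ := exists_append_of_mem_dustBox hp (dustBox_subset_collar hq) h
  simp [eq_nil_of_wordHomeo_mem_dustBox (dustBox_subset_collar hp) hq]

theorem wordHomeo_notMem_necklace (hp : p ∈ dustBox) : wordHomeo w p ∉ necklace := by
  intro h
  obtain ⟨i, hi⟩ := exists_coord_mem_necklace
    (mem_necklace_of_wordHomeo_mem (dustBox_subset_collar hp) h)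
  exact coord_notMem_collar hp i (necklace_subset_collar hi)

/-- The copies of `dust` in the cells of the necklace addressed by the words in `S`. -/
def dustUnion (S : Set (List Link)) : Set E₃ := ⋃ w ∈ S, wordHomeo w '' dust

/-- Antoine's necklace together with the tame Cantor sets indexed by `S`. -/
def dustedNecklace (S : Set (List Link)) : Set E₃ := necklace ∪ dustUnion S

theorem mem_dustUnion : p ∈ dustUnion S ↔ ∃ w ∈ S, ∃ q ∈ dust, wordHomeo w q = p := by
  simp [dustUnion]

theorem dustUnion_subset_ring : dustUnion S ⊆ ring :=
  iUnion₂_subset fun w _ => image_subset_iff.2 fun _ hp =>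
    wordHomeo_mem_ring w (dustBox_subset_ring (dust_subset_dustBox hp))

theorem disjoint_dustUnion_necklace : Disjoint (dustUnion S) necklace := by
  simp only [dustUnion, disjoint_iUnion_left, disjoint_image_left]
  exact fun w _ => Set.disjoint_left.2 fun p hp =>
    wordHomeo_notMem_necklace (dust_subset_dustBox hp)

theorem wordHomeo_mem_stage (w : List Link) (hp : p ∈ ring) : wordHomeo w p ∈ stage w.length := by
  induction w with
  | nil => exact hp
  | cons i w ih => exact ⟨i, by simpa using ih⟩

theorem isClosed_dustUnion_of_finite (hS : S.Finite) : IsClosed (dustUnion S) :=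
  hS.isClosed_biUnion fun w _ => (isCompact_dust.image (wordHomeo w).continuous).isClosed

theorem finite_setOf_length_lt (n : ℕ) : {w ∈ S | w.length < n}.Finite :=
  (List.finite_length_lt Link n).subset fun _ => And.right

theorem dustedNecklace_eq_iInter :
    dustedNecklace S = ⋂ n, stage n ∪ dustUnion {w ∈ S | w.length < n} := by
  refine Subset.antisymm (union_subset (iInter_mono fun n => subset_union_left) ?_) fun p hp => ?_
  · refine fun p hp => mem_iInter.2 fun n => ?_
    obtain ⟨w, hw, q, hq, rfl⟩ := mem_dustUnion.1 hp
    refine (lt_or_ge w.length n).symm.imp (fun hn => ?_)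
      fun hn => mem_dustUnion.2 ⟨w, ⟨hw, hn⟩, q, hq, rfl⟩
    exact antitone_nat_of_succ_le stage_succ_subset hn
      (wordHomeo_mem_stage w (dustBox_subset_ring (dust_subset_dustBox hq)))
  · by_contra h
    rw [dustedNecklace, mem_union, not_or, necklace, mem_iInter, not_forall] at h
    obtain ⟨⟨n, hn⟩, hdust⟩ := h
    obtain ⟨w, hw, hq⟩ := mem_dustUnion.1 ((mem_iInter.1 hp n).resolve_left hn)
    exact hdust (mem_dustUnion.2 ⟨w, hw.1, hq⟩)

theorem isCompact_dustedNecklace : IsCompact (dustedNecklace S) := by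
  refine isCompact_ring.of_isClosed_subset ?_
    (union_subset necklace_subset_ring dustUnion_subset_ring)
  rw [dustedNecklace_eq_iInter]
  exact isClosed_iInter fun n =>
    (isClosed_stage n).union (isClosed_dustUnion_of_finite (finite_setOf_length_lt n))

theorem preperfect_dustedNecklace : Preperfect (dustedNecklace S) := by
  rintro p (hp | hp)
  · exact (accPt_necklace hp).mono (principal_mono.2 subset_union_left)
  · obtain ⟨w, hw, q, hq, rfl⟩ := mem_dustUnion.1 hp
    have h := (accPt_dust hq).map (wordHomeo w).continuous.continuousAt (wordHomeo w).injective
    rw [map_principal] at h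
    exact h.mono (principal_mono.2 ((subset_biUnion_of_mem (u := fun w => wordHomeo w '' dust)
      hw).trans subset_union_right))

theorem dustedNecklace_inter_image_dustBox_subset (w : List Link) :
    dustedNecklace S ∩ wordHomeo w '' dustBox ⊆ wordHomeo w '' dust := by
  rintro _ ⟨hp | hp, q, hq, rfl⟩
  · exact (wordHomeo_notMem_necklace hq hp).elim
  · obtain ⟨w', -, q', hq', h⟩ := mem_dustUnion.1 hp
    obtain rfl := word_eq_of_mem_dustBox (dust_subset_dustBox hq') hq h
    exact h ▸ mem_image_of_mem _ hq'

theorem isTotallyDisconnected_dustedNecklace : IsTotallyDisconnected (dustedNecklace S) := by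
  intro A hA hA'
  by_cases h : A ⊆ necklace
  · exact isTotallyDisconnected_necklace A h hA'
  obtain ⟨p, hpA, hp⟩ := not_subset.1 h
  obtain ⟨w, -, q, hq, rfl⟩ := mem_dustUnion.1 ((hA hpA).resolve_left hp)
  have hpiece := dustedNecklace_inter_image_dustBox_subset (S := S) w
  have hsub : A ⊆ wordHomeo w '' dustBox := by
    refine ((isPreconnected_iff_subset_of_disjoint.1 hA') _ _
      ((wordHomeo w).isOpenMap _ isOpen_dustBox)
      (isCompact_dust.image (wordHomeo w).continuous).isClosed.isOpen_compl ?_ ?_).resolve_right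
        fun h => h hpA (mem_image_of_mem _ hq)
    · exact fun a _ => or_iff_not_imp_right.2 fun ha =>
        image_mono dust_subset_dustBox (notMem_compl_iff.1 ha)
    · exact eq_empty_of_forall_notMem fun a ⟨ha, hab, hac⟩ => hac (hpiece ⟨hA ha, hab⟩)
  exact (wordHomeo w).isEmbedding.isTotallyDisconnected_image.2 isTotallyDisconnected_dust A
    (fun a ha => hpiece ⟨hA ha, hsub ha⟩) hA'

theorem image_shell_subset_compl_dustedNecklace (w : List Link) :
    wordHomeo w '' (collar \ ring) ⊆ (dustedNecklace S)ᶜ := by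
  rintro _ hp (h | h)
  · exact Set.disjoint_left.1 (disjoint_image_shell_necklace w) hp h
  · obtain ⟨p, hp, rfl⟩ := hp
    obtain ⟨w', -, q, hq, h⟩ := mem_dustUnion.1 h
    have hq := dust_subset_dustBox hq
    obtain ⟨u, -, rfl⟩ := exists_append_of_mem_dustBox hq hp.1 h
    exact hp.2 (wordHomeo_mem_ring u (dustBox_subset_ring hq))

/-- The addresses of the cells of the necklace that meet `F`. -/
def wordsMeeting (F : Set E₃) : Set (List Link) := {w | ∃ p ∈ ring, wordHomeo w p ∈ F}

theorem necklace_inter_closure_dustUnion_wordsMeeting_subset {F : Set E₃} (hF : IsClosed F) :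
    necklace ∩ closure (dustUnion (wordsMeeting F)) ⊆ F := by
  rintro p ⟨hp, hpc⟩
  rw [← hF.closure_eq, Metric.mem_closure_iff]
  intro ε hε
  obtain ⟨n, hn⟩ := exists_forall_dist_wordHomeo_lt hε
  obtain ⟨w, hw, q, hq, rfl⟩ := exists_wordHomeo_eq hp n
  have hopen : IsOpen (wordHomeo w '' collar ∩ (dustUnion {u ∈ univ | u.length < n})ᶜ) :=
    ((wordHomeo w).isOpenMap _ isOpen_collar).inter
      (isClosed_dustUnion_of_finite (finite_setOf_length_lt n)).isOpen_compl
  obtain ⟨_, ⟨⟨a, ha, rfl⟩, hshort⟩, hdust⟩ := mem_closure_iff.1 hpc _ hopen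
    ⟨mem_image_of_mem _ (necklace_subset_collar hq),
      fun h => Set.disjoint_left.1 disjoint_dustUnion_necklace h hp⟩
  obtain ⟨u, ⟨c, hc, hcF⟩, d, hd, h⟩ := mem_dustUnion.1 hdust
  have hlen : w.length ≤ u.length := by
    by_contra! hlt
    exact hshort (mem_dustUnion.2 ⟨u, ⟨trivial, hw ▸ hlt⟩, d, hd, h⟩)
  obtain ⟨v, rfl, -⟩ := exists_append_of_wordHomeo_eq hlen ha
    (dustBox_subset_collar (dust_subset_dustBox hd)) h.symm
  rw [wordHomeo_append] at hcF
  exact ⟨_, hcF, hn w hw.ge _ (necklace_subset_collar hq) _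
    (ring_subset_collar (wordHomeo_mem_ring v hc))⟩

theorem necklace_inter_closure_dustUnion_wordsMeeting {F : Set E₃} (hF : IsClosed F)
    (hF' : F ⊆ necklace) : necklace ∩ closure (dustUnion (wordsMeeting F)) = F := by
  refine (necklace_inter_closure_dustUnion_wordsMeeting_subset hF).antisymm fun p hp =>
    ⟨hF' hp, Metric.mem_closure_iff.2 fun ε hε => ?_⟩
  obtain ⟨n, hn⟩ := exists_forall_dist_wordHomeo_lt hε
  obtain ⟨w, hw, q, hq, rfl⟩ := exists_wordHomeo_eq (hF' hp) n
  have hdust : dustPoint 0 ∈ dust := mem_image_of_mem _ zero_mem_cantorSet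
  exact ⟨wordHomeo w (dustPoint 0),
    mem_dustUnion.2 ⟨w, ⟨q, necklace_subset_ring hq, hp⟩, _, hdust, rfl⟩,
    hn w hw.ge _ (necklace_subset_collar hq) _ (dustBox_subset_collar (dust_subset_dustBox hdust))⟩

/-! ### General position -/

/-- The inclusion of the complement of `K ∪ D` into the complement of `K`. -/
def complInclusion {X : Type*} [TopologicalSpace X] (K D : Set X) : C(↥(K ∪ D)ᶜ, ↥Kᶜ) :=
  ⟨Set.inclusion (compl_subset_compl.2 subset_union_left), continuous_inclusion _⟩

@[simp]
theorem coe_complInclusion {X : Type*} [TopologicalSpace X] {K D : Set X} (x : ↥(K ∪ D)ᶜ) :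
    (complInclusion K D x : X) = x := rfl

section GeneralPosition

open unitInterval

variable {E : Type*} [NormedAddCommGroup E] [NormedSpace ℝ E] {K D : Set E}

/-- Differentiable surfaces can be translated off `D` by arbitrarily small vectors. This is the
form of "`D` has dimension zero" needed to push homotopies of paths off `D`. -/
def IsAvoidableBySurfaces (D : Set E) : Prop :=
  ∀ g : ℝ × ℝ → E, Differentiable ℝ g → ∀ ε > 0, ∃ v : E, ‖v‖ < ε ∧ ∀ x, g x + v ∉ D

theorem IsAvoidableBySurfaces.exists_dist_lt (hD : IsAvoidableBySurfaces D) (H : C(I × I, E))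
    {ε : ℝ} (hε : 0 < ε) : ∃ G : C(I × I, E), (∀ q, G q ∉ D) ∧ ∀ q, dist (G q) (H q) < ε := by
  let square : ℝ × ℝ → I × I := Prod.map (projIcc 0 1 zero_le_one) (projIcc 0 1 zero_le_one)
  have hsquare : Continuous square := continuous_projIcc.prodMap continuous_projIcc
  obtain ⟨g, hg, hgH, -⟩ := (H.continuous.comp hsquare).exists_contDiff_approx 1
    (ε := fun _ => ε / 2) continuous_const fun _ => half_pos hε
  obtain ⟨v, hv, hgD⟩ := hD g (hg.differentiable one_ne_zero) (ε / 2) (half_pos hε)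
  refine ⟨⟨fun q => g (q.1, q.2) + v, by have := hg.continuous; fun_prop⟩, fun q => hgD _,
    fun q => ?_⟩
  have hq : dist (g (q.1, q.2)) (H q) < ε / 2 := by simpa [square] using hgH (q.1, q.2)
  calc dist (g (q.1, q.2) + v) (H q)
      ≤ dist (g (q.1, q.2) + v) (g (q.1, q.2)) + dist (g (q.1, q.2)) (H q) := dist_triangle ..
    _ < ε / 2 + ε / 2 := by gcongr; simpa using hv
    _ = ε := add_halves ε

theorem exists_forall_dist_lt_imp_mem {X Q : Type*} [PseudoMetricSpace X] [TopologicalSpace Q]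
    {f : Q → X} {A : Set Q} {U : Set X} (hA : IsCompact A) (hf : ContinuousOn f A) (hU : IsOpen U)
    (h : ∀ q ∈ A, f q ∈ U) : ∃ δ > 0, ∀ q ∈ A, ∀ x, dist x (f q) < δ → x ∈ U := by
  obtain ⟨δ, hδ, hδU⟩ := (hA.image_of_continuousOn hf).exists_thickening_subset_open hU
    (image_subset_iff.2 h)
  exact ⟨δ, hδ, fun q hq x hx => hδU (mem_thickening_iff.2 ⟨_, mem_image_of_mem f hq, hx⟩)⟩

/-- The approximation is blended into `H` near `A`, where both stay far from `K ∪ D`. -/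
theorem IsAvoidableBySurfaces.exists_eqOn (hD : IsAvoidableBySurfaces D) (hK : IsClosed K)
    (hKD : IsClosed (K ∪ D)) {H : C(I × I, E)} (hH : ∀ q, H q ∉ K) {A : Set (I × I)}
    (hA : IsClosed A) (hHA : ∀ q ∈ A, H q ∉ K ∪ D) {ε : ℝ} (hε : 0 < ε) :
    ∃ H' : C(I × I, E), (∀ q, H' q ∉ K ∪ D) ∧ EqOn H' H A ∧ ∀ q, dist (H' q) (H q) < ε := by
  obtain ⟨δ₁, hδ₁, hHK⟩ := exists_forall_dist_lt_imp_mem isCompact_univ H.continuous.continuousOn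
    hK.isOpen_compl fun q _ => hH q
  obtain ⟨δ₂, hδ₂, hHKD⟩ := exists_forall_dist_lt_imp_mem hA.isCompact H.continuous.continuousOn
    hKD.isOpen_compl hHA
  set U : Set (I × I) := ⋃ a ∈ A, {q | dist (H q) (H a) < δ₂ / 2}
  have hU : IsOpen U := isOpen_biUnion fun a _ => isOpen_lt (by fun_prop) continuous_const
  have hAU : A ⊆ U := fun a ha => mem_iUnion₂.2 ⟨a, ha, by simpa using hδ₂⟩
  obtain ⟨χ, hχA, hχU, hχ⟩ := exists_continuous_zero_one_of_isClosed hA hU.isClosed_compl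
    (disjoint_compl_right.mono_left hAU)
  obtain ⟨G, hGD, hGH⟩ := hD.exists_dist_lt H (lt_min hε (lt_min hδ₁ (half_pos hδ₂)))
  have hdist (q : I × I) :
      dist (H q + χ q • (G q - H q)) (H q) < min ε (min δ₁ (δ₂ / 2)) := by
    refine lt_of_le_of_lt ?_ (hGH q)
    rw [dist_self_add_left, norm_smul, Real.norm_of_nonneg (hχ q).1, dist_eq_norm]
    exact mul_le_of_le_one_left (norm_nonneg _) (hχ q).2
  simp only [lt_min_iff] at hdist
  refine ⟨⟨fun q => H q + χ q • (G q - H q), by fun_prop⟩, fun q => ?_, fun q hq => ?_,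
    fun q => (hdist q).1⟩
  · by_cases hq : q ∈ U
    · obtain ⟨a, ha, hqa⟩ := mem_iUnion₂.1 hq
      refine hHKD a ha _ ((dist_triangle _ (H q) _).trans_lt ?_)
      exact (add_lt_add (hdist q).2.2 hqa).trans_eq (add_halves δ₂)
    · rintro (h | h)
      · exact hHK q trivial _ (hdist q).2.1 h
      · exact hGD q (by simpa [hχU hq] using h)
  · simp [hχA hq]

theorem homotopic_of_square {X : Type*} [TopologicalSpace X] {S : Set X} {a b : S} {γ γ' : Path a b}
    (H : C(I × I, X)) (hS : ∀ q, H q ∈ S) (h0 : ∀ t, H (0, t) = γ t) (h1 : ∀ t, H (1, t) = γ' t)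
    (ha : ∀ s, H (s, 0) = a) (hb : ∀ s, H (s, 1) = b) : γ.Homotopic γ' :=
  ⟨{ toFun := fun q => ⟨H q, hS q⟩
     continuous_toFun := by fun_prop
     map_zero_left := fun t => Subtype.ext (h0 t)
     map_one_left := fun t => Subtype.ext (h1 t)
     prop' := by
      rintro s t (rfl | rfl)
      · exact Subtype.ext (by simp [ha])
      · exact Subtype.ext (by simp [hb]) }⟩

theorem homotopic_of_segment_subset {S : Set E} {a b : S} {γ γ' : Path a b}
    (h : ∀ t, segment ℝ (γ t : E) (γ' t) ⊆ S) : γ.Homotopic γ' := by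
  refine homotopic_of_square ⟨fun q => AffineMap.lineMap (γ q.2 : E) (γ' q.2 : E) (q.1 : ℝ), ?_⟩
    (fun q => h q.2 ?_) ?_ ?_ ?_ ?_
  · simp only [AffineMap.lineMap_apply_module]
    fun_prop
  · rw [segment_eq_image_lineMap]
    exact mem_image_of_mem _ q.1.2
  all_goals simp

theorem IsAvoidableBySurfaces.homotopic_of_map (hD : IsAvoidableBySurfaces D) (hK : IsClosed K)
    (hKD : IsClosed (K ∪ D)) {a b : ↥(K ∪ D)ᶜ} {γ γ' : Path a b}
    (h : (γ.map (complInclusion K D).continuous).Homotopic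
      (γ'.map (complInclusion K D).continuous)) : γ.Homotopic γ' := by
  obtain ⟨F⟩ := h
  let A : Set (I × I) := {q | q.1 = 0 ∨ q.1 = 1 ∨ q.2 = 0 ∨ q.2 = 1}
  have hA : IsClosed A :=
    (isClosed_eq (by fun_prop) (by fun_prop)).union <|
      (isClosed_eq (by fun_prop) (by fun_prop)).union <|
        (isClosed_eq (by fun_prop) (by fun_prop)).union (isClosed_eq (by fun_prop) (by fun_prop))
  obtain ⟨H, hH, hHA, -⟩ := hD.exists_eqOn hK hKD (H := ⟨fun q => (F q : E), by fun_prop⟩)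
    (fun q => (F q).2) hA (by
      rintro ⟨s, t⟩ (h | h | h | h) <;> obtain rfl := h
      · simpa using (γ t).2
      · simpa using (γ' t).2
      · simpa using a.2
      · simpa using b.2) one_pos
  refine homotopic_of_square H hH ?_ ?_ ?_ ?_ <;> intro t <;> rw [hHA (by simp [A])] <;> simp

theorem IsAvoidableBySurfaces.homotopic_of_convex (hD : IsAvoidableBySurfaces D) (hK : IsClosed K)
    (hKD : IsClosed (K ∪ D)) {U : Set E} (hU : Convex ℝ U) (hUK : U ⊆ Kᶜ) {a b : ↥(K ∪ D)ᶜ}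
    {γ γ' : Path a b} (h : ∀ t, (γ t : E) ∈ U) (h' : ∀ t, (γ' t : E) ∈ U) : γ.Homotopic γ' :=
  hD.homotopic_of_map hK hKD <| homotopic_of_segment_subset fun t =>
    (hU.segment_subset (h t) (h' t)).trans hUK

theorem IsAvoidableBySurfaces.exists_homotopic_map (hD : IsAvoidableBySurfaces D)
    (hK : IsClosed K) (hKD : IsClosed (K ∪ D)) {a b : ↥(K ∪ D)ᶜ}
    (δ : Path (complInclusion K D a) (complInclusion K D b)) :
    ∃ γ : Path a b, (γ.map (complInclusion K D).continuous).Homotopic δ := by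
  let A : Set (I × I) := {q | q.2 = 0 ∨ q.2 = 1}
  have hA : IsClosed A :=
    (isClosed_eq (by fun_prop) (by fun_prop)).union (isClosed_eq (by fun_prop) (by fun_prop))
  obtain ⟨ε, hε, hδ⟩ := exists_forall_dist_lt_imp_mem (f := fun t => (δ t : E)) isCompact_univ
    (by fun_prop) hK.isOpen_compl fun t _ => (δ t).2
  obtain ⟨H, hH, hHA, hHδ⟩ := hD.exists_eqOn hK hKD (H := ⟨fun q => (δ q.2 : E), by fun_prop⟩)
    (fun q => (δ q.2).2) hA (by
      rintro ⟨s, t⟩ (h | h) <;> obtain rfl := h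
      · simpa using a.2
      · simpa using b.2) hε
  refine ⟨⟨⟨fun t => ⟨H (0, t), hH _⟩, by fun_prop⟩, Subtype.ext ?_, Subtype.ext ?_⟩,
    homotopic_of_segment_subset fun t => ?_⟩
  · simpa using hHA (x := (0, 0)) (by simp [A])
  · simpa using hHA (x := (0, 1)) (by simp [A])
  · exact ((convex_ball _ ε).segment_subset (hHδ (0, t)) (mem_ball_self hε)).trans
      fun x hx => hδ t trivial x hx

theorem IsAvoidableBySurfaces.bijective_fundamentalGroup_map (hD : IsAvoidableBySurfaces D)
    (hK : IsClosed K) (hKD : IsClosed (K ∪ D)) (x : ↥(K ∪ D)ᶜ) :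
    Function.Bijective (FundamentalGroup.map (complInclusion K D) x) := by
  refine ⟨fun p q h => ?_, fun d => ?_⟩
  · induction p using Path.Homotopic.Quotient.ind with | mk p
    induction q using Path.Homotopic.Quotient.ind with | mk q
    exact Quotient.sound (hD.homotopic_of_map hK hKD (Quotient.exact h))
  · induction d using Path.Homotopic.Quotient.ind with | mk d
    obtain ⟨γ, hγ⟩ := hD.exists_homotopic_map hK hKD d
    exact ⟨Path.Homotopic.Quotient.mk γ, Quotient.sound hγ⟩

end GeneralPosition

theorem Link.differentiable_map (i : Link) : Differentiable ℝ i.map := by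
  rcases i with s | s | ⟨s, t⟩ <;> unfold Link.map <;> fun_prop

theorem differentiable_wordHomeo (w : List Link) : Differentiable ℝ (wordHomeo w) := by
  induction w with
  | nil => exact differentiable_id
  | cons i w ih => exact i.differentiable_map.comp ih

theorem differentiable_dustPoint : Differentiable ℝ dustPoint := by
  unfold dustPoint
  fun_prop

open MeasureTheory in
instance : (volume : Measure (ℝ × ℝ)).IsAddHaarMeasure :=
  inferInstanceAs ((volume : Measure ℝ).prod (volume : Measure ℝ)).IsAddHaarMeasure

open MeasureTheory in
instance : (volume : Measure E₃).IsAddHaarMeasure :=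
  inferInstanceAs ((volume : Measure ℝ).prod (volume : Measure (ℝ × ℝ))).IsAddHaarMeasure

open MeasureTheory in
/-- The translations of a surface `g` that hit a copy of the dust are the values of
`(τ, x) ↦ wordHomeo w (dustPoint τ) - g x` on a null set. -/
theorem isAvoidableBySurfaces_dustUnion (S : Set (List Link)) :
    IsAvoidableBySurfaces (dustUnion S) := by
  intro g hg ε hε
  let bad (w : List Link) : Set E₃ :=
    (fun p : E₃ => wordHomeo w (dustPoint p.1) - g p.2) '' (cantorSet ×ˢ univ)
  have hbad (w : List Link) : volume (bad w) = 0 := by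
    refine addHaar_image_eq_zero_of_differentiableOn_of_addHaar_eq_zero volume ?_ ?_
    · have hw := (differentiable_wordHomeo w).comp differentiable_dustPoint
      exact ((hw.comp differentiable_fst).sub (hg.comp differentiable_snd)).differentiableOn
    · rw [Measure.volume_eq_prod, Measure.prod_prod, volume_cantorSet, zero_mul]
  have hdense : Dense {v | ∀ w, v ∉ bad w} :=
    Measure.dense_of_ae (ae_all_iff.2 fun w => measure_eq_zero_iff_ae_notMem.1 (hbad w))
  obtain ⟨v, hv, hvε⟩ := hdense.exists_mem_open isOpen_ball (nonempty_ball.2 hε)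
  refine ⟨v, mem_ball_zero_iff.1 hvε, fun x hx => ?_⟩
  obtain ⟨w, -, _, ⟨τ, hτ, rfl⟩, h⟩ := mem_dustUnion.1 hx
  exact hv w ⟨(τ, x), ⟨hτ, trivial⟩, by simp [h]⟩

/-! ### Complements of sets with null shadows -/

/-- The coordinate planes of `E₃`. -/
inductive Plane
  | xy
  | xz
  | yz

/-- The projection of `E₃` onto a coordinate plane. -/
def Plane.proj : Plane → E₃ →L[ℝ] ℝ × ℝ
  | xy => (ContinuousLinearMap.id ℝ ℝ).prodMap (.fst ℝ ℝ ℝ)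
  | xz => (ContinuousLinearMap.id ℝ ℝ).prodMap (.snd ℝ ℝ ℝ)
  | yz => .snd ℝ ℝ (ℝ × ℝ)

section NullShadows

open MeasureTheory

/-- The projections of `K` onto the three coordinate planes have area zero, so that almost every
line parallel to a coordinate axis misses `K`. -/
def HasNullShadows (K : Set E₃) : Prop := ∀ k : Plane, volume (k.proj '' K) = 0

variable {K U : Set E₃} {a b : E₃}

theorem HasNullShadows.ae_ae_notMem (hK : HasNullShadows K) (k : Plane) :
    ∀ᵐ x : ℝ, ∀ᵐ y : ℝ, (x, y) ∉ k.proj '' K :=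
  Measure.ae_ae_of_ae_prod (measure_eq_zero_iff_ae_notMem.1 (hK k))

theorem exists_mem_ball_of_ae {P : ℝ → Prop} (h : ∀ᵐ x, P x) (a : ℝ) {r : ℝ} (hr : 0 < r) :
    ∃ x ∈ ball a r, P x :=
  ((Measure.dense_of_ae h).exists_mem_open isOpen_ball ⟨a, mem_ball_self hr⟩).imp
    fun _ hx => hx.symm

theorem joinedIn_diff_of_proj_eq (hU : Convex ℝ U) (ha : a ∈ U) (hb : b ∈ U) (k : Plane)
    (hk : k.proj a = k.proj b) (haK : k.proj a ∉ k.proj '' K) : JoinedIn (U \ K) a b := by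
  refine .of_segment_subset fun p hp => ⟨hU.segment_subset ha hb hp, fun hpK => haK ⟨p, hpK, ?_⟩⟩
  have hmem : k.proj p ∈ segment ℝ (k.proj a) (k.proj b) :=
    (image_segment ℝ (k.proj : E₃ →ₗ[ℝ] ℝ × ℝ).toAffineMap a b).subset (mem_image_of_mem _ hp)
  simpa [hk] using hmem

theorem HasNullShadows.joinedIn_diff (hK : HasNullShadows K) (hKc : IsClosed K) {A B C : Set ℝ}
    (hA : IsOpen A) (hB : IsOpen B) (hC : IsOpen C) (hA' : Convex ℝ A) (hB' : Convex ℝ B)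
    (hC' : Convex ℝ C) (ha : a ∈ (A ×ˢ B ×ˢ C) \ K) (hb : b ∈ (A ×ˢ B ×ˢ C) \ K) :
    JoinedIn ((A ×ˢ B ×ˢ C) \ K) a b := by
  set U : Set E₃ := A ×ˢ B ×ˢ C
  have hUc : Convex ℝ U := hA'.prod (hB'.prod hC')
  have hUK : IsOpen (U \ K) := (hA.prod (hB.prod hC)).sdiff hKc
  obtain ⟨r, hr, hra⟩ := Metric.isOpen_iff.1 hUK a ha
  obtain ⟨r', hr', hrb⟩ := Metric.isOpen_iff.1 hUK b hb
  obtain ⟨x, hx, hxz, hxy⟩ :=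
    exists_mem_ball_of_ae ((hK.ae_ae_notMem .xz).and (hK.ae_ae_notMem .xy)) b.1 hr'
  obtain ⟨y, hy, hyz⟩ := exists_mem_ball_of_ae (hK.ae_ae_notMem .yz) a.2.1 hr
  obtain ⟨z, hz, hxz, hyz⟩ := exists_mem_ball_of_ae (hxz.and hyz) a.2.2 hr
  obtain ⟨y', hy', hxy⟩ := exists_mem_ball_of_ae hxy b.2.1 hr'
  have ha' : ((a.1, y, z) : E₃) ∈ ball a r := by
    rw [← ball_prod_same, ← ball_prod_same]
    exact ⟨mem_ball_self hr, hy, hz⟩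
  have hb' : ((x, y', b.2.2) : E₃) ∈ ball b r' := by
    rw [← ball_prod_same, ← ball_prod_same]
    exact ⟨hx, hy', mem_ball_self hr'⟩
  have hU₁ := (hra ha').1
  have hU₄ := (hrb hb').1
  have hU₂ : ((x, y, z) : E₃) ∈ U := ⟨hU₄.1, hU₁.2⟩
  have hU₃ : ((x, y', z) : E₃) ∈ U := ⟨hU₄.1, hU₄.2.1, hU₁.2.2⟩
  have h₁ : JoinedIn (U \ K) a (a.1, y, z) := .of_segment_subset <|
    ((convex_ball a r).segment_subset (mem_ball_self hr) ha').trans hra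
  have h₂ : JoinedIn (U \ K) (a.1, y, z) (x, y, z) :=
    joinedIn_diff_of_proj_eq hUc hU₁ hU₂ .yz rfl hyz
  have h₃ : JoinedIn (U \ K) (x, y, z) (x, y', z) :=
    joinedIn_diff_of_proj_eq hUc hU₂ hU₃ .xz rfl hxz
  have h₄ : JoinedIn (U \ K) (x, y', z) (x, y', b.2.2) :=
    joinedIn_diff_of_proj_eq hUc hU₃ hU₄ .xy rfl hxy
  have h₅ : JoinedIn (U \ K) (x, y', b.2.2) b := .of_segment_subset <|
    ((convex_ball b r').segment_subset hb' (mem_ball_self hr')).trans hrb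
  exact h₁.trans (h₂.trans (h₃.trans (h₄.trans h₅)))

theorem HasNullShadows.isPreconnected_ball_diff (hK : HasNullShadows K) (hKc : IsClosed K) (p : E₃)
    (r : ℝ) : IsPreconnected (ball p r \ K) := by
  rcases (ball p r \ K).eq_empty_or_nonempty with h | ⟨a, ha⟩
  · exact h ▸ isPreconnected_empty
  · rw [← ball_prod_same, ← ball_prod_same] at ha ⊢
    exact IsConnected.isPreconnected <| IsPathConnected.isConnected ⟨a, ha, fun {b} hb =>
      hK.joinedIn_diff hKc isOpen_ball isOpen_ball isOpen_ball (convex_ball _ _) (convex_ball _ _)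
        (convex_ball _ _) ha hb⟩

theorem HasNullShadows.isPathConnected_compl (hK : HasNullShadows K) (hKc : IsClosed K) :
    IsPathConnected Kᶜ := by
  obtain ⟨x, hx⟩ := (hK.ae_ae_notMem .xy).exists
  obtain ⟨y, hy⟩ := hx.exists
  refine ⟨(x, y, 0), fun h => hy ⟨_, h, rfl⟩, fun {b} hb => ?_⟩
  simpa [← compl_eq_univ_sdiff] using hK.joinedIn_diff hKc isOpen_univ isOpen_univ isOpen_univ
    convex_univ convex_univ convex_univ (a := (x, y, 0)) (b := b) ⟨by simp, fun h => hy ⟨_, h, rfl⟩⟩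
    ⟨by simp, hb⟩

/-- The coordinate plane in which the shadow of a link on the plane `k` is an affine copy of the
shadow of the whole ring. -/
def Link.shadowPlane : Link → Plane → Plane
  | mid _, k => k
  | side _, .xy => .xy
  | side _, .xz => .yz
  | side _, .yz => .xz
  | upright _ _, .xy => .xz
  | upright _ _, .xz => .xy
  | upright _ _, .yz => .yz

/-- The linear part of the affine map from the shadow of the ring to the shadow of a link. -/
def Link.shadowMatrix : Link → Plane → Matrix (Fin 2) (Fin 2) ℝ
  | mid s, .xy => !![45 / 100, 0; 0, 20 / 100 * sign s]
  | mid _, .xz => !![45 / 100, 0; 0, 2 / 100]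
  | mid s, .yz => !![20 / 100 * sign s, 0; 0, 2 / 100]
  | side s, .xy => !![0, 95 / 1000 * sign s; 98 / 100, 0]
  | side s, .xz => !![95 / 1000 * sign s, 0; 0, 2 / 100]
  | side _, .yz => !![98 / 100, 0; 0, 2 / 100]
  | upright s t, .xy => !![33 / 100 * sign s, 0; 0, 2 / 100 * sign t]
  | upright s _, .xz => !![33 / 100 * sign s, 0; 0, 10 / 100]
  | upright _ t, .yz => !![0, 2 / 100 * sign t; 10 / 100, 0]

/-- `Link.shadowMatrix` as a linear map of the plane. -/
abbrev Link.shadowMap (i : Link) (k : Plane) : ℝ × ℝ →ₗ[ℝ] ℝ × ℝ :=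
  (i.shadowMatrix k).toLin (.finTwoProd ℝ) (.finTwoProd ℝ)

theorem Link.proj_map (i : Link) (k : Plane) (p : E₃) :
    k.proj (i.map p) = k.proj (i.map 0) + i.shadowMap k ((i.shadowPlane k).proj p) := by
  rcases i with s | s | ⟨s, t⟩ <;> cases k <;>
    simp only [shadowMap, shadowMatrix, shadowPlane, Matrix.toLin_finTwoProd_apply] <;>
    ext <;> simp [Link.map, Plane.proj] <;> ring

theorem Link.abs_det_shadowMap_le (i : Link) (k : Plane) :
    |LinearMap.det (i.shadowMap k)| ≤ 1 / 10 := by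
  rw [LinearMap.det_toLin]
  rcases i with s | s | ⟨s, t⟩ <;> cases k <;> cases s <;> (try cases t) <;>
    norm_num [shadowMatrix, Matrix.det_fin_two_of, sign, abs_le]

theorem Link.volume_proj_image_map_le (i : Link) (k : Plane) (A : Set E₃) :
    volume (k.proj '' (i.map '' A)) ≤
      ENNReal.ofReal (1 / 10) * volume ((i.shadowPlane k).proj '' A) := by
  have himage : k.proj '' (i.map '' A) = (fun q => k.proj (i.map 0) + q) ''
      (i.shadowMap k '' ((i.shadowPlane k).proj '' A)) := by
    simp only [image_image]
    exact image_congr fun p _ => i.proj_map k p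
  rw [himage, image_add_left, measure_preimage_add, Measure.addHaar_image_linearMap]
  gcongr
  exact i.abs_det_shadowMap_le k

theorem ring_subset_closedBall : ring ⊆ closedBall 0 100 := by
  rintro ⟨x, y, z⟩ hp
  rw [mem_ring] at hp
  simp only [mem_closedBall_zero_iff, norm_prod_le_iff, Real.norm_eq_abs, abs_le]
  grind

theorem proj_mem_closedBall {r : ℝ} (ha : a ∈ closedBall 0 r) (k : Plane) :
    k.proj a ∈ closedBall 0 r := by
  simp only [mem_closedBall_zero_iff, norm_prod_le_iff] at ha ⊢
  cases k <;> simp_all [Plane.proj]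

/-- The necklace consists of eight copies of itself whose shadows have a tenth of the area. -/
theorem hasNullShadows_necklace : HasNullShadows necklace := by
  set M := ⨆ k : Plane, volume (k.proj '' necklace)
  have hle (k : Plane) : volume (k.proj '' necklace) ≤ M :=
    le_iSup (fun k : Plane => volume (k.proj '' necklace)) k
  have hM_top : M ≠ ⊤ := by
    refine ne_top_of_le_ne_top (measure_closedBall_lt_top (x := (0 : ℝ × ℝ)) (r := 100)).ne
      (iSup_le fun k => measure_mono (image_subset_iff.2 fun p hp => ?_))
    exact proj_mem_closedBall (ring_subset_closedBall (necklace_subset_ring hp)) k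
  have hcover (k : Plane) : k.proj '' necklace ⊆ ⋃ i : Link, k.proj '' (i.map '' necklace) := by
    rintro _ ⟨p, hp, rfl⟩
    obtain ⟨i, hi⟩ := exists_coord_mem_necklace hp
    exact mem_iUnion.2 ⟨i, _, ⟨_, hi, i.map_coord p⟩, rfl⟩
  have hM : M ≤ (8 * ENNReal.ofReal (1 / 10)) * M := by
    refine iSup_le fun k => ?_
    calc volume (k.proj '' necklace)
        ≤ ∑ i : Link, volume (k.proj '' (i.map '' necklace)) :=
          (measure_mono (hcover k)).trans (measure_iUnion_fintype_le _ _)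
      _ ≤ ∑ _i : Link, ENNReal.ofReal (1 / 10) * M := Finset.sum_le_sum fun i _ =>
          (i.volume_proj_image_map_le k necklace).trans <| by gcongr; exact hle _
      _ = 8 * ENNReal.ofReal (1 / 10) * M := by
        simp [show Fintype.card Link = 8 from rfl, mul_assoc]
  have hlt : 8 * ENNReal.ofReal (1 / 10) < 1 := by
    rw [← ENNReal.ofReal_ofNat 8, ← ENNReal.ofReal_mul (by norm_num), ENNReal.ofReal_lt_one]
    norm_num
  exact fun k => le_antisymm (eq_zero_of_le_mul_self hlt hM_top hM ▸ hle k) bot_le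

theorem hasNullShadows_dustedNecklace (S : Set (List Link)) :
    HasNullShadows (dustedNecklace S) := by
  intro k
  have hdust (w : List Link) : volume (k.proj '' (wordHomeo w '' dust)) = 0 := by
    have himage : k.proj '' (wordHomeo w '' dust) ⊆
        (fun p : ℝ × ℝ => k.proj (wordHomeo w (dustPoint p.1))) '' (cantorSet ×ˢ univ) := by
      rintro _ ⟨_, ⟨_, ⟨τ, hτ, rfl⟩, rfl⟩, rfl⟩
      exact ⟨(τ, 0), ⟨hτ, trivial⟩, rfl⟩
    refine measure_mono_null himage
      (addHaar_image_eq_zero_of_differentiableOn_of_addHaar_eq_zero volume ?_ ?_)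
    · have hw := (differentiable_wordHomeo w).comp differentiable_dustPoint
      exact (k.proj.differentiable.comp (hw.comp differentiable_fst)).differentiableOn
    · rw [Measure.volume_eq_prod, Measure.prod_prod, volume_cantorSet, zero_mul]
  rw [dustedNecklace, dustUnion, image_union, image_iUnion₂]
  exact measure_union_null (hasNullShadows_necklace k)
    ((measure_biUnion_null_iff S.to_countable).2 fun w _ => hdust w)

end NullShadows

/-! ### Extending homeomorphisms over ends -/

section EndCompactification

variable {M M' X X' : Type*} [TopologicalSpace X] [TopologicalSpace X']

theorem notMem_of_mapClusterPt_of_eventually {l : Filter M} {f : M → X} {x : X} {U V : Set X}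
    (hx : MapClusterPt x l f) (hU : ∀ᶠ m in l, f m ∈ U) (hV : IsOpen V) (hUV : Disjoint U V) :
    x ∉ V := fun hxV =>
  hx.frequently (hV.mem_nhds hxV) (hU.mono fun _ hmU hmV => disjoint_left.1 hUV hmU hmV)

variable [TopologicalSpace M] [TopologicalSpace M']

theorem isPreconnected_setOf_mapClusterPt [CompactSpace X] [T2Space X] {l : Filter M} {f : M → X}
    (hf : Continuous f) (hl : ∀ s ∈ l, ∃ P ∈ l, IsPreconnected P ∧ P ⊆ s) :
    IsPreconnected {x | MapClusterPt x l f} := by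
  have hclosed : IsClosed {x | MapClusterPt x l f} := isClosed_setOfPred_clusterPt
  rw [isPreconnected_iff_subset_of_fully_disjoint_closed hclosed]
  intro u v hu hv huv hd
  obtain ⟨U, V, hU, hV, huU, hvV, hUV⟩ := normal_separation hu hv hd
  have hev : f ⁻¹' (U ∪ V) ∈ l :=
    isCompact_univ.le_nhdsSet_of_clusterPt univ_mem (l := map f l) (fun x _ hx => hx)
      ((hU.union hV).mem_nhdsSet.2 (huv.trans (union_subset_union huU hvV)))
  obtain ⟨P, hP, hPc, hPs⟩ := hl _ hev
  rcases (isPreconnected_iff_subset_of_disjoint.1 (hPc.image f hf.continuousOn)) U V hU hV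
    (image_subset_iff.2 hPs) (by simp [hUV.inter_eq]) with h | h
  · exact .inl fun x hx => (huv hx).resolve_right fun hxv => notMem_of_mapClusterPt_of_eventually
      hx (mem_of_superset hP (image_subset_iff.1 h)) hV hUV (hvV hxv)
  · exact .inr fun x hx => (huv hx).resolve_left fun hxu => notMem_of_mapClusterPt_of_eventually
      hx (mem_of_superset hP (image_subset_iff.1 h)) hU hUV.symm (huU hxu)

theorem notMem_range_of_mapClusterPt_comap_nhds [T2Space X] {i : M → X} {f : M → X'} {p : X}
    {x : X'} (hi : Continuous i) (hf : IsInducing f) (hp : p ∉ range i)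
    (hx : MapClusterPt x (comap i (𝓝 p)) f) : x ∉ range f := by
  rintro ⟨m, rfl⟩
  have hm : ClusterPt (i m) (𝓝 p) := (hf.mapClusterPt_iff.1 hx).map hi.continuousAt tendsto_comap
  exact hp ⟨m, eq_of_nhds_neBot hm⟩

/-- The dense open embedding `i` exhibits `X` as the end compactification of `M` (for `X` compact
Hausdorff): the remainder is totally disconnected, and its points have arbitrarily small
neighbourhoods with connected trace on `M`. -/
structure IsEndCompactification (i : M → X) : Prop where
  isOpenEmbedding : IsOpenEmbedding i
  denseRange : DenseRange i
  isTotallyDisconnected_compl_range : IsTotallyDisconnected (range i)ᶜ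
  exists_isPreconnected (p : X) :
    ∀ s ∈ comap i (𝓝 p), ∃ P ∈ comap i (𝓝 p), IsPreconnected P ∧ P ⊆ s

namespace IsEndCompactification

/-- The cluster set of `f` at an end is connected and lies in the totally disconnected remainder, so
`f` converges there. -/
theorem exists_continuous_extension [T2Space X] [CompactSpace X'] [T2Space X'] {i : M → X}
    (hi : IsEndCompactification i) {f : M → X'} (hf : IsEmbedding f)
    (hf' : IsTotallyDisconnected (range f)ᶜ) : ∃ g : X → X', Continuous g ∧ ∀ m, g (i m) = f m := by
  have hid : IsDenseInducing i := ⟨hi.isOpenEmbedding.isInducing, hi.denseRange⟩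
  refine ⟨hid.extend f, hid.continuous_extend fun p => ?_, hid.extend_eq hf.continuous⟩
  by_cases hp : p ∈ range i
  · obtain ⟨m, rfl⟩ := hp
    exact ⟨f m, hid.isInducing.nhds_eq_comap m ▸ hf.continuous.tendsto m⟩
  have := hid.comap_nhds_neBot p
  have hcluster : {x | MapClusterPt x (comap i (𝓝 p)) f}.Subsingleton :=
    hf' _ (fun _ hx => notMem_range_of_mapClusterPt_comap_nhds hi.isOpenEmbedding.continuous
      hf.isInducing hp hx)
      (isPreconnected_setOf_mapClusterPt hf.continuous (hi.exists_isPreconnected p))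
  obtain ⟨q, hq⟩ := exists_clusterPt_of_compactSpace (map f (comap i (𝓝 p)))
  exact ⟨q, tendsto_nhds_of_unique_mapClusterPt fun x hx => hcluster hx hq⟩

theorem exists_homeomorph [CompactSpace X] [T2Space X] [CompactSpace X'] [T2Space X'] {i : M → X}
    {i' : M' → X'} (hi : IsEndCompactification i) (hi' : IsEndCompactification i') (h : M ≃ₜ M') :
    ∃ g : X ≃ₜ X', ∀ m, g (i m) = i' (h m) := by
  obtain ⟨g, hg, hgi⟩ := hi.exists_continuous_extension (f := i' ∘ h)
    (hi'.isOpenEmbedding.isEmbedding.comp h.isEmbedding)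
    (by simpa [h.surjective.range_comp] using hi'.isTotallyDisconnected_compl_range)
  obtain ⟨g', hg', hgi'⟩ := hi'.exists_continuous_extension (f := i ∘ h.symm)
    (hi.isOpenEmbedding.isEmbedding.comp h.symm.isEmbedding)
    (by simpa [h.symm.surjective.range_comp] using hi.isTotallyDisconnected_compl_range)
  have hleft : g' ∘ g = id :=
    hi.denseRange.equalizer (hg'.comp hg) continuous_id (by ext m; simp [hgi, hgi'])
  have hright : g ∘ g' = id :=
    hi'.denseRange.equalizer (hg.comp hg') continuous_id (by ext m; simp [hgi, hgi'])
  exact ⟨⟨⟨g, g', congrFun hleft, congrFun hright⟩, hg, hg'⟩, hgi⟩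

end IsEndCompactification

theorem isTotallyDisconnected_union {s t : Set X} (hs : IsTotallyDisconnected s)
    (ht : IsTotallyDisconnected t) (hsc : IsClosed s) (htc : IsClosed t) (hst : Disjoint s t) :
    IsTotallyDisconnected (s ∪ t) := by
  intro A hA hAc
  rcases isPreconnected_iff_subset_of_disjoint_closed.1 hAc s t hsc htc hA
    (by simp [hst.inter_eq]) with h | h
  exacts [hs A h hAc, ht A h hAc]

open OnePoint in
theorem exists_homeomorph_coe_eq (g : OnePoint X ≃ₜ OnePoint X') (hg : g ∞ = ∞) :
    ∃ φ : X ≃ₜ X', ∀ x : X, (φ x : OnePoint X') = g x := by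
  let e : X ≃ₜ range ((↑) : X → OnePoint X) := isOpenEmbedding_coe.isEmbedding.toHomeomorph
  let e' : X' ≃ₜ range ((↑) : X' → OnePoint X') := isOpenEmbedding_coe.isEmbedding.toHomeomorph
  have hrange (p : OnePoint X) : p ∈ range ((↑) : X → OnePoint X) ↔
      g p ∈ range ((↑) : X' → OnePoint X') := by
    rw [← compl_infty, ← compl_infty, mem_compl_singleton_iff, mem_compl_singleton_iff, ← hg,
      g.injective.ne_iff]
  exact ⟨e.trans ((g.subtype hrange).trans e'.symm),
    fun x => congrArg Subtype.val (e'.apply_symm_apply (g.subtype hrange (e x)))⟩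

end EndCompactification

section Extension

open Bornology OnePoint

theorem isPreconnected_preimage_val_iff {X : Type*} [TopologicalSpace X] {K s : Set X} :
    IsPreconnected (Subtype.val ⁻¹' s : Set ↥Kᶜ) ↔ IsPreconnected (s \ K) := by
  rw [← IsInducing.subtypeVal.isPreconnected_image, Subtype.image_preimage_coe, inter_comm,
    sdiff_eq]

variable {E : Type*} [NormedAddCommGroup E] [NormedSpace ℝ E] {K K' : Set E}

theorem isPreconnected_compl_closedBall (hE : 1 < Module.rank ℝ E) {r : ℝ} (hr : 0 ≤ r) :
    IsPreconnected (closedBall (0 : E) r)ᶜ := by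
  have himage : (closedBall (0 : E) r)ᶜ =
      (fun p : ℝ × E => p.1 • p.2) '' (Ioi r ×ˢ sphere (0 : E) 1) := by
    ext x
    simp only [mem_compl_iff, mem_closedBall_zero_iff, not_le, mem_image, mem_prod, mem_Ioi,
      mem_sphere_zero_iff_norm, Prod.exists]
    constructor
    · intro hx
      have hx0 : ‖x‖ ≠ 0 := (hr.trans_lt hx).ne'
      exact ⟨‖x‖, ‖x‖⁻¹ • x, ⟨hx, by simp [norm_smul, hx0]⟩, smul_inv_smul₀ hx0 x⟩
    · rintro ⟨t, y, ⟨ht, hy⟩, rfl⟩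
      rwa [norm_smul, hy, mul_one, Real.norm_of_nonneg (hr.trans ht.le)]
  rw [himage]
  exact (isPreconnected_Ioi.prod (isPreconnected_sphere hE 0 1)).image _ (by fun_prop)

theorem dense_compl_of_isTotallyDisconnected [Nontrivial E] (hK : IsTotallyDisconnected K) :
    Dense Kᶜ := by
  rw [← interior_eq_empty_iff_dense_compl, eq_empty_iff_forall_notMem]
  intro x hx
  obtain ⟨r, hr, hrK⟩ := Metric.isOpen_iff.1 isOpen_interior x hx
  have := Module.punctured_nhds_neBot ℝ E x
  exact (infinite_of_mem_nhds x (ball_mem_nhds x hr)).nontrivial.not_subsingleton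
    (hK _ (hrK.trans interior_subset) (convex_ball x r).isPreconnected)

theorem compl_range_coe_val {X : Type*} (K : Set X) :
    (range fun x : ↥Kᶜ => ((x : X) : OnePoint X))ᶜ = (↑) '' K ∪ {∞} := by
  ext p
  induction p using OnePoint.rec with simp

theorem not_accPt_infty {X : Type*} [TopologicalSpace X] {K : Set X} (hK : IsCompact K)
    (hK' : IsClosed K) : ¬AccPt ∞ (𝓟 ((↑) '' K ∪ {∞} : Set (OnePoint X))) := by
  intro hacc
  obtain ⟨p, ⟨hpK, hp⟩, hne⟩ := accPt_iff_nhds.1 hacc _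
    ((isOpen_compl_image_coe.2 ⟨hK', hK⟩).mem_nhds (infty_notMem_image_coe (s := K)))
  exact hp.elim hpK hne

theorem exists_isPreconnected_sdiff [ProperSpace E] (hE : 1 < Module.rank ℝ E)
    (hK : IsBounded K) (hball : ∀ x r, IsPreconnected (ball x r \ K)) (p : OnePoint E) {t : Set E}
    (ht : t ∈ comap OnePoint.some (𝓝 p)) :
    ∃ u ∈ comap OnePoint.some (𝓝 p), u ⊆ t ∧ IsPreconnected (u \ K) := by
  induction p using OnePoint.rec with
  | infty =>
    rw [comap_coe_nhds_infty, coclosedCompact_eq_cocompact, ← cobounded_eq_cocompact] at ht ⊢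
    obtain ⟨R, -, hRt⟩ := (hasBasis_cobounded_compl_closedBall (0 : E)).mem_iff.1 ht
    obtain ⟨R', hKR'⟩ := hK.subset_closedBall (0 : E)
    refine ⟨(closedBall 0 (max (max R R') 0))ᶜ, isBounded_def.1 isBounded_closedBall, ?_, ?_⟩
    · refine (compl_subset_compl.2 (closedBall_subset_closedBall ?_)).trans hRt
      exact (le_max_left _ _).trans (le_max_left _ _)
    · rw [(disjoint_compl_left_iff_subset.2 (hKR'.trans (closedBall_subset_closedBall
        ((le_max_right _ _).trans (le_max_left _ _))))).sdiff_eq_left]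
      exact isPreconnected_compl_closedBall hE (le_max_right _ _)
  | coe x =>
    rw [← isOpenEmbedding_coe.isInducing.nhds_eq_comap] at ht ⊢
    obtain ⟨r, hr, hrt⟩ := Metric.mem_nhds_iff.1 ht
    exact ⟨ball x r, ball_mem_nhds x hr, hrt, hball x r⟩

theorem isEndCompactification_compl [FiniteDimensional ℝ E] (hE : 1 < Module.rank ℝ E)
    (hK : IsCompact K) (hK' : IsTotallyDisconnected K)
    (hball : ∀ x r, IsPreconnected (ball x r \ K)) :
    IsEndCompactification fun x : ↥Kᶜ => ((x : E) : OnePoint E) := by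
  have : Nontrivial E := rank_pos_iff_nontrivial.1 (zero_lt_one.trans hE)
  have : NoncompactSpace E := NormedSpace.noncompactSpace ℝ E
  have : ProperSpace E := FiniteDimensional.proper_real E
  refine ⟨isOpenEmbedding_coe.comp hK.isClosed.isOpen_compl.isOpenEmbedding_subtypeVal,
    isDenseEmbedding_coe.dense.comp (dense_compl_of_isTotallyDisconnected hK').denseRange_val
      continuous_coe, ?_, fun p s hs => ?_⟩
  · rw [compl_range_coe_val]
    exact isTotallyDisconnected_union
      (isOpenEmbedding_coe.isEmbedding.isTotallyDisconnected_image.2 hK')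
      isTotallyDisconnected_singleton (hK.image continuous_coe).isClosed isClosed_singleton
      (disjoint_singleton_right.2 infty_notMem_image_coe)
  · have hcomap := comap_comap (f := 𝓝 p) (m := (Subtype.val : ↥Kᶜ → E)) (n := OnePoint.some)
    change s ∈ comap (OnePoint.some ∘ Subtype.val) (𝓝 p) at hs
    change ∃ P ∈ comap (OnePoint.some ∘ Subtype.val) (𝓝 p), _
    rw [← hcomap] at hs ⊢
    obtain ⟨t, ht, hts⟩ := hs
    obtain ⟨u, hu, hut, huK⟩ := exists_isPreconnected_sdiff hE hK.isBounded hball p ht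
    exact ⟨Subtype.val ⁻¹' u, preimage_mem_comap hu, isPreconnected_preimage_val_iff.2 huK,
      (preimage_mono hut).trans hts⟩

theorem exists_homeomorph_extension [FiniteDimensional ℝ E] (hE : 1 < Module.rank ℝ E)
    (hK : IsCompact K) (hKt : IsTotallyDisconnected K)
    (hKb : ∀ x r, IsPreconnected (ball x r \ K)) (hK' : IsCompact K')
    (hKt' : IsTotallyDisconnected K') (hKb' : ∀ x r, IsPreconnected (ball x r \ K'))
    (hKp' : Preperfect K') (h : ↥Kᶜ ≃ₜ ↥K'ᶜ) : ∃ φ : E ≃ₜ E, ∀ x : ↥Kᶜ, φ x = h x := by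
  have : ProperSpace E := FiniteDimensional.proper_real E
  obtain ⟨g, hg⟩ := (isEndCompactification_compl hE hK hKt hKb).exists_homeomorph
    (isEndCompactification_compl hE hK' hKt' hKb') h
  have hremainder (p : OnePoint E) : g p ∈ ((↑) '' K' ∪ {∞} : Set (OnePoint E)) ↔
      p ∈ ((↑) '' K ∪ {∞} : Set (OnePoint E)) := by
    rw [← compl_range_coe_val, ← compl_range_coe_val, mem_compl_iff, mem_compl_iff, not_iff_not]
    constructor
    · rintro ⟨y, hy⟩
      exact ⟨h.symm y, g.injective (by simp [hg, ← hy])⟩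
    · rintro ⟨x, rfl⟩
      exact ⟨h x, (hg x).symm⟩
  have hinfty : g ∞ = ∞ := by
    refine ((hremainder ∞).2 (.inr rfl)).resolve_left ?_
    rintro ⟨y, hy, hgy⟩
    have hacc : AccPt (g.symm y) (map (g.symm ∘ OnePoint.some) (𝓟 K')) :=
      (hKp' y hy).map (f := g.symm ∘ OnePoint.some)
        (g.symm.continuous.comp continuous_coe).continuousAt (g.symm.injective.comp coe_injective)
    rw [hgy, g.symm_apply_apply, map_principal, image_comp] at hacc
    refine not_accPt_infty hK hK.isClosed (hacc.mono (principal_mono.2 ?_))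
    rintro _ ⟨p, hp, rfl⟩
    rw [← hremainder, g.apply_symm_apply]
    exact .inl hp
  obtain ⟨φ, hφ⟩ := exists_homeomorph_coe_eq g hinfty
  exact ⟨φ, fun x => coe_injective ((hφ x).trans (hg x))⟩

end Extension

/-! ### Wild points -/

section IsWildPoint

variable {X Y : Type*} [TopologicalSpace X] [TopologicalSpace Y] {K : Set X} {K' : Set Y}
  {h : ↥Kᶜ ≃ₜ ↥K'ᶜ} {φ : X ≃ₜ Y} {p : X}

theorem homotopic_of_map_homeomorph (f : X ≃ₜ Y) {a b : X} {γ₁ γ₂ : Path a b}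
    (hγ : (γ₁.map f.continuous).Homotopic (γ₂.map f.continuous)) : γ₁.Homotopic γ₂ := by
  have hcast (γ : Path a b) : ((γ.map f.continuous).map f.symm.continuous).cast
      (f.symm_apply_apply a).symm (f.symm_apply_apply b).symm = γ := by
    ext t
    simp
  rw [← hcast γ₁, ← hcast γ₂]
  exact (hγ.map (f.symm : C(Y, X))).pathCast _ _

/-- The complement of `K` fails to be locally simply connected at `p`, in the strong sense that
paths arbitrarily close to `p` are not homotopic even in the whole complement. -/
def IsWildPoint (K : Set X) (p : X) : Prop :=
  ∀ U ∈ 𝓝 p, ∃ (a b : ↥Kᶜ) (γ₁ γ₂ : Path a b),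
    (∀ t, (γ₁ t : X) ∈ U) ∧ (∀ t, (γ₂ t : X) ∈ U) ∧ ¬γ₁.Homotopic γ₂

theorem symm_apply_eq_of_forall_apply_eq (hφ : ∀ x : ↥Kᶜ, φ x = h x) (y : ↥K'ᶜ) :
    φ.symm y = h.symm y := by
  rw [φ.symm_apply_eq, hφ, h.apply_symm_apply]

theorem apply_mem_iff_of_forall_apply_eq (hφ : ∀ x : ↥Kᶜ, φ x = h x) : φ p ∈ K' ↔ p ∈ K := by
  refine not_iff_not.1 ⟨fun hp => ?_, fun hp => hφ ⟨p, hp⟩ ▸ (h ⟨p, hp⟩).2⟩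
  rw [← φ.symm_apply_apply p, symm_apply_eq_of_forall_apply_eq hφ ⟨φ p, hp⟩]
  exact (h.symm ⟨φ p, hp⟩).2

theorem IsWildPoint.apply (hp : IsWildPoint K p) (hφ : ∀ x : ↥Kᶜ, φ x = h x) :
    IsWildPoint K' (φ p) := by
  intro U hU
  obtain ⟨a, b, γ₁, γ₂, h₁, h₂, hne⟩ := hp _ (φ.continuous.continuousAt.preimage_mem_nhds hU)
  have hmem {x : ↥Kᶜ} (hx : φ x ∈ U) : (h x : Y) ∈ U := hφ x ▸ hx
  exact ⟨_, _, γ₁.map h.continuous, γ₂.map h.continuous, fun t => hmem (h₁ t),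
    fun t => hmem (h₂ t), fun hγ => hne (homotopic_of_map_homeomorph h hγ)⟩

theorem isWildPoint_apply_iff (hφ : ∀ x : ↥Kᶜ, φ x = h x) :
    IsWildPoint K' (φ p) ↔ IsWildPoint K p :=
  ⟨fun hp => φ.symm_apply_apply p ▸ hp.apply (symm_apply_eq_of_forall_apply_eq hφ),
    fun hp => hp.apply hφ⟩

end IsWildPoint

section Necklace

variable {S S' : Set (List Link)} {p : E₃}

theorem isWildPoint_dustedNecklace (hp : p ∈ necklace) : IsWildPoint (dustedNecklace S) p := by
  intro U hU
  obtain ⟨ε, hε, hεU⟩ := Metric.mem_nhds_iff.1 hU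
  obtain ⟨n, hn⟩ := exists_forall_dist_wordHomeo_lt hε
  obtain ⟨w, hw, q, hq, rfl⟩ := exists_wordHomeo_eq hp n
  obtain ⟨a, b, γ₁, γ₂, h₁, h₂, hne⟩ :=
    exists_not_homotopic w (image_shell_subset_compl_dustedNecklace w)
      (compl_subset_compl.2 (subset_union_left (s := necklace) (t := dustUnion S)))
  have hshell : wordHomeo w '' (collar \ ring) ⊆ U := by
    rintro _ ⟨x, hx, rfl⟩
    exact hεU (hn w hw.ge x hx.1 q (necklace_subset_collar hq))
  exact ⟨a, b, γ₁, γ₂, fun t => hshell (h₁ t), fun t => hshell (h₂ t), hne⟩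

theorem isWildPoint_dustedNecklace_iff : IsWildPoint (dustedNecklace S) p ↔ p ∈ necklace := by
  refine ⟨fun hp => by_contra fun hpn => ?_, isWildPoint_dustedNecklace⟩
  obtain ⟨r, hr, hball⟩ := Metric.mem_nhds_iff.1 (isClosed_necklace.isOpen_compl.mem_nhds hpn)
  obtain ⟨a, b, γ₁, γ₂, h₁, h₂, hne⟩ := hp _ (ball_mem_nhds p hr)
  exact hne ((isAvoidableBySurfaces_dustUnion S).homotopic_of_convex isClosed_necklace
    isCompact_dustedNecklace.isClosed (convex_ball p r) hball h₁ h₂)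

theorem dustedNecklace_sdiff_necklace : dustedNecklace S \ necklace = dustUnion S := by
  rw [dustedNecklace, union_sdiff_left, disjoint_dustUnion_necklace.sdiff_eq_left]

theorem exists_homeomorph_forall_mem_iff (h : ↥(dustedNecklace S)ᶜ ≃ₜ ↥(dustedNecklace S')ᶜ) :
    ∃ φ : E₃ ≃ₜ E₃, (∀ p, φ p ∈ necklace ↔ p ∈ necklace) ∧
      ∀ p, φ p ∈ dustUnion S' ↔ p ∈ dustUnion S := by
  obtain ⟨φ, hφ⟩ := exists_homeomorph_extension (by simp; norm_num) isCompact_dustedNecklace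
    isTotallyDisconnected_dustedNecklace
    ((hasNullShadows_dustedNecklace S).isPreconnected_ball_diff isCompact_dustedNecklace.isClosed)
    isCompact_dustedNecklace isTotallyDisconnected_dustedNecklace
    ((hasNullShadows_dustedNecklace S').isPreconnected_ball_diff isCompact_dustedNecklace.isClosed)
    preperfect_dustedNecklace h
  have hnecklace (p : E₃) : φ p ∈ necklace ↔ p ∈ necklace := by
    rw [← isWildPoint_dustedNecklace_iff (S := S'), isWildPoint_apply_iff hφ,
      isWildPoint_dustedNecklace_iff]
  refine ⟨φ, hnecklace, fun p => ?_⟩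
  rw [← dustedNecklace_sdiff_necklace, ← dustedNecklace_sdiff_necklace, Set.mem_sdiff,
    Set.mem_sdiff, hnecklace, apply_mem_iff_of_forall_apply_eq hφ]

theorem exists_image_eq_of_homeomorph_compl {F F' : Set E₃} (hF : IsClosed F) (hFn : F ⊆ necklace)
    (hF' : IsClosed F') (hFn' : F' ⊆ necklace)
    (h : ↥(dustedNecklace (wordsMeeting F))ᶜ ≃ₜ ↥(dustedNecklace (wordsMeeting F'))ᶜ) :
    ∃ φ : E₃ ≃ₜ E₃, φ '' F = F' := by
  have image_eq {φ : E₃ ≃ₜ E₃} {s t : Set E₃} (hst : ∀ p, φ p ∈ t ↔ p ∈ s) : φ '' s = t := by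
    rw [← image_preimage_eq t φ.surjective]
    exact congrArg _ (Set.ext fun p => (hst p).symm)
  obtain ⟨φ, hnecklace, hdust⟩ := exists_homeomorph_forall_mem_iff h
  refine ⟨φ, ?_⟩
  rw [← necklace_inter_closure_dustUnion_wordsMeeting hF hFn,
    ← necklace_inter_closure_dustUnion_wordsMeeting hF' hFn', image_inter φ.injective,
    φ.image_closure, image_eq hnecklace, image_eq hdust]

end Necklace

/-! ### Closed subsets of prescribed Cantor–Bendixson rank -/

section CBDerivative

variable {X Y ι : Type*} [TopologicalSpace X] [TopologicalSpace Y] [LinearOrder ι]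
  {F F' U : Set X} {x : X} {a b : ι}

/-- The transfinite Cantor–Bendixson derivatives of `F`, indexed by an arbitrary well-order; the
bottom element of `ι` indexes `F` itself. -/
def cbDerivative [WellFoundedLT ι] (F : Set X) (a : ι) : Set X :=
  {x ∈ F | ∀ b, ∀ _ : b < a, AccPt x (𝓟 (cbDerivative F b))}
termination_by wellFounded_lt.wrap a

variable [WellFoundedLT ι]

theorem mem_cbDerivative :
    x ∈ cbDerivative F a ↔ x ∈ F ∧ ∀ b < a, AccPt x (𝓟 (cbDerivative F b)) := by
  rw [cbDerivative]
  rfl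

theorem cbDerivative_subset : cbDerivative F a ⊆ F := fun _ hx => (mem_cbDerivative.1 hx).1

theorem antitone_cbDerivative : Antitone (cbDerivative F : ι → Set X) := fun _ _ hab _ hx =>
  mem_cbDerivative.2 ⟨cbDerivative_subset hx,
    fun c hc => (mem_cbDerivative.1 hx).2 c (hc.trans_le hab)⟩

theorem cbDerivative_inter_subset (hU : IsOpen U) (hF : F ∩ U ⊆ F') (a : ι) :
    cbDerivative F a ∩ U ⊆ cbDerivative F' a := by
  induction a using WellFoundedLT.induction with
  | ind a ih =>
    rintro x ⟨hx, hxU⟩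
    refine mem_cbDerivative.2 ⟨hF ⟨cbDerivative_subset hx, hxU⟩, fun b hb => ?_⟩
    exact (((mem_cbDerivative.1 hx).2 b hb).nhds_inter (hU.mem_nhds hxU)).mono
      (principal_mono.2 (inter_comm U _ ▸ ih b hb))

theorem image_cbDerivative_subset (φ : X ≃ₜ Y) (F : Set X) (a : ι) :
    φ '' cbDerivative F a ⊆ cbDerivative (φ '' F) a := by
  induction a using WellFoundedLT.induction with
  | ind a ih =>
    rintro _ ⟨x, hx, rfl⟩
    refine mem_cbDerivative.2 ⟨mem_image_of_mem φ (cbDerivative_subset hx), fun b hb => ?_⟩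
    have hacc := ((mem_cbDerivative.1 hx).2 b hb).map φ.continuous.continuousAt φ.injective
    rw [map_principal] at hacc
    exact hacc.mono (principal_mono.2 (ih b hb))

theorem image_cbDerivative (φ : X ≃ₜ Y) (F : Set X) (a : ι) :
    φ '' cbDerivative F a = cbDerivative (φ '' F) a := by
  refine (image_cbDerivative_subset φ F a).antisymm fun y hy => ⟨φ.symm y, ?_, by simp⟩
  have hy' := image_cbDerivative_subset φ.symm (φ '' F) a (mem_image_of_mem φ.symm hy)
  rwa [← image_comp, φ.symm_comp_self, image_id] at hy'

theorem cbDerivative_eq_empty_of_subset_singleton (hF : cbDerivative F a ⊆ {x}) (hab : a < b) :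
    cbDerivative F b = ∅ := by
  refine eq_empty_iff_forall_notMem.2 fun y hy => ?_
  obtain ⟨z, ⟨-, hz⟩, hzy⟩ := accPt_iff_nhds.1 ((mem_cbDerivative.1 hy).2 a hab) univ univ_mem
  exact hzy ((hF hz).trans (hF (antitone_cbDerivative hab.le hy)).symm)

end CBDerivative

theorem exists_forall_frequently_eq (α : Type*) [Countable α] [Nonempty α] :
    ∃ e : ℕ → α, ∀ x, ∃ᶠ n in atTop, e n = x := by
  obtain ⟨e, he⟩ := exists_surjective_nat α
  refine ⟨fun n => e n.unpair.1, fun x => frequently_atTop.2 fun N => ?_⟩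
  obtain ⟨k, rfl⟩ := he x
  exact ⟨Nat.pair k N, Nat.right_le_pair k N, by simp⟩

/-- Disjoint copies `map n '' nhd` of a neighbourhood `nhd` of `W` that shrink to a point `apex` of
`W`, each of which contains a copy of `W` inside `W`. -/
structure ShrinkingCells {X : Type*} [TopologicalSpace X] (W : Set X) where
  apex : X
  nhd : Set X
  map : ℕ → X ≃ₜ X
  isOpen_nhd : IsOpen nhd
  subset_nhd : W ⊆ nhd
  apex_mem : apex ∈ W
  mapsTo (n : ℕ) : MapsTo (map n) W W
  apex_notMem (n : ℕ) : apex ∉ map n '' nhd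
  disjoint : Pairwise (Function.onFun Disjoint fun n => map n '' nhd)
  eventually_subset : ∀ U ∈ 𝓝 apex, ∀ᶠ n in atTop, map n '' nhd ⊆ U

namespace ShrinkingCells

variable {X ι : Type*} [TopologicalSpace X] [LinearOrder ι] [WellFoundedLT ι] {W : Set X}
  (c : ShrinkingCells W) {G : ℕ → Set X} {a b : ι}

/-- The wedge of the sets `G n`: the apex together with a copy of `G n` in the `n`-th cell. -/
def wedge (G : ℕ → Set X) : Set X := {c.apex} ∪ ⋃ n, c.map n '' G n

theorem image_subset_wedge (n : ℕ) : c.map n '' G n ⊆ c.wedge G :=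
  (subset_iUnion (fun n => c.map n '' G n) n).trans subset_union_right

theorem wedge_subset (hG : ∀ n, G n ⊆ W) : c.wedge G ⊆ W :=
  union_subset (singleton_subset_iff.2 c.apex_mem)
    (iUnion_subset fun n => ((c.mapsTo n).mono_left (hG n)).image_subset)

theorem wedge_inter_cell_subset (hG : ∀ n, G n ⊆ W) (n : ℕ) :
    c.wedge G ∩ c.map n '' c.nhd ⊆ c.map n '' G n := by
  rintro x ⟨rfl | hx, hxn⟩
  · exact absurd hxn (c.apex_notMem n)
  obtain ⟨m, hxm⟩ := mem_iUnion.1 hx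
  obtain rfl : m = n := c.disjoint.eq (not_disjoint_iff.2
    ⟨x, image_mono ((hG m).trans c.subset_nhd) hxm, hxn⟩)
  exact hxm

theorem isClosed_wedge [T2Space X] (hG : ∀ n, G n ⊆ W) (hGc : ∀ n, IsClosed (G n)) :
    IsClosed (c.wedge G) := by
  refine isClosed_of_closure_subset fun x hx => or_iff_not_imp_left.2 fun hxa => ?_
  obtain ⟨U, V, hU, hV, haU, hxV, hUV⟩ := t2_separation (Ne.symm hxa)
  obtain ⟨N, hN⟩ := eventually_atTop.1 (c.eventually_subset U (hU.mem_nhds haU))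
  have hclosed : IsClosed (⋃ n ∈ Iio N, c.map n '' G n) :=
    (finite_Iio N).isClosed_biUnion fun n _ => (c.map n).isClosedMap _ (hGc n)
  have hsub : c.wedge G ⊆ (⋃ n ∈ Iio N, c.map n '' G n) ∪ Vᶜ := by
    refine union_subset (singleton_subset_iff.2 (.inr (hUV.notMem_of_mem_left haU)))
      (iUnion_subset fun n y hy => ?_)
    rcases lt_or_ge n N with hn | hn
    · exact .inl (mem_biUnion (mem_Iio.2 hn) hy)
    · exact .inr (hUV.notMem_of_mem_left
        (hN n hn (image_mono ((hG n).trans c.subset_nhd) hy)))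
  have hxG := (closure_minimal hsub (hclosed.union hV.isClosed_compl) hx).resolve_right
    (not_not.2 hxV)
  exact iUnion₂_subset (fun n _ => subset_iUnion (fun n => c.map n '' G n) n) hxG

theorem apex_mem_cbDerivative_wedge
    (hG : ∀ b < a, ∃ᶠ n in atTop, c.apex ∈ cbDerivative (G n) b) :
    c.apex ∈ cbDerivative (c.wedge G) a := by
  refine mem_cbDerivative.2 ⟨.inl rfl, fun b hb => accPt_iff_nhds.2 fun U hU => ?_⟩
  obtain ⟨n, hn, hnU⟩ := ((hG b hb).and_eventually (c.eventually_subset U hU)).exists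
  have hcell : c.map n c.apex ∈ c.map n '' c.nhd :=
    mem_image_of_mem _ (c.subset_nhd c.apex_mem)
  refine ⟨c.map n c.apex, ⟨hnU hcell, ?_⟩, fun h => c.apex_notMem n (h ▸ hcell)⟩
  refine cbDerivative_inter_subset isOpen_univ ?_ b
    ⟨image_cbDerivative_subset (c.map n) (G n) b (mem_image_of_mem _ hn), mem_univ _⟩
  rw [inter_univ]
  exact c.image_subset_wedge n

theorem cbDerivative_wedge_eq_empty (hG : ∀ n, G n ⊆ W) (hGa : ∀ n, cbDerivative (G n) a = ∅)
    (hab : a < b) : cbDerivative (c.wedge G) b = ∅ := by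
  refine cbDerivative_eq_empty_of_subset_singleton (x := c.apex) (fun x hx => ?_) hab
  refine (cbDerivative_subset hx).resolve_right fun hxG => ?_
  obtain ⟨n, hn⟩ := mem_iUnion.1 hxG
  have hxn := cbDerivative_inter_subset ((c.map n).isOpenMap _ c.isOpen_nhd)
    (c.wedge_inter_cell_subset hG n) a ⟨hx, image_mono ((hG n).trans c.subset_nhd) hn⟩
  simp [← image_cbDerivative, hGa] at hxn

theorem exists_isClosed_apex_mem_cbDerivative [T2Space X] (hι : ∀ a : ι, (Iio a).Countable)
    (a : ι) : ∃ F ⊆ W, IsClosed F ∧ c.apex ∈ cbDerivative F a ∧ ∀ b > a, cbDerivative F b = ∅ := by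
  induction a using WellFoundedLT.induction with
  | ind a ih =>
    choose F hFW hF hFmem hFempty using fun b : Iio a => ih b b.2
    have := (hι a).to_subtype
    obtain ⟨e, he⟩ := exists_forall_frequently_eq (Option (Iio a))
    -- The value `none` only serves to make the index type nonempty.
    let G (n : ℕ) : Set X := (e n).elim ∅ F
    have hGW (n : ℕ) : G n ⊆ W := by
      cases h : e n <;> simp [G, h, hFW]
    have hG (n : ℕ) : IsClosed (G n) := by
      cases h : e n <;> simp [G, h, hF]
    have hGa (n : ℕ) : cbDerivative (G n) a = ∅ := by
      cases h : e n with
      | none => exact subset_empty_iff.1 (cbDerivative_subset.trans_eq (by simp [G, h]))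
      | some b => simpa [G, h] using hFempty b a b.2
    refine ⟨c.wedge G, c.wedge_subset hGW, c.isClosed_wedge hGW hG,
      c.apex_mem_cbDerivative_wedge fun b hb => ?_,
      fun b hb => c.cbDerivative_wedge_eq_empty hGW hGa hb⟩
    exact (he (some ⟨b, hb⟩)).mono fun n hn => by simpa [G, hn] using hFmem ⟨b, hb⟩

theorem exists_isClosed_forall_image_ne [T2Space X] (c : ShrinkingCells W)
    (hι : ∀ a : ι, (Iio a).Countable) :
    ∃ F : ι → Set X, (∀ a, F a ⊆ W) ∧ (∀ a, IsClosed (F a)) ∧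
      ∀ a b, a ≠ b → ∀ φ : X ≃ₜ X, φ '' F a ≠ F b := by
  choose F hFW hF hmem hempty using c.exists_isClosed_apex_mem_cbDerivative hι
  have image_ne_of_lt {a b : ι} (hab : a < b) (φ : X ≃ₜ X) : φ '' F a ≠ F b := fun h => by
    have hb := hmem b
    simp [← h, ← image_cbDerivative, hempty a b hab] at hb
  refine ⟨F, hFW, hF, fun a b hab φ h => ?_⟩
  rcases hab.lt_or_gt with hlt | hgt
  · exact image_ne_of_lt hlt φ h
  · exact image_ne_of_lt hgt φ.symm (by rw [← h, ← image_comp, φ.symm_comp_self, image_id])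

end ShrinkingCells

/-- The words leading to the cells of the necklace next to the fixed point of `mid true`. -/
def cellWord (n : ℕ) : List Link := List.replicate n (.mid true) ++ [.mid false]

theorem length_cellWord (n : ℕ) : (cellWord n).length = n + 1 := by simp [cellWord]

theorem wordHomeo_replicate_midPoint (n : ℕ) :
    wordHomeo (List.replicate n (.mid true)) (midPoint true) = midPoint true := by
  induction n with
  | zero => rfl
  | succ n ih => rw [List.replicate_succ, wordHomeo_cons, ih, map_midPoint]

theorem midPoint_notMem_image_cellWord (n : ℕ) :
    midPoint true ∉ wordHomeo (cellWord n) '' collar := by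
  rintro ⟨p, hp, h⟩
  rw [← wordHomeo_replicate_midPoint (n + 1)] at h
  have hword := word_eq_of_wordHomeo_eq (by simp [length_cellWord]) hp
    (necklace_subset_collar (midPoint_mem_necklace true)) h
  simp [cellWord, List.replicate_succ'] at hword

theorem not_cellWord_isPrefix_of_lt {m n : ℕ} (hmn : m < n) : ¬cellWord m <+: cellWord n := by
  intro h
  have hget := h.getElem (i := m) (by simp [cellWord])
  simp [cellWord, hmn] at hget

theorem disjoint_image_cellWord {m n : ℕ} (hmn : m < n) :
    Disjoint (wordHomeo (cellWord m) '' collar) (wordHomeo (cellWord n) '' collar) := by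
  rw [Set.disjoint_left]
  rintro _ ⟨p, hp, rfl⟩ ⟨q, hq, h⟩
  obtain ⟨u, hu, -⟩ := exists_append_of_wordHomeo_eq
    (by rw [length_cellWord, length_cellWord]; lia) hp hq h.symm
  exact not_cellWord_isPrefix_of_lt hmn ⟨u, hu.symm⟩

theorem eventually_image_cellWord_subset {U : Set E₃} (hU : U ∈ 𝓝 (midPoint true)) :
    ∀ᶠ n in atTop, wordHomeo (cellWord n) '' collar ⊆ U := by
  obtain ⟨ε, hε, hεU⟩ := Metric.mem_nhds_iff.1 hU
  obtain ⟨N, hN⟩ := exists_forall_dist_wordHomeo_lt hε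
  filter_upwards [eventually_ge_atTop N] with n hn
  rintro _ ⟨p, hp, rfl⟩
  rw [cellWord, wordHomeo_append]
  have hdist := hN (List.replicate n (.mid true)) (by simpa using hn) _
    (wordHomeo_mem_collar [.mid false] hp) _
    (necklace_subset_collar (midPoint_mem_necklace true))
  rw [wordHomeo_replicate_midPoint] at hdist
  exact hεU hdist

/-- The cells of the necklace accumulating at the fixed point of `mid true`. -/
def necklaceCells : ShrinkingCells necklace where
  apex := midPoint true
  nhd := collar
  map n := wordHomeo (cellWord n)
  isOpen_nhd := isOpen_collar
  subset_nhd := necklace_subset_collar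
  apex_mem := midPoint_mem_necklace true
  mapsTo n _ hp := wordHomeo_mem_necklace (cellWord n) hp
  apex_notMem := midPoint_notMem_image_cellWord
  disjoint _ _ hmn := hmn.lt_or_gt.elim disjoint_image_cellWord
    fun h => (disjoint_image_cellWord h).symm
  eventually_subset _ := eventually_image_cellWord_subset

/-! ### Transfer to Euclidean space -/

/-- The identification of the product `ℝ × ℝ × ℝ`, with the sup norm, and Euclidean space. -/
def euclideanHomeo : E₃ ≃ₜ R3 where
  toFun p := !₂[p.1, p.2.1, p.2.2]
  invFun x := (x 0, x 1, x 2)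
  left_inv p := by simp
  right_inv x := by ext i; fin_cases i <;> simp
  continuous_toFun := (PiLp.continuous_toLp 2 _).comp <|
    continuous_fst.matrixVecCons <| continuous_snd.fst.matrixVecCons <|
      continuous_snd.snd.matrixVecCons continuous_const
  continuous_invFun := by fun_prop

/-- The dusted necklace with dust `S` as a subset of Euclidean space. -/
def euclideanNecklace (S : Set (List Link)) : Set R3 := euclideanHomeo '' dustedNecklace S

/-- The complements of the two models of the dusted necklace are homeomorphic. -/
def complHomeo (S : Set (List Link)) : ↥(dustedNecklace S)ᶜ ≃ₜ ↥(euclideanNecklace S)ᶜ :=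
  euclideanHomeo.subtype fun x => by simp [euclideanNecklace]

theorem isCantorSubset_euclideanNecklace (S : Set (List Link)) :
    IsCantorSubset (euclideanNecklace S) := by
  have hcompact : IsCompact (euclideanNecklace S) :=
    isCompact_dustedNecklace.image euclideanHomeo.continuous
  refine ⟨⟨_, mem_image_of_mem _ (.inl (midPoint_mem_necklace true))⟩, hcompact,
    ⟨hcompact.isClosed, ?_⟩,
    euclideanHomeo.isEmbedding.isTotallyDisconnected_image.2 isTotallyDisconnected_dustedNecklace⟩
  rintro _ ⟨x, hx, rfl⟩
  have hacc := (preperfect_dustedNecklace x hx).map euclideanHomeo.continuous.continuousAt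
    euclideanHomeo.injective
  rwa [map_principal] at hacc

theorem nonempty_fundamentalGroup_mulEquiv_of_homeomorph {X Y : Type*} [TopologicalSpace X]
    [TopologicalSpace Y] (f : X ≃ₜ Y) (x : X) :
    Nonempty (FundamentalGroup X x ≃* FundamentalGroup Y (f x)) :=
  ⟨(FundamentalGroupoidFunctor.equivOfHomotopyEquiv
    f.toHomotopyEquiv).fullyFaithfulFunctor.mulEquivEnd _⟩

theorem nonempty_fundamentalGroup_mulEquiv_necklace (S : Set (List Link))
    (x : ↥(euclideanNecklace S)ᶜ) (y : ↥necklaceᶜ) :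
    Nonempty (FundamentalGroup ↥(euclideanNecklace S)ᶜ x ≃* FundamentalGroup ↥necklaceᶜ y) := by
  have : PathConnectedSpace ↥necklaceᶜ := isPathConnected_iff_pathConnectedSpace.1
    (hasNullShadows_necklace.isPathConnected_compl isClosed_necklace)
  obtain ⟨e⟩ := nonempty_fundamentalGroup_mulEquiv_of_homeomorph (complHomeo S).symm x
  exact ⟨e.trans <| (MulEquiv.ofBijective _
    ((isAvoidableBySurfaces_dustUnion S).bijective_fundamentalGroup_map isClosed_necklace
      isCompact_dustedNecklace.isClosed _)).trans <|
    FundamentalGroup.fundamentalGroupMulEquivOfPathConnected _ y⟩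

theorem nonempty_fundamentalGroup_mulEquiv (S T : Set (List Link))
    (x : ↥(euclideanNecklace S)ᶜ) (y : ↥(euclideanNecklace T)ᶜ) :
    Nonempty (FundamentalGroup ↥(euclideanNecklace S)ᶜ x ≃*
      FundamentalGroup ↥(euclideanNecklace T)ᶜ y) := by
  let z := complInclusion necklace (dustUnion S) ((complHomeo S).symm x)
  obtain ⟨e⟩ := nonempty_fundamentalGroup_mulEquiv_necklace S x z
  obtain ⟨e'⟩ := nonempty_fundamentalGroup_mulEquiv_necklace T y z
  exact ⟨e.trans e'.symm⟩

theorem not_simplyConnectedSpace_compl_euclideanNecklace (S : Set (List Link)) :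
    ¬SimplyConnectedSpace ↥(euclideanNecklace S)ᶜ := by
  intro _
  obtain ⟨a, b, γ₁, γ₂, -, -, hγ⟩ := exists_not_homotopic []
    (image_shell_subset_compl_dustedNecklace []) (compl_subset_compl.2 subset_union_left)
  exact hγ (homotopic_of_map_homeomorph (complHomeo S)
    (SimplyConnectedSpace.paths_homotopic _ _))

theorem isEmpty_homeomorph_compl_euclideanNecklace {F F' : Set E₃} (hF : IsClosed F)
    (hFn : F ⊆ necklace) (hF' : IsClosed F') (hFn' : F' ⊆ necklace)
    (h : ∀ φ : E₃ ≃ₜ E₃, φ '' F ≠ F') :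
    IsEmpty (↥(euclideanNecklace (wordsMeeting F))ᶜ ≃ₜ
      ↥(euclideanNecklace (wordsMeeting F'))ᶜ) := by
  refine ⟨fun f => ?_⟩
  obtain ⟨φ, hφ⟩ := exists_image_eq_of_homeomorph_compl hF hFn hF' hFn'
    (((complHomeo _).trans f).trans (complHomeo _).symm)
  exact h φ hφ

theorem uncountable_toType_omega_one : Uncountable (Ordinal.omega 1).ToType := by
  rw [← Cardinal.aleph0_lt_mk_iff]
  simp

theorem countable_Iio_toType_omega_one (a : (Ordinal.omega 1).ToType) : (Iio a).Countable := by
  have hlt := Cardinal.mk_Iio_lt a (by simp)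
  rw [Cardinal.mk_toType, Ordinal.card_omega, Cardinal.lt_aleph_one_iff] at hlt
  exact Cardinal.le_aleph0_iff_set_countable.1 hlt

end AntoineNecklace

open AntoineNecklace

/-- There are uncountably many Cantor sets in ℝ³ whose complements are pairwise
nonhomeomorphic, not simply connected, and all have isomorphic fundamental groups. -/
theorem stmt_9 :
    ∃ (ι : Type) (_ : Uncountable ι) (C : ι → Set R3),
      Function.Injective C ∧
      (∀ α, IsCantorSubset (C α)) ∧
      (∀ α β (x : R3) (hx : x ∈ (C α)ᶜ) (y : R3) (hy : y ∈ (C β)ᶜ),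
        Nonempty (FundamentalGroup ↥((C α)ᶜ) ⟨x, hx⟩ ≃*
          FundamentalGroup ↥((C β)ᶜ) ⟨y, hy⟩)) ∧
      (∀ α, ¬ SimplyConnectedSpace ↥((C α)ᶜ)) ∧
      (∀ α β, α ≠ β → IsEmpty (↥((C α)ᶜ) ≃ₜ ↥((C β)ᶜ))) := by
  obtain ⟨F, hFn, hF, hne⟩ :=
    necklaceCells.exists_isClosed_forall_image_ne countable_Iio_toType_omega_one
  let C a := euclideanNecklace (wordsMeeting (F a))
  have not_homeomorphic : ∀ a b, a ≠ b → IsEmpty (↥(C a)ᶜ ≃ₜ ↥(C b)ᶜ) := fun a b hab =>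
    isEmpty_homeomorph_compl_euclideanNecklace (hF a) (hFn a) (hF b) (hFn b) (hne a b hab)
  refine ⟨_, uncountable_toType_omega_one, C, fun a b hab => ?_,
    fun _ => isCantorSubset_euclideanNecklace _,
    fun _ _ _ _ _ _ => nonempty_fundamentalGroup_mulEquiv _ _ _ _,
    fun _ => not_simplyConnectedSpace_compl_euclideanNecklace _, not_homeomorphic⟩
  by_contra hne
  exact (not_homeomorphic a b hne).false (.setCongr (congrArg _ hab))
end
end

section
/- Let C₁ be a Cantor set in ℝ³ contained in the closed unit ball centered at (-2,0,0) with (-1,0,0) ∈ C₁, and let A be the straight segment from (-1,0,0) to (1,0,0). Let U = {p ∈ ℝ³ : p₀ < 1} \ (C₁ ∪ A). Then the fundamental group of U is isomorphic to the fundamental group of ℝ³ \ C₁. -/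
open Metric Set

noncomputable section

/-- The straight segment from (-1,0,0) to (1,0,0). -/
def segA : Set R3 := segment ℝ (pt (-1) 0 0) (pt 1 0 0)

/-!
Pushing the bounding plane to infinity turns the complement of `C₁ ∪ A` in the half-space into the
complement of `C₁` and a ray starting at a point `c ∈ C₁`. The inversion `J` at `c` preserves the
ray and sends the ball around `C₁`, whose boundary passes through `c`, to a half-space that stays
away from `c`. The ray, lying on the other side, can therefore be pushed to infinity, which leaves
the complement of `J⁻¹ C₁ \ {c}`. This differs from the complement of `J⁻¹ C₁`, which `J` identifies
with that of `C₁`, by the interior point `c`, and in dimension at least three a point does not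
affect `π₁`, by general position.

Changing basepoints requires that `C₁` does not separate space. By compactness this reduces to two
disjoint closed sets `K₁`, `K₂` neither of which separates `v` from `w`. If their union did, let `W`
be the component of `w` and `φ` a Urysohn function, `0` on `K₁` and `1` on `K₂`. The map that is `φ`
modulo `1` on `W` and `0` elsewhere is continuous into the circle. Its lift `h` with `h v = 0`
satisfies `h w = φ w`, as seen along a path avoiding `K₂`, but also `h w = φ w - 1`, as seen along a
path avoiding `K₁`.
-/

section NonSeparation

theorem eq_of_joinedIn_of_comp_eqOn {X Y Z : Type*} [TopologicalSpace X] [TopologicalSpace Y]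
    [TopologicalSpace Z] {π : Y → Z} (hπ : IsCoveringMap π) {S : Set X} {v w : X}
    (hvw : JoinedIn S v w) {f g : X → Y} (hf : ContinuousOn f S) (hg : ContinuousOn g S)
    (hfg : EqOn (π ∘ f) (π ∘ g) S) (hv : f v = g v) : f w = g w := by
  obtain ⟨γ, hγ⟩ := hvw
  have hfgγ := hπ.eq_of_comp_eq (hf.comp_continuous γ.continuous hγ)
    (hg.comp_continuous γ.continuous hγ) (funext fun t => hfg (hγ t)) 0 (by simpa using hv)
  simpa using congrFun hfgγ 1

variable {X : Type*} [TopologicalSpace X]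

theorem exists_isClopen_joinedIn_compl_image [T2Space X] {C : Set X} (hC : IsCompact C)
    (hdis : IsTotallyDisconnected C) (x : C) {v w : X} (hvw : JoinedIn {(x : X)}ᶜ v w) :
    ∃ T : Set C, IsClopen T ∧ x ∈ T ∧ JoinedIn ((↑) '' T : Set X)ᶜ v w := by
  have := isCompact_iff_compactSpace.1 hC
  have := totallyDisconnectedSpace_subtype_iff.2 hdis
  obtain ⟨γ, hγ⟩ := hvw
  have hγC : IsOpen ((Subtype.val : C → X) ⁻¹' (range γ)ᶜ) :=
    (isCompact_range γ.continuous).isClosed.isOpen_compl.preimage continuous_subtype_val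
  obtain ⟨T, hT, hxT, hTγ⟩ := compact_exists_isClopen_in_isOpen hγC (x := x) (by
    rintro ⟨t, ht⟩
    exact hγ t ht)
  refine ⟨T, hT, hxT, γ, ?_⟩
  rintro t ⟨y, hy, hyt⟩
  exact hTγ hy (hyt ▸ mem_range_self t)

variable [LocallyPathConnectedSpace X]

theorem frontier_pathComponentIn_subset_compl {O : Set X} (hO : IsOpen O) (x : X) :
    frontier (pathComponentIn O x) ⊆ Oᶜ := by
  intro y hy hyO
  rw [(hO.pathComponentIn x).frontier_eq] at hy
  obtain ⟨z, hyz, hxz⟩ :=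
    mem_closure_iff.1 hy.1 _ (hO.pathComponentIn y) (mem_pathComponentIn_self hyO)
  exact hy.2 (JoinedIn.trans hxz (JoinedIn.symm hyz))

variable [SimplyConnectedSpace X]

theorem joinedIn_compl_union_of_disjoint [NormalSpace X] {K₁ K₂ : Set X}
    (hK₁ : IsClosed K₁) (hK₂ : IsClosed K₂) (hK : Disjoint K₁ K₂) {v w : X}
    (h₁ : JoinedIn K₁ᶜ v w) (h₂ : JoinedIn K₂ᶜ v w) : JoinedIn (K₁ ∪ K₂)ᶜ v w := by
  by_contra hvw
  let W := pathComponentIn (K₁ ∪ K₂)ᶜ w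
  have hwW : w ∈ W :=
    mem_pathComponentIn_self (compl_union K₁ K₂ ▸ ⟨h₁.target_mem, h₂.target_mem⟩)
  have hvW : v ∉ W := fun h => hvw (JoinedIn.symm h)
  have hfr : frontier W ⊆ K₁ ∪ K₂ := by
    simpa only [compl_compl] using
      frontier_pathComponentIn_subset_compl (hK₁.union hK₂).isOpen_compl w
  obtain ⟨φ, hφ₁, hφ₂, -⟩ := exists_continuous_zero_one_of_isClosed hK₁ hK₂ hK
  let g : X → AddCircle (1 : ℝ) := W.indicator fun x => (φ x : AddCircle (1 : ℝ))
  have hg : Continuous g := by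
    refine Continuous.indicator (fun x hx => ?_)
      ((AddCircle.continuous_mk' 1).comp φ.continuous)
    rcases hfr hx with hx | hx
    · simp [hφ₁ hx]
    · simp [hφ₂ hx]
  have hcover := AddCircle.isCoveringMap_coe (1 : ℝ)
  obtain ⟨h, ⟨hv, hh⟩, -⟩ := hcover.existsUnique_continuousMap_lifts ⟨g, hg⟩ v 0 (by simp [g, hvW])
  have lift_eq {K : Set X} (hvK : JoinedIn Kᶜ v w) (ψ : C(X, ℝ))
      (hψ : ∀ x, (ψ x : AddCircle (1 : ℝ)) = φ x) (hψK : ∀ x ∈ frontier W \ K, ψ x = 0) :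
      h w = ψ w := by
    have hW : ContinuousOn (W.indicator ψ) Kᶜ := by
      classical
      exact ContinuousOn.piecewise (fun x hx => hψK x ⟨hx.2, hx.1⟩) ψ.continuous.continuousOn
        continuousOn_const
    have hlift := eq_of_joinedIn_of_comp_eqOn hcover hvK h.continuous.continuousOn hW
      (fun x _ => by by_cases hx : x ∈ W <;> simpa [g, hx, hψ] using congrFun hh x)
      (by simp [hv, hvW])
    simpa [hwW] using hlift
  have hw₂ : h w = φ w := lift_eq h₂ φ (fun _ => rfl) fun x hx =>
    hφ₁ ((hfr hx.1).resolve_right hx.2)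
  have hw₁ : h w = φ w - 1 := lift_eq h₁ (φ - 1) (fun x => by simp) fun x hx => by
    simp [hφ₂ ((hfr hx.1).resolve_left hx.2)]
  linarith

theorem joinedIn_compl_of_isTotallyDisconnected [T4Space X]
    (hX : ∀ x : X, IsPathConnected ({x}ᶜ : Set X)) {C : Set X} (hC : IsCompact C)
    (hdis : IsTotallyDisconnected C) {v w : X} (hv : v ∉ C) (hw : w ∉ C) : JoinedIn Cᶜ v w := by
  have := isCompact_iff_compactSpace.1 hC
  have isClosed_image {S : Set C} (hS : IsClopen S) : IsClosed ((↑) '' S : Set X) :=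
    hC.isClosed.isClosedMap_subtype_val _ hS.1
  suffices ∃ T : Set C, IsClopen T ∧ univ ⊆ T ∧ JoinedIn ((↑) '' T : Set X)ᶜ v w by
    obtain ⟨T, -, hT, h⟩ := this
    simpa [univ_subset_iff.1 hT] using h
  refine isCompact_univ.induction_on ⟨∅, isClopen_empty, subset_rfl, ?_⟩ ?_ ?_ fun x _ => ?_
  · simpa using PathConnectedSpace.joined v w
  · rintro s t hst ⟨T, hT, htT, h⟩
    exact ⟨T, hT, hst.trans htT, h⟩
  · rintro s₁ s₂ ⟨T₁, hT₁, hsT₁, h₁⟩ ⟨T₂, hT₂, hsT₂, h₂⟩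
    refine ⟨T₁ ∪ T₂, hT₁.union hT₂, union_subset_union hsT₁ hsT₂, ?_⟩
    have hT₂₁ : JoinedIn ((↑) '' (T₂ \ T₁) : Set X)ᶜ v w :=
      h₂.mono (compl_subset_compl.2 (image_mono sdiff_subset))
    rw [← union_sdiff_self, image_union]
    exact joinedIn_compl_union_of_disjoint (isClosed_image hT₁) (isClosed_image (hT₂.diff hT₁))
      ((disjoint_image_iff Subtype.val_injective).2 disjoint_sdiff_self_right) h₁ hT₂₁
  · obtain ⟨T, hT, hxT, h⟩ := exists_isClopen_joinedIn_compl_image hC hdis x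
      ((hX x).joinedIn v (ne_of_mem_of_not_mem x.2 hv).symm w (ne_of_mem_of_not_mem x.2 hw).symm)
    exact ⟨T, mem_nhdsWithin_of_mem_nhds (hT.2.mem_nhds hxT), T, hT, subset_rfl, h⟩

end NonSeparation

section SegmentHomotopy

open scoped ContinuousMap

variable {X E : Type*} [TopologicalSpace X] [AddCommGroup E] [TopologicalSpace E]
  [IsTopologicalAddGroup E] [Module ℝ E] [ContinuousSMul ℝ E]

theorem homotopicRel_of_segment_subset {M : Set E} {f g : C(X, M)} {S : Set X}
    (hfg : ∀ x, segment ℝ (f x : E) (g x) ⊆ M) (hS : EqOn f g S) : f.HomotopicRel g S :=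
  ⟨{toFun s := ⟨AffineMap.lineMap (f s.2 : E) (g s.2 : E) (s.1 : ℝ),
      hfg s.2 (segment_eq_image_lineMap ℝ (f s.2 : E) (g s.2) ▸ mem_image_of_mem _ s.1.2)⟩
    continuous_toFun := by
      refine Continuous.subtype_mk ?_ _
      simp only [AffineMap.lineMap_apply_module]
      fun_prop
    map_zero_left x := by simp
    map_one_left x := by simp
    prop' t x hx := by simp [hS hx]}⟩

/-- The homotopy equivalence given by an inclusion `P ⊆ Q`, with a homotopy inverse `ρ` that is
joined to the identity by straight lines. -/
def segmentHomotopyEquiv {P Q : Set E} (hPQ : P ⊆ Q) (ρ : C(Q, P))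
    (hQ : ∀ x : Q, segment ℝ (ρ x : E) x ⊆ Q)
    (hP : ∀ x : P, segment ℝ (ρ (inclusion hPQ x) : E) x ⊆ P) : P ≃ₕ Q where
  toFun := .inclusion hPQ
  invFun := ρ
  left_inv := (homotopicRel_of_segment_subset hP (eqOn_empty _ _)).homotopic
  right_inv := (homotopicRel_of_segment_subset hQ (eqOn_empty _ _)).homotopic

end SegmentHomotopy

section PunctureInvariance

open Module Topology

variable {X E F : Type*} [TopologicalSpace X]
  [NormedAddCommGroup E] [NormedSpace ℝ E] [FiniteDimensional ℝ E]
  [NormedAddCommGroup F] [NormedSpace ℝ F] [FiniteDimensional ℝ F]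

theorem exists_continuousMap_ne_dist_lt (hFE : finrank ℝ F < finrank ℝ E) (f : C(F, E)) (p : E)
    {ε : ℝ} (hε : 0 < ε) :
    ∃ g : C(F, E), (∀ x, g x ≠ p) ∧ ∀ x, dist (g x) (f x) < ε := by
  obtain ⟨g, hg, hgf, -⟩ := f.continuous.exists_contDiff_approx 1 (ε := fun _ => ε / 2)
    continuous_const fun _ => half_pos hε
  obtain ⟨q, hq, hpq⟩ := (hg.dense_compl_range_of_finrank_lt_finrank hFE).exists_dist_lt p
    (half_pos hε)
  refine ⟨⟨fun x => g x + (p - q), hg.continuous.add continuous_const⟩, fun x hx => hq ⟨x, ?_⟩,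
    fun x => ?_⟩
  · have hgx : g x + (p - q) = p := hx
    exact add_right_cancel (hgx.trans (add_sub_cancel q p).symm)
  · calc dist (g x + (p - q)) (f x) ≤ dist (g x + (p - q)) (g x) + dist (g x) (f x) :=
          dist_triangle _ _ _
      _ < ε / 2 + ε / 2 := by
          refine add_lt_add ?_ (hgf x)
          simpa [dist_eq_norm] using hpq
      _ = ε := add_halves ε

theorem exists_continuousMap_ne_segment_subset (hFE : finrank ℝ F < finrank ℝ E) {e : X → F}
    (he : IsClosedEmbedding e) (f : C(X, E)) {p : E} {V : Set E} (hV : V ∈ 𝓝 p) :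
    ∃ g : C(X, E), (∀ x, g x ≠ p) ∧ ∀ x, g x = f x ∨ segment ℝ (f x) (g x) ⊆ V := by
  obtain ⟨ε, hε, hεV⟩ := Metric.mem_nhds_iff.1 hV
  obtain ⟨δ, hδ, hδε⟩ : ∃ δ > 0, 3 * δ = ε := ⟨ε / 3, by positivity, by ring⟩
  have := TietzeExtension.of_tvs ℝ (E := E)
  obtain ⟨f', hf'⟩ := f.exists_extension he
  obtain ⟨g', hg'p, hg'f'⟩ := exists_continuousMap_ne_dist_lt hFE f' p hδ
  have hg : ∀ x, dist (g' (e x)) (f x) < δ := fun x => by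
    simpa [← hf'] using hg'f' (e x)
  obtain ⟨χ, hχ₀, hχ₁, hχ⟩ := exists_continuous_zero_one_of_isClosed
    (isOpen_ball (x := p) (ε := 2 * δ)).isClosed_compl (isClosed_closedBall (x := p) (ε := δ))
    (disjoint_compl_left_iff_subset.2 (closedBall_subset_ball (by linarith)))
  let g : C(X, E) := ⟨fun x => AffineMap.lineMap (f x) (g' (e x)) (χ (f x)), by
    have := he.continuous
    simp only [AffineMap.lineMap_apply_module]
    fun_prop⟩
  have hgf : ∀ x, dist (g x) (f x) < δ := fun x => by
    calc dist (g x) (f x) = |χ (f x)| * dist (f x) (g' (e x)) := dist_lineMap_left _ _ _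
      _ ≤ 1 * dist (f x) (g' (e x)) := by
        gcongr
        exact abs_le.2 ⟨by linarith [(hχ (f x)).1], (hχ (f x)).2⟩
      _ < δ := by simpa [dist_comm] using hg x
  refine ⟨g, fun x hx => ?_, fun x => ?_⟩
  · have hfx : f x ∈ closedBall p δ := by
      rw [mem_closedBall, ← hx, dist_comm]
      exact (hgf x).le
    exact hg'p (e x) (by simpa [g, hχ₁ hfx] using hx)
  · by_cases hfx : f x ∈ ball p (2 * δ)
    · have hgx : g x ∈ ball p (3 * δ) := by
        rw [mem_ball] at hfx ⊢
        linarith [dist_triangle (g x) (f x) p, hgf x]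
      exact .inr (((convex_ball p (3 * δ)).segment_subset
        (ball_subset_ball (by linarith) hfx) hgx).trans (hδε ▸ hεV))
    · exact .inl (by simp [g, hχ₀ hfx])

theorem exists_continuousMap_diff_singleton (hFE : finrank ℝ F < finrank ℝ E) {e : X → F}
    (he : IsClosedEmbedding e) {M K : Set E} {p : E} (hM : M ∈ 𝓝 p) (hK : IsClosed K)
    (hpK : p ∉ K) (f : C(X, M)) :
    ∃ g : C(X, ↥(M \ {p})), (∀ x, (f x : E) ∈ K → (g x : E) = f x) ∧
      ∀ x, segment ℝ (f x : E) (g x) ⊆ M := by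
  obtain ⟨g, hgp, hgf⟩ := exists_continuousMap_ne_segment_subset hFE he
    ((ContinuousMap.mk Subtype.val).comp f) (Filter.inter_mem hM (hK.isOpen_compl.mem_nhds hpK))
  have hseg : ∀ x, segment ℝ (f x : E) (g x) ⊆ M := fun x => by
    rcases hgf x with h | h
    · simp [h]
    · exact h.trans inter_subset_left
  refine ⟨⟨fun x => ⟨g x, hseg x (right_mem_segment ℝ _ _), hgp x⟩, by fun_prop⟩,
    fun x hx => ?_, hseg⟩
  exact (hgf x).resolve_right fun h => (h (left_mem_segment ℝ _ _)).2 hx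

variable {M : Set E} {p : E}

theorem injective_fundamentalGroup_map_inclusion_diff_singleton (hE : 2 < finrank ℝ E)
    (hM : M ∈ 𝓝 p) (x : ↥(M \ {p})) :
    Function.Injective
      (FundamentalGroup.map (.inclusion (sdiff_subset : M \ {p} ⊆ M)) x) := by
  intro a b hab
  induction a using Path.Homotopic.Quotient.ind with | mk a => ?_
  induction b using Path.Homotopic.Quotient.ind with | mk b => ?_
  obtain ⟨H⟩ := Path.Homotopic.Quotient.exact hab
  let K : Set E := range (Subtype.val ∘ a) ∪ range (Subtype.val ∘ b)
  have hK : IsClosed K :=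
    ((isCompact_range (by fun_prop)).union (isCompact_range (by fun_prop))).isClosed
  have hpK : p ∉ K := by
    rintro (⟨t, ht⟩ | ⟨t, ht⟩)
    exacts [(a t).2.2 ht, (b t).2.2 ht]
  have hI : IsClosedEmbedding (Subtype.val : unitInterval → ℝ) := .subtypeVal isClosed_Icc
  obtain ⟨G, hGK, -⟩ := exists_continuousMap_diff_singleton (by simpa using hE) (hI.prodMap hI)
    hM hK hpK H.toContinuousMap
  have hG {s t : unitInterval} {y : ↥(M \ {p})} (hy : (y : E) ∈ K) (hH : (H (s, t) : E) = y) :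
      G (s, t) = y :=
    Subtype.ext ((hGK (s, t) (hH.symm ▸ hy)).trans hH)
  have haK (t) : (a t : E) ∈ K := .inl (mem_range_self t)
  have hbK (t) : (b t : E) ∈ K := .inr (mem_range_self t)
  exact Path.Homotopic.Quotient.eq.2
    ⟨⟨G, fun t => hG (haK t) (congrArg Subtype.val (H.apply_zero t)),
      fun t => hG (hbK t) (congrArg Subtype.val (H.apply_one t))⟩,
      fun s t ht => hG (haK t) (congrArg Subtype.val (H.eq_fst s ht))⟩

theorem surjective_fundamentalGroup_map_inclusion_diff_singleton (hE : 1 < finrank ℝ E)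
    (hM : M ∈ 𝓝 p) (x : ↥(M \ {p})) :
    Function.Surjective
      (FundamentalGroup.map (.inclusion (sdiff_subset : M \ {p} ⊆ M)) x) := by
  intro b
  induction b using Path.Homotopic.Quotient.ind with | mk b => ?_
  have hI : IsClosedEmbedding (Subtype.val : unitInterval → ℝ) := .subtypeVal isClosed_Icc
  obtain ⟨g, hgx, hbg⟩ := exists_continuousMap_diff_singleton (by simpa using hE) hI hM
    isClosed_singleton (K := {(x : E)}) (Ne.symm x.2.2) b.toContinuousMap
  have hb₀ : (b 0 : E) = x := congrArg Subtype.val b.source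
  have hb₁ : (b 1 : E) = x := congrArg Subtype.val b.target
  let a : Path x x := ⟨g, Subtype.ext ((hgx 0 hb₀).trans hb₀), Subtype.ext ((hgx 1 hb₁).trans hb₁)⟩
  refine ⟨.mk a, Path.Homotopic.Quotient.eq.2 (Path.Homotopic.symm ?_)⟩
  exact homotopicRel_of_segment_subset hbg (by rintro t (rfl | rfl) <;> simp)

/-- General position: adding a point with a neighborhood to a set does not change `π₁`. -/
def fundamentalGroupDiffSingletonMulEquiv (hE : 2 < finrank ℝ E) (hM : M ∈ 𝓝 p)
    (x : ↥(M \ {p})) :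
    FundamentalGroup ↥(M \ {p}) x ≃* FundamentalGroup M (inclusion sdiff_subset x) :=
  MulEquiv.ofBijective (FundamentalGroup.map (.inclusion sdiff_subset) x)
    ⟨injective_fundamentalGroup_map_inclusion_diff_singleton hE hM x,
      surjective_fundamentalGroup_map_inclusion_diff_singleton (one_lt_two.trans hE) hM x⟩

end PunctureInvariance

section HomotopyEquiv

open scoped ContinuousMap

/-- The isomorphism of fundamental groups induced by a homotopy equivalence. -/
def fundamentalGroupMulEquivOfHomotopyEquiv {X Y : Type*} [TopologicalSpace X]
    [TopologicalSpace Y] (e : X ≃ₕ Y) (x : X) : FundamentalGroup X x ≃* FundamentalGroup Y (e x) :=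
  (FundamentalGroupoidFunctor.equivOfHomotopyEquiv e).fullyFaithfulFunctor.mulEquivEnd
    (FundamentalGroupoid.mk x)

end HomotopyEquiv

section PushDown

open scoped ContinuousMap

variable {E : Type*} [AddCommGroup E] [TopologicalSpace E] [Module ℝ E]

/-- The retraction onto the half-space `ℓ ≤ a` along the direction `e`, when `ℓ e = 1`. -/
def pushDown (ℓ : E →L[ℝ] ℝ) (e : E) (a : ℝ) (x : E) : E :=
  x - max 0 (ℓ x - a) • e

variable {ℓ : E →L[ℝ] ℝ} {e x : E} {a : ℝ} {K L L₁ L₂ : Set E}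

theorem segment_pushDown_subset (he : ℓ e = 1) (hK : K ⊆ {x | ℓ x < a})
    (hL : ∀ x ∈ L, ∀ s : ℝ, 0 ≤ s → x + s • e ∈ L) (hx : x ∈ (K ∪ L)ᶜ) :
    segment ℝ (pushDown ℓ e a x) x ⊆ (K ∪ L)ᶜ := by
  have hsub {s : ℝ} (hs : 0 ≤ s) (hsa : s ≤ max 0 (ℓ x - a)) : x - s • e ∈ (K ∪ L)ᶜ := by
    rintro (h | h)
    · have hlt : ℓ x - s < a := by simpa [he] using hK h
      obtain rfl : s = 0 := by
        rcases le_max_iff.1 hsa with h | h <;> linarith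
      exact hx (.inl (by simpa using h))
    · exact hx (.inr (by simpa using hL _ h s hs))
  rw [segment_symm, segment_eq_image']
  rintro _ ⟨θ, ⟨hθ₀, hθ₁⟩, rfl⟩
  have hm : 0 ≤ max 0 (ℓ x - a) := le_max_left _ _
  convert hsub (mul_nonneg hθ₀ hm) (mul_le_of_le_one_left hm hθ₁) using 1
  simp only [pushDown]
  module

theorem pushDown_mem_compl_union (he : ℓ e = 1) (hK : K ⊆ {x | ℓ x < a})
    (hL₁ : ∀ x ∈ L₁, ∀ s : ℝ, 0 ≤ s → x + s • e ∈ L₁) (hL : L₂ \ L₁ ⊆ {x | a < ℓ x})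
    (hx : x ∈ (K ∪ L₁)ᶜ) : pushDown ℓ e a x ∈ (K ∪ L₂)ᶜ := by
  have hρ := segment_pushDown_subset he hK hL₁ hx (left_mem_segment ℝ _ _)
  rintro (h | h)
  · exact hρ (.inl h)
  · have hlt : a < ℓ x - max 0 (ℓ x - a) := by
      simpa [pushDown, he] using hL ⟨h, fun h₁ => hρ (.inr h₁)⟩
    linarith [le_max_right 0 (ℓ x - a)]

variable [IsTopologicalAddGroup E] [ContinuousSMul ℝ E]

theorem continuous_pushDown : Continuous (pushDown ℓ e a) := by
  unfold pushDown
  fun_prop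

/-- Enlarging the upward closed set `L₁` to `L₂` above the level `a`, while `K` lies below it, does
not change the homotopy type of the complement. -/
def complUnionHomotopyEquiv (he : ℓ e = 1) (hK : K ⊆ {x | ℓ x < a})
    (hL₁ : ∀ x ∈ L₁, ∀ s : ℝ, 0 ≤ s → x + s • e ∈ L₁)
    (hL₂ : ∀ x ∈ L₂, ∀ s : ℝ, 0 ≤ s → x + s • e ∈ L₂) (hL₁₂ : L₁ ⊆ L₂)
    (hL : L₂ \ L₁ ⊆ {x | a < ℓ x}) : ↥(K ∪ L₂)ᶜ ≃ₕ ↥(K ∪ L₁)ᶜ :=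
  segmentHomotopyEquiv (compl_subset_compl.2 (union_subset_union_right K hL₁₂))
    ⟨fun x => ⟨pushDown ℓ e a x, pushDown_mem_compl_union he hK hL₁ hL x.2⟩,
      (continuous_pushDown.comp continuous_subtype_val).subtype_mk _⟩
    (fun x => segment_pushDown_subset he hK hL₁ x.2)
    fun x => segment_pushDown_subset he hK hL₂ x.2

end PushDown

section Inversion

open EuclideanGeometry Module Topology
open scoped ContinuousMap RealInnerProductSpace

/-- Inversion identifies a set missing its center with its preimage. -/
def inversionHomeomorph {V P : Type*} [NormedAddCommGroup V] [InnerProductSpace ℝ V]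
    [MetricSpace P] [NormedAddTorsor V P] {c : P} {R : ℝ} (hR : R ≠ 0) {S : Set P} (hc : c ∉ S) :
    S ≃ₜ inversion c R ⁻¹' S where
  toFun x := ⟨inversion c R x, by simp [inversion_inversion c hR]⟩
  invFun y := ⟨inversion c R y, y.2⟩
  left_inv x := by simp [inversion_inversion c hR]
  right_inv y := by simp [inversion_inversion c hR]
  continuous_toFun := by
    refine .subtype_mk (continuous_const.inversion continuous_const continuous_subtype_val ?_) _
    rintro x rfl
    exact hc x.2
  continuous_invFun := by
    refine .subtype_mk (continuous_const.inversion continuous_const continuous_subtype_val ?_) _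
    intro y hy
    exact hc (by simpa [hy] using y.2)

variable {E : Type*} [NormedAddCommGroup E] [InnerProductSpace ℝ E] {c e x y : E} {r : ℝ}
  {C : Set E}

/-- The closed ray from `c` in the direction `e`. -/
def ray (c e : E) : Set E := (fun s : ℝ => c + s • e) '' Ici 0

theorem self_mem_ray : c ∈ ray c e := ⟨0, self_mem_Ici, by simp⟩

theorem add_smul_mem_ray (hx : x ∈ ray c e) {s : ℝ} (hs : 0 ≤ s) : x + s • e ∈ ray c e := by
  obtain ⟨s', hs', rfl⟩ := hx
  exact ⟨s' + s, add_nonneg hs' hs, by simp only [add_smul, add_assoc]⟩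

theorem inner_le_of_mem_ray (hx : x ∈ ray c e) : ⟪e, c⟫ ≤ ⟪e, x⟫ := by
  obtain ⟨s, hs, rfl⟩ := hx
  rw [inner_add_right, inner_smul_right]
  exact le_add_of_nonneg_right (mul_nonneg hs real_inner_self_nonneg)

theorem inversion_mem_ray (he : ‖e‖ = 1) (hx : x ∈ ray c e) : inversion c 1 x ∈ ray c e := by
  obtain ⟨s, hs, rfl⟩ := hx
  refine ⟨s⁻¹, mem_Ici.2 (inv_nonneg.2 hs), ?_⟩
  rcases eq_or_ne s 0 with rfl | hs₀
  · simp
  · have hsq : (s ^ 2)⁻¹ * s = s⁻¹ := by field_simp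
    simp [inversion, he, norm_smul, smul_smul, hsq, add_comm]

theorem preimage_inversion_ray (he : ‖e‖ = 1) : inversion c 1 ⁻¹' ray c e = ray c e :=
  Subset.antisymm
    (fun x hx => inversion_inversion c one_ne_zero x ▸ inversion_mem_ray he hx)
    fun _ => inversion_mem_ray he

theorem inner_le_of_mem_closedBall (he : ‖e‖ = 1) (hy : y ∈ closedBall (c - r • e) r) :
    ⟪e, y⟫ ≤ ⟪e, c⟫ := by
  have h := (real_inner_le_norm e (y - (c - r • e))).trans
    (mul_le_of_le_one_left (norm_nonneg _) he.le)
  have : ⟪e, y - (c - r • e)⟫ = ⟪e, y⟫ - ⟪e, c⟫ + r := by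
    rw [sub_sub_eq_add_sub, inner_sub_right, inner_add_right, real_inner_smul_right,
      real_inner_self_eq_norm_sq, he]
    ring
  linarith [mem_closedBall_iff_norm.1 hy]

-- The inversion centered at a point of a sphere maps that sphere to a hyperplane.
theorem inner_lt_of_inversion_mem_closedBall (he : ‖e‖ = 1) (hxc : x ≠ c)
    (hx : inversion c 1 x ∈ closedBall (c - r • e) r) :
    ⟪e, x⟫ < ⟪e, c⟫ - 1 / (2 * r + 1) := by
  have hr : 0 ≤ r := dist_nonneg.trans hx
  have hpos : 0 < ‖x - c‖ := norm_sub_pos_iff.2 hxc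
  have hJ : inversion c 1 x - (c - r • e) = (‖x - c‖⁻¹ ^ 2) • (x - c) + r • e := by
    simp only [inversion, dist_eq_norm, vsub_eq_sub, vadd_eq_add, one_div]
    abel
  have hsq : (‖x - c‖⁻¹ ^ 2) * (1 + 2 * r * ⟪e, x - c⟫) + r ^ 2 ≤ r ^ 2 := by
    calc (‖x - c‖⁻¹ ^ 2) * (1 + 2 * r * ⟪e, x - c⟫) + r ^ 2
      _ = ‖inversion c 1 x - (c - r • e)‖ ^ 2 := by
          rw [hJ, norm_add_sq_real]
          simp only [norm_smul, real_inner_smul_left, real_inner_smul_right, he,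
            real_inner_comm e (x - c), mul_pow, norm_pow, norm_inv,
            norm_norm, Real.norm_of_nonneg hr]
          field_simp
      _ ≤ r ^ 2 := pow_le_pow_left₀ (norm_nonneg _) (mem_closedBall_iff_norm.1 hx) 2
  have hle : 1 + 2 * r * ⟪e, x - c⟫ ≤ 0 :=
    nonpos_of_mul_nonpos_right (by linarith) (pow_pos (inv_pos.2 hpos) 2)
  have hneg : ⟪e, x - c⟫ < 0 := by
    by_contra! h
    linarith [mul_nonneg (mul_nonneg zero_le_two hr) h]
  rw [← neg_add_eq_sub, ← sub_lt_iff_lt_add, ← inner_sub_right, ← neg_div,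
    lt_div_iff₀ (by positivity)]
  linarith

/-- The homotopy equivalence between the complements of `C ∪ ray c e` and of `J⁻¹ C \ {c}`, where
`J` is the inversion at `c`: it maps the ray to itself and moves `C` away from `c` below a level
lower than that of `c`, so that the ray can be pushed off to infinity. -/
def complUnionRayHomotopyEquiv (he : ‖e‖ = 1) (hC : C ⊆ closedBall (c - r • e) r) (hc : c ∈ C) :
    ↥(C ∪ ray c e)ᶜ ≃ₕ ↥(inversion c 1 ⁻¹' C \ {c})ᶜ :=
  have hcC : c ∉ (C ∪ ray c e)ᶜ := fun h => h (.inl hc)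
  have hpre : inversion c 1 ⁻¹' (C ∪ ray c e)ᶜ = (inversion c 1 ⁻¹' C \ {c} ∪ ray c e)ᶜ := by
    rw [preimage_compl, preimage_union, preimage_inversion_ray he]
    have := self_mem_ray (c := c) (e := e)
    grind
  have hr : 0 < 2 * r + 1 := by linarith [nonneg_of_mem_closedBall (hC hc)]
  let push : ↥(inversion c 1 ⁻¹' C \ {c} ∪ ray c e)ᶜ ≃ₕ ↥(inversion c 1 ⁻¹' C \ {c} ∪ ∅)ᶜ :=
    complUnionHomotopyEquiv (ℓ := innerSL ℝ e) (e := e) (a := ⟪e, c⟫ - 1 / (2 * r + 1))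
      (by simp [he]) (fun x hx => inner_lt_of_inversion_mem_closedBall he hx.2 (hC hx.1))
      (by simp) (fun x hx s => add_smul_mem_ray hx) (empty_subset _)
      fun x hx => (sub_lt_self _ (one_div_pos.2 hr)).trans_le (inner_le_of_mem_ray hx.1)
  (inversionHomeomorph one_ne_zero hcC).toHomotopyEquiv.trans <|
    (Homeomorph.setCongr hpre).toHomotopyEquiv.trans <|
      push.trans (Homeomorph.setCongr (by rw [union_empty])).toHomotopyEquiv

theorem compl_preimage_inversion_diff_singleton_mem_nhds (he : ‖e‖ = 1)
    (hC : C ⊆ closedBall (c - r • e) r) (hr : 0 ≤ r) :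
    (inversion c 1 ⁻¹' C \ {c})ᶜ ∈ 𝓝 c := by
  have hopen : IsOpen {x | ⟪e, c⟫ - 1 / (2 * r + 1) < ⟪e, x⟫} :=
    isOpen_lt continuous_const (by fun_prop)
  have hpos : 0 < 1 / (2 * r + 1) := by positivity
  filter_upwards [hopen.mem_nhds (sub_lt_self ⟪e, c⟫ hpos)] with x hx hxC
  exact lt_asymm hx (inner_lt_of_inversion_mem_closedBall he hxC.2 (hC hxC.1))

/-- Removing a ray that starts on `C` and leaves a ball containing `C` does not change `π₁` of the
complement. The inversion `J` at `c` compares both groups with that of `(J⁻¹ C \ {c})ᶜ`, which is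
the complement of `J⁻¹ C` with the point `c` filled in. -/
def fundamentalGroupComplUnionRayMulEquiv [FiniteDimensional ℝ E] (hE : 2 < finrank ℝ E)
    (he : ‖e‖ = 1) (hC : C ⊆ closedBall (c - r • e) r) (hc : c ∈ C) (hx : x ∈ (C ∪ ray c e)ᶜ) :
    FundamentalGroup ↥(C ∪ ray c e)ᶜ ⟨x, hx⟩ ≃*
      FundamentalGroup ↥Cᶜ ⟨x, fun h => hx (.inl h)⟩ :=
  have hcD : (inversion c 1 ⁻¹' C)ᶜ = (inversion c 1 ⁻¹' C \ {c})ᶜ \ {c} := by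
    have : c ∈ inversion c 1 ⁻¹' C := by simpa using hc
    grind
  have hM := compl_preimage_inversion_diff_singleton_mem_nhds he hC
    (nonneg_of_mem_closedBall (hC hc))
  let inv : ↥Cᶜ ≃ₜ ↥((inversion c 1 ⁻¹' C \ {c})ᶜ \ {c}) :=
    (inversionHomeomorph one_ne_zero (notMem_compl_iff.2 hc)).trans (Homeomorph.setCongr hcD)
  (fundamentalGroupMulEquivOfHomotopyEquiv (complUnionRayHomotopyEquiv he hC hc) ⟨x, hx⟩).trans <|
    ((fundamentalGroupMulEquivOfHomotopyEquiv inv.toHomotopyEquiv ⟨x, fun h => hx (.inl h)⟩).trans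
      (fundamentalGroupDiffSingletonMulEquiv hE hM _)).symm

end Inversion

section HalfSpace

open Module
open scoped ContinuousMap RealInnerProductSpace

variable {E : Type*} [NormedAddCommGroup E] [InnerProductSpace ℝ E] {c e : E} {r t : ℝ}
  {C : Set E}

theorem halfSpace_diff_union_segment_eq (he : ‖e‖ = 1) (ht : 0 < t) :
    {x | ⟪e, x⟫ < ⟪e, c⟫ + t} \ (C ∪ segment ℝ c (c + t • e)) =
      (C ∪ (ray c e ∪ {x | ⟪e, c⟫ + t ≤ ⟪e, x⟫}))ᶜ := by
  have hray {x : E} (hx : ⟪e, x⟫ < ⟪e, c⟫ + t) : x ∈ segment ℝ c (c + t • e) ↔ x ∈ ray c e := by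
    rw [segment_eq_image', add_sub_cancel_left]
    constructor
    · rintro ⟨θ, hθ, rfl⟩
      exact ⟨θ * t, mul_nonneg hθ.1 ht.le, by simp only [mul_smul]⟩
    · rintro ⟨s, hs, rfl⟩
      have hst : s < t := by simpa [inner_add_right, inner_smul_right, he] using hx
      exact ⟨s / t, ⟨div_nonneg hs ht.le, (div_le_one ht).2 hst.le⟩,
        by simp only [smul_smul, div_mul_cancel₀ s ht.ne']⟩
  ext x
  have := @hray x
  simp only [mem_sdiff, mem_ofPred_eq, mem_union, mem_compl_iff]
  grind

/-- The homotopy equivalence that trades an upper half-space together with the segment joining `C`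
to it for a ray, by pushing the half-space up along `e` to infinity. -/
def halfSpaceDiffHomotopyEquiv (he : ‖e‖ = 1) (ht : 0 < t) (hC : C ⊆ closedBall (c - r • e) r) :
    ↥({x | ⟪e, x⟫ < ⟪e, c⟫ + t} \ (C ∪ segment ℝ c (c + t • e))) ≃ₕ ↥(C ∪ ray c e)ᶜ :=
  (Homeomorph.setCongr (halfSpace_diff_union_segment_eq he ht)).toHomotopyEquiv.trans <|
    complUnionHomotopyEquiv (ℓ := innerSL ℝ e) (e := e) (a := ⟪e, c⟫ + t / 2)
      (by simp [he])
      (fun x hx => (inner_le_of_mem_closedBall he (hC hx)).trans_lt (by linarith))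
      (fun x hx s => add_smul_mem_ray hx)
      (by
        rintro x (hx | hx) s hs
        · exact .inl (add_smul_mem_ray hx hs)
        · refine .inr ((show ⟪e, c⟫ + t ≤ ⟪e, x⟫ from hx).trans ?_)
          simp [inner_add_right, inner_smul_right, he, hs])
      subset_union_left fun x hx =>
        (by linarith : ⟪e, c⟫ + t / 2 < ⟪e, c⟫ + t).trans_le (hx.1.resolve_left hx.2)

theorem stmt_13_general {E : Type*} [NormedAddCommGroup E] [InnerProductSpace ℝ E]
    [FiniteDimensional ℝ E] (hE : 2 < finrank ℝ E) {c e : E} (he : ‖e‖ = 1) {r t : ℝ}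
    (ht : 0 < t) {C : Set E} (hC : IsClosed C) (hdis : IsTotallyDisconnected C)
    (hB : C ⊆ closedBall (c - r • e) r) (hc : c ∈ C) :
    ∀ (u : E) (hu : u ∈ {x | ⟪e, x⟫ < ⟪e, c⟫ + t} \ (C ∪ segment ℝ c (c + t • e)))
      (w : E) (hw : w ∈ Cᶜ),
      Nonempty (FundamentalGroup
          ↥({x | ⟪e, x⟫ < ⟪e, c⟫ + t} \ (C ∪ segment ℝ c (c + t • e))) ⟨u, hu⟩ ≃*
        FundamentalGroup ↥Cᶜ ⟨w, hw⟩) := by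
  intro u hu w hw
  let push := halfSpaceDiffHomotopyEquiv he ht hB
  have hCc : IsCompact C := (isCompact_closedBall _ _).of_isClosed_subset hC hB
  have hrank : 1 < Module.rank ℝ E := by
    rw [← finrank_eq_rank]
    exact_mod_cast one_lt_two.trans hE
  have huw : JoinedIn Cᶜ u w :=
    joinedIn_compl_of_isTotallyDisconnected (isPathConnected_compl_singleton_of_one_lt_rank hrank)
      hCc hdis (fun h => hu.2 (.inl h)) hw
  exact ⟨(fundamentalGroupMulEquivOfHomotopyEquiv push ⟨u, hu⟩).trans <|
    (fundamentalGroupComplUnionRayMulEquiv hE he hB hc (push ⟨u, hu⟩).2).trans <|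
      FundamentalGroup.fundamentalGroupMulEquivOfPath huw.joined_subtype.somePath⟩

end HalfSpace

section Coordinates

theorem norm_pt_one : ‖pt 1 0 0‖ = 1 := by
  simp [pt, EuclideanSpace.norm_eq, Fin.sum_univ_three]

theorem pt_add_smul_pt_one (a s : ℝ) : pt a 0 0 + s • pt 1 0 0 = pt (a + s) 0 0 := by
  ext i
  fin_cases i <;> simp [pt]

theorem inner_pt_one (x : R3) : inner ℝ (pt 1 0 0) x = x 0 := by
  simp [pt, PiLp.inner_apply, Fin.sum_univ_three]

theorem setOf_coord_lt_one_diff_eq (C : Set R3) :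
    {p : R3 | p 0 < 1} \ (C ∪ segA) =
      {p | inner ℝ (pt 1 0 0) p < inner ℝ (pt 1 0 0) (pt (-1) 0 0) + 2} \
        (C ∪ segment ℝ (pt (-1) 0 0) (pt (-1) 0 0 + (2 : ℝ) • pt 1 0 0)) := by
  have hlevel : (-1 : ℝ) + 2 = 1 := by norm_num
  have hpt : pt (-1) 0 0 0 = -1 := rfl
  simp only [segA, inner_pt_one, pt_add_smul_pt_one, hpt, hlevel]

theorem closedBall_pt_neg_two :
    closedBall (pt (-2) 0 0) 1 = closedBall (pt (-1) 0 0 - (1 : ℝ) • pt 1 0 0) 1 := by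
  rw [sub_eq_add_neg, ← neg_smul, pt_add_smul_pt_one]
  norm_num

end Coordinates

/-- The fundamental group of the open half-space {x < 1} minus `C₁ ∪ A` is isomorphic to the
fundamental group of ℝ³ \ C₁. -/
theorem stmt_13 (C₁ : Set R3) (h₁ : IsCantorSubset C₁)
    (hB : C₁ ⊆ closedBall (pt (-2) 0 0) 1) (hx : pt (-1) 0 0 ∈ C₁) :
    ∀ (u : R3) (hu : u ∈ {p : R3 | p 0 < 1} \ (C₁ ∪ segA))
      (w : R3) (hw : w ∈ C₁ᶜ),
      Nonempty (FundamentalGroup ↥({p : R3 | p 0 < 1} \ (C₁ ∪ segA)) ⟨u, hu⟩ ≃*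
        FundamentalGroup ↥(C₁ᶜ) ⟨w, hw⟩) := by
  rw [setOf_coord_lt_one_diff_eq]
  exact stmt_13_general (by simp) norm_pt_one two_pos h₁.2.1.isClosed h₁.2.2.2
    (closedBall_pt_neg_two ▸ hB) hx
end
end
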